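/- arXiv:2605.26482 — 2 statements merged into one kernel-verified Lean document; each statement's English description precedes it below -/
import Mathlib

section
/- Let K be a number field and let χ be a Dirichlet character of modulus m. Then the norms of prime ideals 𝔭 of 𝓞_K with χ(N(𝔭)) = 1, listed in non-decreasing order, have consecutive ratios tending to 1. Equivalently: for every ε > 0 there exists X₀ such that for every real X ≥ X₀ there is a prime ideal 𝔭 of 𝓞_K with χ(N(𝔭)) = 1 and X ≤ N(𝔭) ≤ (1+ε)X. -/
open NumberField

/-
A nonzero prime ideal of `L = K(ζ_m)` whose norm is a large rational prime `p` satisfies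
`p ≡ 1 mod m`, and so `χ(p) = 1`; moreover the prime of `K` below it also has norm `p`. Prime ideals
of higher degree being negligible, it suffices to find prime ideals of `L` in all intervals
`[X, (1 + ε) X]`.

The smoothed sum over a system of generators of the ideals in one ideal class is a sum of a
compactly supported Lipschitz function over a scaled lattice in the Minkowski space. It differs from
its integral by a power saving, so that `(s - 1) ζ_L(s)`, recovered by a Mellin transform, continues
analytically beyond `Re s = 1`. The inequality `3 + 4 cos θ + cos 2θ ≥ 0` gives `ζ_L ≠ 0` on that
line, and the Wiener-Ikehara argument applied to `-ζ_L' / ζ_L`, with Fejér kernels, gives a positive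
lower bound for the sum of `Λ_L(n) / n` over `[X, (1 + ε) X]`.
-/

open Real MeasureTheory Set Filter Topology Asymptotics

section FejerKernel

/-- The Fejér kernel of the Tauberian argument, in the form
`fejerKernel l u = ∫ t in 0..l, (1 - t / l) * cos (t * u)` (`fejerKernel_eq_integral`), so that its
total mass does not depend on `l`. -/
noncomputable def fejerKernel (l u : ℝ) : ℝ := l / 2 * sinc (l * u / 2) ^ 2

lemma fejerKernel_nonneg {l : ℝ} (hl : 0 ≤ l) (u : ℝ) : 0 ≤ fejerKernel l u := by
  unfold fejerKernel
  positivity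

lemma fejerKernel_le {l : ℝ} (hl : 0 ≤ l) (u : ℝ) : fejerKernel l u ≤ l / 2 :=
  mul_le_of_le_one_right (by positivity) ((sq_le_one_iff_abs_le_one _).2 (abs_sinc_le_one _))

lemma continuous_fejerKernel (l : ℝ) : Continuous (fejerKernel l) := by
  unfold fejerKernel
  exact continuous_const.mul ((continuous_sinc.comp (by fun_prop)).pow 2)

lemma fejerKernel_mul_sq {l : ℝ} (hl : l ≠ 0) (u : ℝ) :
    fejerKernel l u * u ^ 2 = 2 / l * sin (l * u / 2) ^ 2 := by
  rcases eq_or_ne u 0 with rfl | hu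
  · simp
  · rw [fejerKernel, sinc_of_ne_zero (by positivity)]
    field_simp

lemma fejerKernel_mul_sq_le {l : ℝ} (hl : 0 < l) (u : ℝ) : fejerKernel l u * u ^ 2 ≤ 2 / l := by
  rw [fejerKernel_mul_sq hl.ne']
  exact mul_le_of_le_one_right (by positivity) (sin_sq_le_one _)

lemma fejerKernel_eq_integral {l : ℝ} (hl : 0 < l) (u : ℝ) :
    fejerKernel l u = ∫ t in (0 : ℝ)..l, (1 - t / l) * cos (t * u) := by
  rcases eq_or_ne u 0 with rfl | hu
  · simp only [fejerKernel, mul_zero, zero_div, sinc_zero, one_pow, mul_one, cos_zero]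
    rw [intervalIntegral.integral_sub (by simp) (Continuous.intervalIntegrable (by fun_prop) _ _),
      intervalIntegral.integral_div, integral_id]
    simp only [intervalIntegral.integral_const, sub_zero, smul_eq_mul, mul_one]
    field_simp
    ring
  have hderiv (t : ℝ) : HasDerivAt
      (fun t => (1 - t / l) * (sin (t * u) / u) - cos (t * u) / (l * u ^ 2))
      ((1 - t / l) * cos (t * u)) t := by
    have h₁ : HasDerivAt (fun t : ℝ => t * u) u t := by simpa using (hasDerivAt_id t).mul_const u
    have h₂ : HasDerivAt (fun t : ℝ => 1 - t / l) (-(1 / l)) t := by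
      simpa using ((hasDerivAt_id t).div_const l).const_sub 1
    refine ((h₂.mul (h₁.sin.div_const u)).sub (h₁.cos.div_const (l * u ^ 2))).congr_deriv ?_
    field_simp
    ring
  rw [intervalIntegral.integral_eq_sub_of_hasDerivAt (fun t _ => hderiv t)
    (Continuous.intervalIntegrable (by fun_prop) _ _), eq_div_of_mul_eq (pow_ne_zero 2 hu)
    (fejerKernel_mul_sq hl.ne' u), sin_sq_eq_half_sub, mul_div_cancel₀ _ two_ne_zero,
    div_self hl.ne']
  simp only [sub_self, zero_mul, cos_zero, sin_zero, zero_div, mul_zero, zero_sub]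
  field_simp
  ring

lemma integrable_fejerKernel {l : ℝ} (hl : 0 < l) : Integrable (fejerKernel l) := by
  refine (integrable_inv_one_add_sq.const_mul (l / 2 + 2 / l)).mono'
    (continuous_fejerKernel l).aestronglyMeasurable (.of_forall fun u => ?_)
  rw [norm_of_nonneg (fejerKernel_nonneg hl.le u), ← div_eq_mul_inv, le_div_iff₀ (by positivity)]
  linarith [fejerKernel_le hl.le u, fejerKernel_mul_sq_le hl u]

lemma integral_fejerKernel {l : ℝ} (hl : 0 < l) :
    ∫ u, fejerKernel l u = ∫ u, fejerKernel 1 u := by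
  have hscale (u : ℝ) : fejerKernel l u = l * fejerKernel 1 (l * u) := by
    simp only [fejerKernel, one_mul]
    ring
  simp_rw [hscale]
  rw [integral_const_mul, Measure.integral_comp_mul_left, abs_of_pos (by positivity), smul_eq_mul,
    mul_inv_cancel_left₀ hl.ne']

lemma integral_fejerKernel_one_pos : 0 < ∫ u, fejerKernel 1 u := by
  rw [integral_pos_iff_support_of_nonneg (fejerKernel_nonneg zero_le_one)
    (integrable_fejerKernel one_pos)]
  exact (continuous_fejerKernel 1).isOpen_support.measure_pos volume ⟨0, by simp [fejerKernel]⟩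

lemma one_sub_abs_cos_sub_le_sin_sq_add_sin_sq (a b : ℝ) :
    1 - |cos (a - b)| ≤ sin a ^ 2 + sin b ^ 2 := by
  have hsum : sin a ^ 2 + sin b ^ 2 = 1 - cos (a + b) * cos (a - b) := by
    rw [cos_add, cos_sub]
    nlinarith [sin_sq_add_cos_sq a, sin_sq_add_cos_sq b]
  have hprod : |cos (a + b) * cos (a - b)| ≤ |cos (a - b)| := by
    rw [abs_mul]
    exact mul_le_of_le_one_left (abs_nonneg _) (abs_cos_le_one _)
  linarith [le_abs_self (cos (a + b) * cos (a - b))]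

/- The numerators `2 * sin (u / 2) ^ 2` and `2 * sin ((u + 1) / 2) ^ 2` of the two kernels cannot be
small simultaneously. -/
lemma exists_fejerKernel_le_fejerKernel_one_add {e : ℝ} (he : 0 < e) :
    ∃ C : ℝ, 0 < C ∧ ∀ l u : ℝ, 0 < l → e ≤ |u| →
      fejerKernel l u ≤ C / l * (fejerKernel 1 u + fejerKernel 1 (u + 1)) := by
  have hd : 0 < 1 - |cos (1 / 2)| := by
    have hsin : 0 < sin (1 / 2) := sin_pos_of_pos_of_lt_pi (by norm_num) (by linarith [pi_gt_three])
    have hcos : |cos (1 / 2)| < 1 := (sq_lt_one_iff_abs_lt_one _).1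
      (by linarith [sin_sq_add_cos_sq (1 / 2), pow_pos hsin 2])
    linarith
  set d := 1 - |cos (1 / 2)|
  set M := (1 + 1 / e) ^ 2
  have hM : 1 ≤ M := one_le_pow₀ (by linarith [one_div_pos.2 he])
  refine ⟨M / d, by positivity, fun l u hl hu => ?_⟩
  have hu0 : 0 < u ^ 2 := by rw [← sq_abs]; exact pow_pos (he.trans_le hu) 2
  have hshift : (u + 1) ^ 2 ≤ M * u ^ 2 := by
    rw [← mul_pow, sq_le_sq, abs_mul, abs_of_pos (by positivity : 0 < 1 + 1 / e)]
    have : 1 ≤ 1 / e * |u| := by rw [one_div_mul_eq_div]; exact (one_le_div he).2 hu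
    linarith [abs_add_le u 1, abs_one (α := ℝ)]
  have hsin : d ≤ sin (1 * u / 2) ^ 2 + sin (1 * (u + 1) / 2) ^ 2 := by
    rw [add_comm (sin _ ^ 2)]
    convert one_sub_abs_cos_sub_le_sin_sq_add_sin_sq _ _ using 4
    ring
  have hlower : 2 * d ≤ (fejerKernel 1 u + fejerKernel 1 (u + 1)) * (M * u ^ 2) := by
    have h₁ := fejerKernel_mul_sq one_ne_zero u
    have h₂ := fejerKernel_mul_sq one_ne_zero (u + 1)
    have h₃ := mul_le_mul_of_nonneg_left hshift (fejerKernel_nonneg zero_le_one (u + 1))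
    have h₄ := mul_le_mul_of_nonneg_left (le_mul_of_one_le_left hu0.le hM)
      (fejerKernel_nonneg zero_le_one u)
    linarith
  rw [← mul_le_mul_iff_left₀ hu0]
  calc fejerKernel l u * u ^ 2 ≤ 1 / (d * l) * (2 * d) := by
        convert fejerKernel_mul_sq_le hl u using 1
        field_simp
    _ ≤ 1 / (d * l) * ((fejerKernel 1 u + fejerKernel 1 (u + 1)) * (M * u ^ 2)) := by gcongr
    _ = M / d / l * (fejerKernel 1 u + fejerKernel 1 (u + 1)) * u ^ 2 := by field_simp

end FejerKernel

section FejerIntegral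

/-- The real part of the Fourier integral at frequency `y` of `G` over the vertical segment from
`σ` to `σ + l * I`, with the Fejér weight `1 - t / l`. Only half of the symmetric segment is needed
because the Dirichlet series it is applied to have real coefficients. -/
noncomputable def fejerIntegral (G : ℂ → ℂ) (l σ y : ℝ) : ℝ :=
  ∫ t in (0 : ℝ)..l, (1 - t / l) * (Complex.exp (Complex.I * t * y) * G (σ + t * Complex.I)).re

lemma abs_one_sub_div_le_one {l t : ℝ} (ht : t ∈ Ioc 0 l) : |1 - t / l| ≤ 1 := by
  have hl : 0 < l := ht.1.trans_le ht.2
  have h₀ : 0 ≤ t / l := div_nonneg ht.1.le hl.le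
  have h₁ : t / l ≤ 1 := (div_le_one hl).2 ht.2
  rw [abs_le]
  constructor <;> linarith

lemma re_exp_mul_one_div_eq_integral {d : ℝ} (hd : 0 < d) (t y : ℝ) :
    (Complex.exp (Complex.I * t * y) * (1 / ((d : ℂ) + t * Complex.I))).re
      = ∫ u in Ioi (0 : ℝ), exp (-d * u) * cos (t * (u - y)) := by
  have hre : (-((d : ℂ) + t * Complex.I)).re < 0 := by simp [hd]
  have hlaplace : Complex.exp (Complex.I * t * y) * (1 / ((d : ℂ) + t * Complex.I)) =
      ∫ u in Ioi (0 : ℝ),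
        Complex.exp (Complex.I * t * y) * Complex.exp (-((d : ℂ) + t * Complex.I) * u) := by
    rw [integral_const_mul, integral_exp_mul_complex_Ioi hre 0, Complex.ofReal_zero, mul_zero,
      Complex.exp_zero, neg_div_neg_eq]
  rw [hlaplace, ← Complex.reCLM_apply, ← ContinuousLinearMap.integral_comp_comm _
    ((integrableOn_exp_mul_complex_Ioi hre 0).const_mul _)]
  refine setIntegral_congr_fun measurableSet_Ioi fun u _ => ?_
  rw [Complex.reCLM_apply, ← Complex.exp_add, Complex.exp_re, ← cos_neg (t * (u - y))]
  congr 2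
  · simp
  · simp
    ring

lemma fejerIntegral_one_div_sub_one {l σ : ℝ} (hl : 0 < l) (hσ : 1 < σ) (y : ℝ) :
    fejerIntegral (fun s => 1 / (s - 1)) l σ y =
      ∫ u in Ioi (0 : ℝ), exp (-(σ - 1) * u) * fejerKernel l (u - y) := by
  have hd : 0 < σ - 1 := sub_pos.2 hσ
  have hintegrand (t : ℝ) :
      (Complex.exp (Complex.I * t * y) * (1 / ((σ + t * Complex.I : ℂ) - 1))).re =
        ∫ u in Ioi (0 : ℝ), exp (-(σ - 1) * u) * cos (t * (u - y)) := by
    rw [← re_exp_mul_one_div_eq_integral hd]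
    push_cast
    ring_nf
  simp_rw [fejerIntegral, hintegrand, fejerKernel_eq_integral hl,
    intervalIntegral.integral_of_le hl.le, ← integral_const_mul]
  rw [integral_integral_swap]
  · simp_rw [mul_left_comm (1 - _ / l)]
  have hexp : Integrable (fun u : ℝ => exp (-(σ - 1) * u)) (volume.restrict (Ioi 0)) :=
    integrableOn_exp_mul_Ioi (by linarith) 0
  have hone : Integrable (fun _ : ℝ => (1 : ℝ)) (volume.restrict (Ioc 0 l)) := by simp
  refine (hone.mul_prod hexp).mono'
    (Continuous.aestronglyMeasurable (by simp only [Function.uncurry_def]; fun_prop)) ?_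
  rw [Measure.prod_restrict, ae_restrict_iff' (measurableSet_Ioc.prod measurableSet_Ioi)]
  filter_upwards with p hp
  simp only [Function.uncurry_def, norm_mul, norm_eq_abs, abs_exp]
  gcongr
  · exact abs_one_sub_div_le_one hp.1
  · exact mul_le_of_le_one_right (exp_pos _).le (abs_cos_le_one _)

lemma re_exp_mul_term_eq (Λ : ℕ → ℝ) {σ : ℝ} (hσ : σ ≠ 0) (t y : ℝ) (n : ℕ) :
    (Complex.exp (Complex.I * t * y) *
      LSeries.term (fun n => (Λ n : ℂ)) (σ + t * Complex.I) n).re =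
      Λ n * (n : ℝ) ^ (-σ) * cos (t * (log n - y)) := by
  rcases Nat.eq_zero_or_pos n with rfl | hn
  · simp [zero_rpow (neg_ne_zero.2 hσ)]
  have hn' : (0 : ℝ) < n := by exact_mod_cast hn
  have hexponent : Complex.I * t * y + (log n : ℂ) * -(σ + t * Complex.I) =
      ((log n * -σ : ℝ) : ℂ) + ((-(t * (log n - y)) : ℝ) : ℂ) * Complex.I := by
    push_cast
    ring
  rw [LSeries.term_of_ne_zero hn.ne', div_eq_mul_inv, ← Complex.cpow_neg,
    Complex.cpow_def_of_ne_zero (by exact_mod_cast hn.ne'), mul_left_comm, ← Complex.exp_add,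
    Complex.re_ofReal_mul, rpow_def_of_pos hn', ← Complex.natCast_log, hexponent, Complex.exp_re,
    Complex.add_re, Complex.ofReal_re, Complex.re_ofReal_mul, Complex.I_re, mul_zero, add_zero,
    Complex.add_im, Complex.ofReal_im, Complex.im_ofReal_mul, Complex.I_im, mul_one, zero_add,
    cos_neg, mul_assoc]

lemma summable_mul_rpow_neg {Λ : ℕ → ℝ} {σ : ℝ} (hσ : σ ≠ 0)
    (hΛ : LSeriesSummable (fun n => (Λ n : ℂ)) σ) : Summable fun n : ℕ => Λ n * (n : ℝ) ^ (-σ) := by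
  refine (Complex.reCLM.summable hΛ).congr fun n => ?_
  simpa using re_exp_mul_term_eq Λ hσ 0 0 n

lemma hasSum_fejerIntegral_LSeries {Λ : ℕ → ℝ} (hΛ : ∀ n, 0 ≤ Λ n) {σ : ℝ} (hσ : σ ≠ 0)
    (hs : LSeriesSummable (fun n => (Λ n : ℂ)) σ) {l : ℝ} (hl : 0 < l) (y : ℝ) :
    HasSum (fun n : ℕ => Λ n * (n : ℝ) ^ (-σ) * fejerKernel l (log n - y))
      (fejerIntegral (LSeries fun n => (Λ n : ℂ)) l σ y) := by
  have hterm (n : ℕ) : Λ n * (n : ℝ) ^ (-σ) * fejerKernel l (log n - y) =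
      ∫ t in (0 : ℝ)..l, (1 - t / l) * (Λ n * (n : ℝ) ^ (-σ) * cos (t * (log n - y))) := by
    rw [fejerKernel_eq_integral hl, ← intervalIntegral.integral_const_mul]
    simp_rw [mul_left_comm (1 - _ / l)]
  simp_rw [hterm]
  refine intervalIntegral.hasSum_integral_of_dominated_convergence
    (fun n _ => Λ n * (n : ℝ) ^ (-σ)) (fun n => Continuous.aestronglyMeasurable (by fun_prop))
    (fun n => .of_forall fun t ht => ?_)
    (.of_forall fun _ _ => summable_mul_rpow_neg hσ hs) (by simp)
    (.of_forall fun t _ => HasSum.mul_left _ ?_)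
  · rw [uIoc_of_le hl.le] at ht
    have hnonneg : 0 ≤ Λ n * (n : ℝ) ^ (-σ) := mul_nonneg (hΛ n) (by positivity)
    rw [norm_mul, norm_mul, norm_of_nonneg hnonneg]
    exact (mul_le_of_le_one_left (mul_nonneg hnonneg (norm_nonneg _))
      (abs_one_sub_div_le_one ht)).trans (mul_le_of_le_one_right hnonneg (abs_cos_le_one _))
  · have hs' : LSeriesSummable (fun n => (Λ n : ℂ)) (σ + t * Complex.I) :=
      hs.of_re_le_re (by simp)
    simp_rw [← re_exp_mul_term_eq Λ hσ t y]
    exact Complex.reCLM.hasSum (hs'.LSeriesHasSum.mul_left (Complex.exp (Complex.I * t * y)))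

variable {G : ℂ → ℂ}

lemma continuous_fejerIntegrand {S : Set ℂ} (hG : ContinuousOn G S) (l y : ℝ) {σ : ℝ}
    (hσ : ∀ t : ℝ, (σ + t * Complex.I : ℂ) ∈ S) :
    Continuous fun t : ℝ =>
      (1 - t / l) * (Complex.exp (Complex.I * t * y) * G (σ + t * Complex.I)).re :=
  (by fun_prop : Continuous fun t : ℝ => 1 - t / l).mul <|
    Complex.continuous_re.comp <| (by fun_prop : Continuous _).mul <|
      hG.comp_continuous (by fun_prop) hσ

/- The path is pushed into the half-plane by `σ ↦ max 1 σ`, so that the integrand becomes jointly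
continuous everywhere. -/
lemma tendsto_fejerIntegral_nhdsGT_one (hG : ContinuousOn G {s | 1 ≤ s.re}) (l y : ℝ) :
    Tendsto (fun σ => fejerIntegral G l σ y) (𝓝[>] 1) (𝓝 (fejerIntegral G l 1 y)) := by
  have hcont : Continuous fun σ : ℝ => fejerIntegral G l (max 1 σ) y := by
    refine intervalIntegral.continuous_parametric_intervalIntegral_of_continuous'
      (f := fun σ t => _) ?_ 0 l
    refine (by fun_prop : Continuous fun p : ℝ × ℝ => 1 - p.2 / l).mul <|
      Complex.continuous_re.comp <| (by fun_prop : Continuous _).mul <|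
        hG.comp_continuous (by fun_prop) fun p => by simp
  refine ((hcont.tendsto' 1 (fejerIntegral G l 1 y) (by simp)).mono_left
    nhdsWithin_le_nhds).congr' ?_
  filter_upwards [self_mem_nhdsWithin] with σ hσ
  rw [max_eq_right (mem_Ioi.1 hσ).le]

lemma tendsto_fejerIntegral_atTop (hG : ContinuousOn G {s | 1 ≤ s.re}) {l : ℝ} (hl : 0 ≤ l) :
    Tendsto (fun y => fejerIntegral G l 1 y) atTop (𝓝 0) := by
  set g : ℝ → ℂ := (Ioc 0 l).indicator fun t => ((1 - t / l : ℝ) : ℂ) * G (1 + t * Complex.I)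
  have hscale : Tendsto (fun y : ℝ => y * (-(2 * π)⁻¹)) atTop (cocompact ℝ) :=
    (tendsto_id.atTop_mul_const_of_neg (by simp [pi_pos])).mono_right atBot_le_cocompact
  have hlim := (Complex.continuous_re.tendsto _).comp
    ((Real.tendsto_integral_exp_smul_cocompact g).comp hscale)
  rw [Complex.zero_re] at hlim
  refine hlim.congr fun y => ?_
  have hchar (t : ℝ) : fourierChar (-(t * (y * -(2 * π)⁻¹))) • g t = (Ioc 0 l).indicator
      (fun t : ℝ => ((1 - t / l : ℝ) : ℂ) *
        (Complex.exp (Complex.I * t * y) * G ((1 : ℝ) + t * Complex.I))) t := by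
    by_cases ht : t ∈ Ioc 0 l
    · simp only [g, indicator_of_mem ht, Circle.smul_def, fourierChar_apply, smul_eq_mul]
      rw [mul_left_comm]
      congr 3
      have : (π : ℂ) ≠ 0 := by exact_mod_cast pi_ne_zero
      push_cast
      field_simp
    · simp [g, indicator_of_notMem ht]
  have hint : IntegrableOn (fun t : ℝ => ((1 - t / l : ℝ) : ℂ) *
      (Complex.exp (Complex.I * t * y) * G ((1 : ℝ) + t * Complex.I))) (Ioc 0 l) :=
    (Continuous.integrableOn_Icc (Continuous.mul (by fun_prop) <| Continuous.mul (by fun_prop) <|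
      hG.comp_continuous (by fun_prop) (by simp))).mono_set Ioc_subset_Icc_self
  simp only [Function.comp_apply]
  rw [fejerIntegral, intervalIntegral.integral_of_le hl]
  simp_rw [hchar]
  rw [integral_indicator measurableSet_Ioc, ← Complex.reCLM_apply,
    ← ContinuousLinearMap.integral_comp_comm _ hint]
  simp_rw [Complex.reCLM_apply, Complex.re_ofReal_mul]

end FejerIntegral

section ExponentialDamping

variable {f : ℝ → ℝ}

lemma norm_exp_neg_mul_mul_le {δ u : ℝ} (hδ : 0 ≤ δ) (hu : 0 ≤ u) (x : ℝ) :
    ‖exp (-δ * u) * x‖ ≤ ‖x‖ := by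
  rw [norm_mul, norm_eq_abs, abs_exp]
  exact mul_le_of_le_one_left (norm_nonneg _) (exp_le_one_iff.2 (by nlinarith))

lemma setIntegral_exp_neg_mul_le (hf : Integrable f) (hf₀ : ∀ u, 0 ≤ f u) {δ : ℝ} (hδ : 0 ≤ δ) :
    ∫ u in Ioi (0 : ℝ), exp (-δ * u) * f u ≤ ∫ u, f u := by
  have hle (u : ℝ) (hu : u ∈ Ioi (0 : ℝ)) : ‖exp (-δ * u) * f u‖ ≤ f u :=
    (norm_exp_neg_mul_mul_le hδ (mem_Ioi.1 hu).le _).trans_eq (norm_of_nonneg (hf₀ u))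
  have hint : IntegrableOn (fun u => exp (-δ * u) * f u) (Ioi 0) :=
    hf.integrableOn.mono' ((Continuous.aestronglyMeasurable (by fun_prop)).mul
      hf.aestronglyMeasurable.restrict) ((ae_restrict_iff' measurableSet_Ioi).2 (.of_forall hle))
  exact (setIntegral_mono_on hint hf.integrableOn measurableSet_Ioi
    fun u hu => (le_norm_self _).trans (hle u hu)).trans
    (setIntegral_le_integral hf (.of_forall hf₀))

lemma tendsto_setIntegral_exp_neg_mul (hf : Integrable f) :
    Tendsto (fun δ : ℝ => ∫ u in Ioi (0 : ℝ), exp (-δ * u) * f u) (𝓝[>] 0)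
      (𝓝 (∫ u in Ioi (0 : ℝ), f u)) := by
  refine tendsto_integral_filter_of_dominated_convergence (fun u => ‖f u‖)
    (.of_forall fun δ => (Continuous.aestronglyMeasurable (by fun_prop)).mul
      hf.aestronglyMeasurable.restrict) ?_ hf.norm.integrableOn (.of_forall fun u => ?_)
  · filter_upwards [self_mem_nhdsWithin] with δ hδ
    rw [ae_restrict_iff' measurableSet_Ioi]
    exact .of_forall fun u hu => norm_exp_neg_mul_mul_le (mem_Ioi.1 hδ).le (mem_Ioi.1 hu).le _
  · exact (Continuous.tendsto' (by fun_prop) _ _ (by simp)).mono_left nhdsWithin_le_nhds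

lemma tendsto_setIntegral_Ioi_comp_sub (hf : Integrable f) :
    Tendsto (fun y => ∫ u in Ioi (0 : ℝ), f (u - y)) atTop (𝓝 (∫ u, f u)) := by
  have hshift (y : ℝ) : ∫ u in Ioi (0 : ℝ), f (u - y) = ∫ u in Ioi (-y), f u := by
    simpa using (measurePreserving_sub_right volume y).setIntegral_preimage_emb
      (measurableEmbedding_subRight y) f (Ioi (-y))
  simp_rw [hshift]
  exact (aecover_Ioi tendsto_neg_atTop_atBot).integral_tendsto_of_countably_generated hf

end ExponentialDamping

section WienerIkehara

/-- The hypotheses of the Wiener–Ikehara theorem with residue one: the Dirichlet series of the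
nonnegative sequence `Λ` converges for `1 < s.re` and equals `1 / (s - 1) + G s` there, with `G`
continuous up to the line `s.re = 1`. -/
structure IsWienerIkehara (Λ : ℕ → ℝ) (G : ℂ → ℂ) : Prop where
  nonneg : ∀ n, 0 ≤ Λ n
  lseriesSummable : ∀ s : ℂ, 1 < s.re → LSeriesSummable (fun n => (Λ n : ℂ)) s
  continuousOn : ContinuousOn G {s | 1 ≤ s.re}
  lseries_eq : ∀ s : ℂ, 1 < s.re → LSeries (fun n => (Λ n : ℂ)) s = 1 / (s - 1) + G s

/-- The logarithmic mean of `Λ` around `exp y`, smoothed by the Fejér kernel. -/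
noncomputable def fejerSum (Λ : ℕ → ℝ) (l y : ℝ) : ℝ :=
  ∑' n : ℕ, Λ n / n * fejerKernel l (log n - y)

lemma natCast_rpow_neg_le_inv (n : ℕ) {σ : ℝ} (hσ : 1 ≤ σ) : (n : ℝ) ^ (-σ) ≤ (n : ℝ)⁻¹ := by
  rcases Nat.eq_zero_or_pos n with rfl | hn
  · simp [zero_rpow (by linarith : -σ ≠ 0)]
  · rw [← rpow_neg_one]
    exact rpow_le_rpow_of_exponent_le (by exact_mod_cast hn) (by linarith)

lemma tendsto_natCast_rpow_neg_nhds_one (n : ℕ) :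
    Tendsto (fun σ : ℝ => (n : ℝ) ^ (-σ)) (𝓝 1) (𝓝 (n : ℝ)⁻¹) := by
  rw [← rpow_neg_one]
  exact (continuousAt_const_rpow' (by norm_num)).tendsto.comp (tendsto_neg 1)

namespace IsWienerIkehara

variable {Λ : ℕ → ℝ} {G : ℂ → ℂ}

lemma fejerIntegral_LSeries (h : IsWienerIkehara Λ G) {l σ : ℝ} (hl : 0 < l) (hσ : 1 < σ)
    (y : ℝ) :
    fejerIntegral (LSeries fun n => (Λ n : ℂ)) l σ y =
      (∫ u in Ioi (0 : ℝ), exp (-(σ - 1) * u) * fejerKernel l (u - y)) +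
        fejerIntegral G l σ y := by
  have hpole : ContinuousOn (fun s : ℂ => 1 / (s - 1)) {s | 1 < s.re} :=
    continuousOn_const.div (by fun_prop) fun s hs h => by
      rw [sub_eq_zero.1 h] at hs
      simp at hs
  rw [← fejerIntegral_one_div_sub_one hl hσ, fejerIntegral, fejerIntegral, fejerIntegral,
    ← intervalIntegral.integral_add
      ((continuous_fejerIntegrand hpole l y (by simpa using hσ)).intervalIntegrable _ _)
      ((continuous_fejerIntegrand h.continuousOn l y (by simpa using hσ.le)).intervalIntegrable
        _ _)]
  refine intervalIntegral.integral_congr fun t _ => ?_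
  rw [h.lseries_eq _ (by simpa using hσ), mul_add, Complex.add_re, mul_add]

lemma hasSum_fejerKernel (h : IsWienerIkehara Λ G) {l σ : ℝ} (hl : 0 < l) (hσ : 1 < σ) (y : ℝ) :
    HasSum (fun n : ℕ => Λ n * (n : ℝ) ^ (-σ) * fejerKernel l (log n - y))
      ((∫ u in Ioi (0 : ℝ), exp (-(σ - 1) * u) * fejerKernel l (u - y)) +
        fejerIntegral G l σ y) := by
  rw [← h.fejerIntegral_LSeries hl hσ]
  exact hasSum_fejerIntegral_LSeries h.nonneg (by positivity)
    (h.lseriesSummable _ (by simpa using hσ)) hl y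

lemma term_nonneg (h : IsWienerIkehara Λ G) {l : ℝ} (hl : 0 ≤ l) (y : ℝ) (n : ℕ) :
    0 ≤ Λ n / n * fejerKernel l (log n - y) :=
  mul_nonneg (div_nonneg (h.nonneg n) n.cast_nonneg) (fejerKernel_nonneg hl _)

lemma sum_le (h : IsWienerIkehara Λ G) {l : ℝ} (hl : 0 < l) (y : ℝ) (F : Finset ℕ) :
    ∑ n ∈ F, Λ n / n * fejerKernel l (log n - y) ≤
      (∫ u, fejerKernel 1 u) + fejerIntegral G l 1 y := by
  have hlim : Tendsto
      (fun σ : ℝ => ∑ n ∈ F, Λ n * (n : ℝ) ^ (-σ) * fejerKernel l (log n - y)) (𝓝[>] 1)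
      (𝓝 (∑ n ∈ F, Λ n / n * fejerKernel l (log n - y))) :=
    (tendsto_finsetSum F fun n _ => ((tendsto_natCast_rpow_neg_nhds_one n).const_mul
      (Λ n)).mul_const _).mono_left nhdsWithin_le_nhds
  refine le_of_tendsto_of_tendsto hlim
    ((tendsto_fejerIntegral_nhdsGT_one h.continuousOn l y).const_add _) ?_
  filter_upwards [self_mem_nhdsWithin] with σ hσ
  have hmass := setIntegral_exp_neg_mul_le ((integrable_fejerKernel hl).comp_sub_right y)
    (fun u => fejerKernel_nonneg hl.le (u - y)) (sub_nonneg.2 (mem_Ioi.1 hσ).le)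
  rw [integral_sub_right_eq_self (fejerKernel l), integral_fejerKernel hl] at hmass
  exact (sum_le_hasSum F (fun n _ => mul_nonneg (mul_nonneg (h.nonneg n) (by positivity))
    (fejerKernel_nonneg hl.le _)) (h.hasSum_fejerKernel hl hσ y)).trans (by gcongr)

lemma summable (h : IsWienerIkehara Λ G) {l : ℝ} (hl : 0 < l) (y : ℝ) :
    Summable fun n : ℕ => Λ n / n * fejerKernel l (log n - y) :=
  summable_of_sum_le (h.term_nonneg hl.le y) (h.sum_le hl y)

lemma le_fejerSum (h : IsWienerIkehara Λ G) {l : ℝ} (hl : 0 < l) (y : ℝ) :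
    (∫ u in Ioi (0 : ℝ), fejerKernel l (u - y)) + fejerIntegral G l 1 y ≤ fejerSum Λ l y := by
  have hsub₀ : Tendsto (fun σ : ℝ => σ - 1) (𝓝 1) (𝓝 0) :=
    Continuous.tendsto' (by fun_prop) _ _ (sub_self _)
  have hsub : Tendsto (fun σ : ℝ => σ - 1) (𝓝[>] 1) (𝓝[>] 0) :=
    tendsto_nhdsWithin_of_tendsto_nhds_of_eventually_within _
      (hsub₀.mono_left nhdsWithin_le_nhds)
      (by filter_upwards [self_mem_nhdsWithin] with σ hσ using sub_pos.2 (mem_Ioi.1 hσ))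
  refine le_of_tendsto (((tendsto_setIntegral_exp_neg_mul
    ((integrable_fejerKernel hl).comp_sub_right y)).comp hsub).add
    (tendsto_fejerIntegral_nhdsGT_one h.continuousOn l y)) ?_
  filter_upwards [self_mem_nhdsWithin] with σ hσ
  have hsum := h.hasSum_fejerKernel hl hσ y
  rw [Function.comp_apply, ← hsum.tsum_eq]
  exact hsum.summable.tsum_le_tsum (fun n => mul_le_mul_of_nonneg_right
    (mul_le_mul_of_nonneg_left (natCast_rpow_neg_le_inv n (mem_Ioi.1 hσ).le) (h.nonneg n))
    (fejerKernel_nonneg hl.le _)) (h.summable hl y)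

theorem tendsto_fejerSum (h : IsWienerIkehara Λ G) {l : ℝ} (hl : 0 < l) :
    Tendsto (fejerSum Λ l) atTop (𝓝 (∫ u, fejerKernel 1 u)) := by
  have hG := tendsto_fejerIntegral_atTop h.continuousOn hl.le
  have hlower := (tendsto_setIntegral_Ioi_comp_sub (integrable_fejerKernel hl)).add hG
  have hupper := hG.const_add (∫ u, fejerKernel 1 u)
  rw [integral_fejerKernel hl, add_zero] at hlower
  rw [add_zero] at hupper
  exact tendsto_of_tendsto_of_tendsto_of_le_of_le hlower hupper (h.le_fejerSum hl)
    fun y => (h.summable hl y).tsum_le_of_sum_le (h.sum_le hl y)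

end IsWienerIkehara

lemma mem_Icc_of_abs_log_sub_lt {X ε : ℝ} (hX : 0 < X) (hε : 0 < ε) {n : ℕ} (hn : n ≠ 0)
    (h : |log n - (log X + log (1 + ε) / 2)| < log (1 + ε) / 2) :
    n ∈ Finset.Icc ⌈X⌉₊ ⌊(1 + ε) * X⌋₊ := by
  have hn' : (0 : ℝ) < n := by positivity
  rw [abs_lt] at h
  rw [Finset.mem_Icc, Nat.ceil_le, Nat.le_floor_iff (by positivity),
    ← log_le_log_iff hX hn', ← log_le_log_iff hn' (by positivity),
    log_mul (by positivity) hX.ne']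
  constructor <;> linarith

namespace IsWienerIkehara

variable {Λ : ℕ → ℝ} {G : ℂ → ℂ}

/- The part of `fejerSum Λ l y` outside a window is controlled by two sums with `l = 1`, which stay
bounded as `l` grows. -/
lemma fejerSum_le (h : IsWienerIkehara Λ G) {C l e y : ℝ} (hC : 0 < C) (hl : 0 < l)
    (htail : ∀ u, e ≤ |u| →
      fejerKernel l u ≤ C / l * (fejerKernel 1 u + fejerKernel 1 (u + 1)))
    {W : Finset ℕ} (hW : ∀ n : ℕ, n ≠ 0 → |log n - y| < e → n ∈ W) :
    fejerSum Λ l y ≤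
      l / 2 * ∑ n ∈ W, Λ n / n + C / l * (fejerSum Λ 1 y + fejerSum Λ 1 (y - 1)) := by
  have hΛ (n : ℕ) : 0 ≤ Λ n / n := div_nonneg (h.nonneg n) n.cast_nonneg
  set f : ℕ → ℝ := (W : Set ℕ).indicator fun n => l / 2 * (Λ n / n)
  have hf₀ (n : ℕ) : 0 ≤ f n := indicator_nonneg (fun n _ => mul_nonneg (by positivity) (hΛ n)) n
  have hf : HasSum f (l / 2 * ∑ n ∈ W, Λ n / n) := by
    have hsum : ∑ n ∈ W, f n = l / 2 * ∑ n ∈ W, Λ n / n := by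
      rw [Finset.mul_sum]
      exact Finset.sum_congr rfl fun n hn => indicator_of_mem (Finset.mem_coe.2 hn) _
    rw [← hsum]
    exact hasSum_sum_of_ne_finset_zero fun n hn => indicator_of_notMem (by simpa using hn) _
  have hsum := (h.summable one_pos y).add (h.summable one_pos (y - 1))
  have hterm (n : ℕ) : Λ n / n * fejerKernel l (log n - y) ≤ f n + C / l *
      (Λ n / n * fejerKernel 1 (log n - y) + Λ n / n * fejerKernel 1 (log n - (y - 1))) := by
    have htail₀ := mul_nonneg (div_pos hC hl).le
      (add_nonneg (h.term_nonneg zero_le_one y n) (h.term_nonneg zero_le_one (y - 1) n))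
    by_cases hn : n ∈ W
    · have := mul_le_mul_of_nonneg_left (fejerKernel_le hl.le (log n - y)) (hΛ n)
      simp only [f, indicator_of_mem (Finset.mem_coe.2 hn)]
      linarith
    rcases eq_or_ne n 0 with rfl | hn₀
    · simpa using hf₀ 0
    have := mul_le_mul_of_nonneg_left
      (htail (log n - y) (not_lt.1 fun hlt => hn (hW n hn₀ hlt))) (hΛ n)
    rw [show log n - (y - 1) = log n - y + 1 by ring]
    linarith [hf₀ n]
  rw [fejerSum, fejerSum, fejerSum, ← (h.summable one_pos y).tsum_add (h.summable one_pos (y - 1)),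
    ← tsum_mul_left, ← hf.tsum_eq, ← hf.summable.tsum_add (hsum.mul_left _)]
  exact (h.summable hl y).tsum_le_tsum hterm (hf.summable.add (hsum.mul_left _))

theorem exists_eventually_le_sum_Icc (h : IsWienerIkehara Λ G) {ε : ℝ} (hε : 0 < ε) :
    ∃ c : ℝ, 0 < c ∧ ∀ᶠ X : ℝ in atTop, c ≤ ∑ n ∈ Finset.Icc ⌈X⌉₊ ⌊(1 + ε) * X⌋₊, Λ n / n := by
  have he : 0 < log (1 + ε) / 2 := by linarith [log_pos (by linarith : 1 < 1 + ε)]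
  obtain ⟨C, hC, htail⟩ := exists_fejerKernel_le_fejerKernel_one_add he
  have hI := integral_fejerKernel_one_pos
  set I := ∫ u, fejerKernel 1 u
  set l := 4 * C
  have hl : 0 < l := by positivity
  have hlim : Tendsto (fun y => fejerSum Λ l y - C / l * (fejerSum Λ 1 y + fejerSum Λ 1 (y - 1)))
      atTop (𝓝 (I - C / l * (I + I))) :=
    (h.tendsto_fejerSum hl).sub (((h.tendsto_fejerSum one_pos).add ((h.tendsto_fejerSum
      one_pos).comp (tendsto_atTop_add_const_right atTop (-1) tendsto_id))).const_mul _)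
  have hmain : I / 4 < I - C / l * (I + I) := by
    have : C / l = 1 / 4 := by simp only [l]; field_simp
    rw [this]
    linarith
  refine ⟨I / (2 * l), by positivity, ?_⟩
  filter_upwards [eventually_gt_atTop 0, (tendsto_atTop_add_const_right atTop (log (1 + ε) / 2)
    tendsto_log_atTop).eventually (hlim.eventually_const_lt hmain)] with X hX hlarge
  have := h.fejerSum_le hC hl (fun u => htail l u hl)
    (fun n hn => mem_Icc_of_abs_log_sub_lt hX hε hn)
  rw [div_le_iff₀ (by positivity)]
  linarith

end IsWienerIkehara

end WienerIkehara

section Nonvanishing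

lemma tendsto_sub_mul_logDeriv {𝕜 : Type*} [NontriviallyNormedField 𝕜] [CompleteSpace 𝕜]
    {f : 𝕜 → 𝕜} {z₀ : 𝕜} (hf : AnalyticAt 𝕜 f z₀) (hord : analyticOrderAt f z₀ ≠ ⊤) :
    Tendsto (fun z => (z - z₀) * logDeriv f z) (𝓝[≠] z₀) (𝓝 (analyticOrderNatAt f z₀ : 𝕜)) := by
  set k := analyticOrderNatAt f z₀ with hk
  obtain ⟨g, hg, hg₀, hfg⟩ := (hf.analyticOrderNatAt_eq_iff hord).1 hk.symm
  have hcont : ContinuousAt (fun z => (k : 𝕜) + (z - z₀) * (deriv g z / g z)) z₀ :=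
    continuousAt_const.add ((by fun_prop : ContinuousAt (fun z => z - z₀) z₀).mul
      (hg.deriv.continuousAt.div hg.continuousAt hg₀))
  have hlim : Tendsto (fun z => (k : 𝕜) + (z - z₀) * (deriv g z / g z)) (𝓝[≠] z₀) (𝓝 k) := by
    simpa using hcont.tendsto.mono_left nhdsWithin_le_nhds
  refine hlim.congr' ?_
  filter_upwards [hfg.eventually_nhds.filter_mono nhdsWithin_le_nhds,
    (hg.continuousAt.eventually_ne hg₀).filter_mono nhdsWithin_le_nhds,
    hg.eventually_analyticAt.filter_mono nhdsWithin_le_nhds, self_mem_nhdsWithin]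
    with z hfgz hgz hgan hz
  have hz' : z - z₀ ≠ 0 := sub_ne_zero.2 hz
  rw [(logDeriv_congr_nhds hfgz).self_of_nhds]
  simp only [smul_eq_mul]
  rw [logDeriv_mul (f := fun z => (z - z₀) ^ k) z (pow_ne_zero k hz') hgz (by fun_prop)
    hgan.differentiableAt, logDeriv_fun_pow (by fun_prop), logDeriv_apply, logDeriv_apply,
    deriv_sub_const, deriv_id'']
  field_simp

/- The combination `3 + 4 cos θ + cos 2θ = 2 (1 + cos θ) ^ 2` is nonnegative. -/
lemma re_LSeries_three_four_one_nonneg {Λ : ℕ → ℝ} (hΛ : ∀ n, 0 ≤ Λ n) {σ : ℝ} (hσ : σ ≠ 0)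
    (hs : LSeriesSummable (fun n => (Λ n : ℂ)) σ) (t : ℝ) :
    0 ≤ 3 * (LSeries (fun n => (Λ n : ℂ)) (σ + (0 : ℝ) * Complex.I)).re +
      4 * (LSeries (fun n => (Λ n : ℂ)) (σ + t * Complex.I)).re +
      (LSeries (fun n => (Λ n : ℂ)) (σ + (2 * t : ℝ) * Complex.I)).re := by
  have hsum (t : ℝ) : HasSum (fun n : ℕ => Λ n * (n : ℝ) ^ (-σ) * cos (t * log n))
      (LSeries (fun n => (Λ n : ℂ)) (σ + t * Complex.I)).re := by
    have hs' : LSeriesSummable (fun n => (Λ n : ℂ)) (σ + t * Complex.I) :=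
      hs.of_re_le_re (by simp)
    refine (Complex.reCLM.hasSum hs'.LSeriesHasSum).congr_fun fun n => ?_
    simpa using (re_exp_mul_term_eq Λ hσ t 0 n).symm
  refine ((((hsum 0).mul_left 3).add ((hsum t).mul_left 4)).add (hsum (2 * t))).nonneg fun n => ?_
  have hsq : 0 ≤ Λ n * (n : ℝ) ^ (-σ) * (2 * (1 + cos (t * log n)) ^ 2) :=
    mul_nonneg (mul_nonneg (hΛ n) (by positivity)) (by positivity)
  rw [zero_mul, cos_zero, mul_assoc 2 t, cos_two_mul]
  linarith

lemma tendsto_ofReal_add_mul_I_nhdsGT_one (t : ℝ) :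
    Tendsto (fun σ : ℝ => (σ + t * Complex.I : ℂ)) (𝓝[>] 1) (𝓝[≠] (1 + t * Complex.I)) := by
  refine tendsto_nhdsWithin_of_tendsto_nhds_of_eventually_within _
    ((Continuous.tendsto' (by fun_prop) _ _ (by simp)).mono_left nhdsWithin_le_nhds) ?_
  filter_upwards [self_mem_nhdsWithin] with σ hσ h
  exact (mem_Ioi.1 hσ).ne' (by simpa using congrArg Complex.re h)

lemma tendsto_sub_one_mul_re_one_div (t : ℝ) :
    Tendsto (fun σ : ℝ => (σ - 1) * (1 / (σ + t * Complex.I - 1 : ℂ)).re) (𝓝[>] 1)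
      (𝓝 (if t = 0 then 1 else 0)) := by
  have hre (σ : ℝ) : (σ - 1) * (1 / (σ + t * Complex.I - 1 : ℂ)).re =
      (σ - 1) ^ 2 / ((σ - 1) ^ 2 + t ^ 2) := by
    simp [Complex.normSq_apply]
    ring
  simp_rw [hre]
  split_ifs with ht
  · refine tendsto_const_nhds.congr' ?_
    filter_upwards [self_mem_nhdsWithin] with σ hσ
    have : σ - 1 ≠ 0 := (sub_pos.2 (mem_Ioi.1 hσ)).ne'
    rw [ht, zero_pow two_ne_zero, add_zero, div_self (pow_ne_zero 2 this)]
  · have hcont : ContinuousAt (fun σ : ℝ => (σ - 1) ^ 2 / ((σ - 1) ^ 2 + t ^ 2)) 1 :=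
      ContinuousAt.div (by fun_prop) (by fun_prop) (by simpa using ht)
    simpa using hcont.tendsto.mono_left nhdsWithin_le_nhds

/-- `F s` has the properties of `(s - 1) * ζ s` for a zeta function `ζ` with a simple pole at `1`
whose logarithmic derivative is minus the Dirichlet series of the nonnegative sequence `Λ`. -/
structure IsZetaRegularization (Λ : ℕ → ℝ) (F : ℂ → ℂ) : Prop where
  nonneg : ∀ n, 0 ≤ Λ n
  lseriesSummable : ∀ s : ℂ, 1 < s.re → LSeriesSummable (fun n => (Λ n : ℂ)) s
  analyticOnNhd : AnalyticOnNhd ℂ F {s | 1 ≤ s.re}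
  one_ne_zero : F 1 ≠ 0
  deriv_eq : ∀ s : ℂ, 1 < s.re → deriv F s = F s * (1 / (s - 1) - LSeries (fun n => (Λ n : ℂ)) s)

namespace IsZetaRegularization

variable {Λ : ℕ → ℝ} {F : ℂ → ℂ}

lemma analyticOrderAt_ne_top (h : IsZetaRegularization Λ F) {s : ℂ} (hs : 1 ≤ s.re) :
    analyticOrderAt F s ≠ ⊤ := by
  have hone : (1 : ℂ) ∈ {s : ℂ | 1 ≤ s.re} := by simp
  refine h.analyticOnNhd.analyticOrderAt_ne_top_of_isPreconnected
    (convex_halfSpace_re_ge 1).isPreconnected hone hs ?_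
  rw [(h.analyticOnNhd 1 hone).analyticOrderAt_eq_zero.2 h.one_ne_zero]
  exact ENat.zero_ne_top

lemma ne_zero_of_analyticOrderNatAt_eq_zero (h : IsZetaRegularization Λ F) {s : ℂ}
    (hs : 1 ≤ s.re) (hord : analyticOrderNatAt F s = 0) : F s ≠ 0 := by
  rw [← (h.analyticOnNhd s hs).analyticOrderAt_eq_zero,
    ← Nat.cast_analyticOrderNatAt (h.analyticOrderAt_ne_top hs), hord, Nat.cast_zero]

lemma logDeriv_eq (h : IsZetaRegularization Λ F) {s : ℂ} (hs : 1 < s.re) (hF : F s ≠ 0) :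
    logDeriv F s = 1 / (s - 1) - LSeries (fun n => (Λ n : ℂ)) s := by
  rw [logDeriv_apply, h.deriv_eq s hs, mul_div_cancel_left₀ _ hF]

lemma continuousAt_LSeries (h : IsZetaRegularization Λ F) {s : ℂ} (hs : 1 < s.re) :
    ContinuousAt (LSeries fun n => (Λ n : ℂ)) s := by
  refine (LSeries_hasDerivAt (lt_of_le_of_lt ?_
    (by exact_mod_cast hs : ((1 : ℝ) : EReal) < s.re))).continuousAt
  exact LSeries.abscissaOfAbsConv_le_of_forall_lt_LSeriesSummable' fun y hy =>
    h.lseriesSummable y (by simpa using (by exact_mod_cast hy : (1 : ℝ) < y))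

/- The logarithmic derivative is continuous at `s`, so it cannot have the pole that a zero of `F`
would produce. -/
lemma ne_zero_of_one_lt_re (h : IsZetaRegularization Λ F) {s : ℂ} (hs : 1 < s.re) : F s ≠ 0 := by
  have hs₁ : s - 1 ≠ 0 := fun h₁ => by
    rw [sub_eq_zero.1 h₁] at hs
    simp at hs
  have hpole : ContinuousAt (fun z : ℂ => 1 / (z - 1)) s :=
    ContinuousAt.div (by fun_prop) (by fun_prop) hs₁
  have hcont : ContinuousAt
      (fun z => (z - s) * (1 / (z - 1) - LSeries (fun n => (Λ n : ℂ)) z)) s :=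
    ContinuousAt.mul (by fun_prop) (hpole.sub (h.continuousAt_LSeries hs))
  have hlim : Tendsto (fun z => (z - s) * logDeriv F z) (𝓝[≠] s) (𝓝 0) := by
    rw [ContinuousAt, sub_self, zero_mul] at hcont
    refine (hcont.mono_left nhdsWithin_le_nhds).congr' ?_
    have hFne : ∀ᶠ z in 𝓝[≠] s, F z ≠ 0 :=
      (h.analyticOnNhd s hs.le).eventually_eq_zero_or_eventually_ne_zero.resolve_left
        fun hF => h.analyticOrderAt_ne_top hs.le (analyticOrderAt_eq_top.2 hF)
    filter_upwards [hFne, mem_nhdsWithin_of_mem_nhds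
      ((isOpen_lt continuous_const Complex.continuous_re).mem_nhds hs)] with z hFz hz
    rw [h.logDeriv_eq hz hFz]
  have hord := tendsto_nhds_unique
    (tendsto_sub_mul_logDeriv (h.analyticOnNhd s hs.le) (h.analyticOrderAt_ne_top hs.le)) hlim
  exact h.ne_zero_of_analyticOrderNatAt_eq_zero hs.le (by exact_mod_cast hord)

lemma tendsto_sub_one_mul_re_LSeries (h : IsZetaRegularization Λ F) (t : ℝ) :
    Tendsto (fun σ : ℝ => (σ - 1) * (LSeries (fun n => (Λ n : ℂ)) (σ + t * Complex.I)).re) (𝓝[>] 1)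
      (𝓝 ((if t = 0 then 1 else 0) - analyticOrderNatAt F (1 + t * Complex.I))) := by
  have ht : 1 ≤ (1 + t * Complex.I : ℂ).re := by simp
  have hres := (Complex.continuous_re.tendsto _).comp ((tendsto_sub_mul_logDeriv
    (h.analyticOnNhd _ ht) (h.analyticOrderAt_ne_top ht)).comp
    (tendsto_ofReal_add_mul_I_nhdsGT_one t))
  rw [Complex.natCast_re] at hres
  refine ((tendsto_sub_one_mul_re_one_div t).sub hres).congr' ?_
  filter_upwards [self_mem_nhdsWithin] with σ hσ
  have hσt : 1 < (σ + t * Complex.I : ℂ).re := by simpa using hσ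
  have hsub : (σ + t * Complex.I : ℂ) - (1 + t * Complex.I) = (σ - 1 : ℝ) := by
    push_cast
    ring
  simp only [Function.comp_apply]
  rw [h.logDeriv_eq hσt (h.ne_zero_of_one_lt_re hσt), hsub, Complex.re_ofReal_mul, Complex.sub_re]
  ring

lemma ne_zero_of_one_le_re (h : IsZetaRegularization Λ F) {s : ℂ} (hs : 1 ≤ s.re) : F s ≠ 0 := by
  rcases hs.lt_or_eq with hlt | heq
  · exact h.ne_zero_of_one_lt_re hlt
  obtain ⟨t, rfl⟩ : ∃ t : ℝ, s = 1 + t * Complex.I := ⟨s.im, Complex.ext (by simp [heq]) (by simp)⟩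
  rcases eq_or_ne t 0 with rfl | ht
  · simpa using h.one_ne_zero
  refine h.ne_zero_of_analyticOrderNatAt_eq_zero hs ?_
  have hord : analyticOrderNatAt F (1 + (0 : ℝ) * Complex.I) = 0 := by
    have : analyticOrderAt F 1 = 0 :=
      (h.analyticOnNhd 1 (by simp)).analyticOrderAt_eq_zero.2 h.one_ne_zero
    simp [analyticOrderNatAt, this]
  have hlim := (((h.tendsto_sub_one_mul_re_LSeries 0).const_mul 3).add
    ((h.tendsto_sub_one_mul_re_LSeries t).const_mul 4)).add
    (h.tendsto_sub_one_mul_re_LSeries (2 * t))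
  rw [hord, if_pos rfl, if_neg ht, if_neg (by simpa using ht)] at hlim
  have hnonneg := ge_of_tendsto hlim (b := 0) (by
    filter_upwards [self_mem_nhdsWithin] with σ hσ
    have hσ' : 1 < σ := hσ
    have := mul_nonneg (sub_pos.2 hσ').le (re_LSeries_three_four_one_nonneg h.nonneg
      (by positivity) (h.lseriesSummable σ (by simpa using hσ')) t)
    linarith)
  by_contra hk
  have hk' : (1 : ℝ) ≤ analyticOrderNatAt F (1 + t * Complex.I) := by
    exact_mod_cast Nat.one_le_iff_ne_zero.2 hk
  have := (analyticOrderNatAt F (1 + (2 * t : ℝ) * Complex.I)).cast_nonneg (α := ℝ)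
  push_cast at hnonneg this
  linarith

theorem isWienerIkehara (h : IsZetaRegularization Λ F) :
    IsWienerIkehara Λ fun s => -logDeriv F s where
  nonneg := h.nonneg
  lseriesSummable := h.lseriesSummable
  continuousOn s hs := ((h.analyticOnNhd s hs).deriv.continuousAt.div
    (h.analyticOnNhd s hs).continuousAt (h.ne_zero_of_one_le_re hs)).neg.continuousWithinAt
  lseries_eq s hs := by
    rw [h.logDeriv_eq hs (h.ne_zero_of_one_lt_re hs)]
    ring

end IsZetaRegularization

end Nonvanishing

section IdealVonMangoldt

open NumberField Ideal UniqueFactorizationMonoid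
open scoped Finset

variable {L : Type*} [Field L] [NumberField L]

lemma two_le_absNorm {P : Ideal (𝓞 L)} (hP : P.IsPrime) (hP₀ : P ≠ ⊥) : 2 ≤ absNorm P := by
  have h₀ : absNorm P ≠ 0 := absNorm_eq_zero_iff.not.2 hP₀
  have h₁ : absNorm P ≠ 1 := absNorm_eq_one_iff.not.2 hP.ne_top
  lia

lemma natCast_absNorm_ne_zero {I : Ideal (𝓞 L)} (hI : I ≠ ⊥) : (absNorm I : ℝ) ≠ 0 := by
  exact_mod_cast absNorm_eq_zero_iff.not.2 hI

lemma finite_setOf_pow_dvd {I : Ideal (𝓞 L)} (hI : I ≠ ⊥) :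
    {q : Ideal (𝓞 L) × ℕ | q.1.IsPrime ∧ q.1 ≠ ⊥ ∧ q.1 ^ (q.2 + 1) ∣ I}.Finite := by
  refine ((finite_setOfPred_absNorm_le (absNorm I)).prod (finite_Iic (absNorm I))).subset ?_
  rintro ⟨P, k⟩ ⟨hP, hP₀, hdvd⟩
  have hle : absNorm P ^ (k + 1) ≤ absNorm I := by
    rw [← map_pow]
    exact Nat.le_of_dvd (Nat.pos_of_ne_zero (absNorm_eq_zero_iff.not.2 hI)) (map_dvd _ hdvd)
  exact ⟨(Nat.le_self_pow k.succ_ne_zero _).trans hle,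
    (k.lt_succ_self.trans (Nat.lt_pow_self (two_le_absNorm hP hP₀))).le.trans hle⟩

lemma log_absNorm_eq_sum {I : Ideal (𝓞 L)} (hI : I ≠ ⊥) :
    Real.log (absNorm I) =
      ∑ q ∈ (finite_setOf_pow_dvd hI).toFinset, Real.log (absNorm q.1) := by
  classical
  have hprime {P : Ideal (𝓞 L)} (hP : P ∈ (normalizedFactors I).toFinset) : Prime P :=
    prime_of_normalized_factor P (Multiset.mem_toFinset.1 hP)
  have hcount {P : Ideal (𝓞 L)} (hP : Prime P) (k : ℕ) :
      P ^ (k + 1) ∣ I ↔ k < (normalizedFactors I).count P := by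
    rw [pow_dvd_iff_le_emultiplicity, emultiplicity_eq_count_normalizedFactors hP.irreducible hI,
      normalize_eq, Nat.cast_le, Nat.succ_le_iff]
  rw [Finset.sum_finset_product _ (normalizedFactors I).toFinset
    fun P => Finset.range ((normalizedFactors I).count P)]
  · conv_lhs => rw [← Ideal.prod_normalizedFactors_eq_self hI, Finset.prod_multiset_count, map_prod,
      Nat.cast_prod, Real.log_prod fun P hP =>
        natCast_absNorm_ne_zero (pow_ne_zero _ (hprime hP).ne_zero)]
    simp
  · rintro ⟨P, k⟩
    simp only [Finite.mem_toFinset, mem_ofPred_eq, Finset.mem_range]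
    constructor
    · rintro ⟨hP, hP₀, hdvd⟩
      have hlt := (hcount (Ideal.prime_of_isPrime hP₀ hP) k).1 hdvd
      exact ⟨Multiset.mem_toFinset.2 (Multiset.count_pos.1 (by lia)), hlt⟩
    · rintro ⟨hP, hlt⟩
      exact ⟨Ideal.isPrime_of_prime (hprime hP), (hprime hP).ne_zero,
        (hcount (hprime hP) k).2 hlt⟩

variable (L) in
/-- The prime powers of norm `n` among the ideals of `𝓞 L`, the pair `(P, k)` standing for
`P ^ (k + 1)`. -/
def primePowersOfNorm (n : ℕ) : Set (Ideal (𝓞 L) × ℕ) :=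
  {q | q.1.IsPrime ∧ q.1 ≠ ⊥ ∧ absNorm q.1 ^ (q.2 + 1) = n}

variable (L) in
lemma finite_primePowersOfNorm (n : ℕ) : (primePowersOfNorm L n).Finite := by
  refine ((finite_setOfPred_absNorm_le n).prod (finite_Iic n)).subset ?_
  rintro ⟨P, k⟩ ⟨hP, hP₀, rfl⟩
  exact ⟨Nat.le_self_pow k.succ_ne_zero _,
    (k.lt_succ_self.trans (Nat.lt_pow_self (two_le_absNorm hP hP₀))).le⟩

variable (L) in
/-- The von Mangoldt function of `L`: the coefficients of the Dirichlet series of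
`-ζ_L' / ζ_L`. -/
noncomputable def idealVonMangoldt (n : ℕ) : ℝ :=
  ∑ q ∈ (finite_primePowersOfNorm L n).toFinset, Real.log (absNorm q.1)

lemma idealVonMangoldt_nonneg (n : ℕ) : 0 ≤ idealVonMangoldt L n :=
  Finset.sum_nonneg fun _ _ => Real.log_natCast_nonneg _

variable (L) in
/-- The number of ideals of `𝓞 L` of norm `n`: the coefficients of the Dedekind zeta function. -/
noncomputable def idealCount (n : ℕ) : ℕ := Nat.card {I : Ideal (𝓞 L) // absNorm I = n}

lemma card_absNorm_eq_mul_and_dvd {J : Ideal (𝓞 L)} (hJ : J ≠ ⊥) (n : ℕ) :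
    Nat.card {I : Ideal (𝓞 L) // absNorm I = absNorm J * n ∧ J ∣ I} = idealCount L n := by
  have hJ₀ : 0 < absNorm J := Nat.pos_of_ne_zero (absNorm_eq_zero_iff.not.2 hJ)
  refine (Nat.card_congr (Equiv.ofBijective
    (fun I : {I : Ideal (𝓞 L) // absNorm I = n} =>
      (⟨J * I.1, by rw [map_mul, I.2], Dvd.intro _ rfl⟩ :
        {I : Ideal (𝓞 L) // absNorm I = absNorm J * n ∧ J ∣ I})) ⟨?_, ?_⟩)).symm
  · exact fun I I' h => Subtype.ext (mul_left_cancel₀ hJ (congrArg Subtype.val h))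
  · rintro ⟨_, hI, I, rfl⟩
    rw [map_mul] at hI
    exact ⟨⟨I, Nat.eq_of_mul_eq_mul_left hJ₀ hI⟩, rfl⟩

open Classical in
lemma log_absNorm_eq_sum_divisors {I : Ideal (𝓞 L)} (hI : I ≠ ⊥) :
    Real.log (absNorm I) = ∑ d ∈ (absNorm I).divisors,
      ∑ q ∈ (finite_primePowersOfNorm L d).toFinset with q.1 ^ (q.2 + 1) ∣ I,
        Real.log (absNorm q.1) := by
  have hmaps : ∀ q ∈ (finite_setOf_pow_dvd hI).toFinset,
      absNorm q.1 ^ (q.2 + 1) ∈ (absNorm I).divisors := by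
    intro q hq
    rw [← map_pow]
    exact Nat.mem_divisors.2
      ⟨map_dvd _ ((Finite.mem_toFinset _).1 hq).2.2, absNorm_eq_zero_iff.not.2 hI⟩
  rw [log_absNorm_eq_sum hI, ← Finset.sum_fiberwise_of_maps_to hmaps]
  refine Finset.sum_congr rfl fun d _ => Finset.sum_congr ?_ fun _ _ => rfl
  ext q
  simp only [primePowersOfNorm, Finset.mem_filter, Finite.mem_toFinset, mem_ofPred_eq]
  tauto

/- Both sides count the pairs `(Q, I)` with `I` of norm `n` and `Q` a prime power dividing `I`,
weighted by the logarithm of the norm of the prime. -/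
lemma log_mul_idealCount {n : ℕ} (hn : n ≠ 0) :
    Real.log n * idealCount L n =
      ∑ p ∈ n.divisorsAntidiagonal, idealVonMangoldt L p.1 * idealCount L p.2 := by
  classical
  set S := (finite_setOfPred_absNorm_eq (S := 𝓞 L) n).toFinset with hS
  have hSmem (I : Ideal (𝓞 L)) : I ∈ S ↔ absNorm I = n := by simp [hS]
  have hmultiples {d : ℕ} (hd : d ∈ n.divisors) {q : Ideal (𝓞 L) × ℕ}
      (hq : q ∈ (finite_primePowersOfNorm L d).toFinset) :
      #{I ∈ S | q.1 ^ (q.2 + 1) ∣ I} = idealCount L (n / d) := by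
    obtain ⟨-, hP₀, hqd⟩ := (Finite.mem_toFinset _).1 hq
    rw [← card_absNorm_eq_mul_and_dvd (pow_ne_zero (q.2 + 1) hP₀), map_pow, hqd,
      Nat.mul_div_cancel' (Nat.dvd_of_mem_divisors hd),
      Nat.subtype_card {I ∈ S | q.1 ^ (q.2 + 1) ∣ I} fun I => by rw [Finset.mem_filter, hSmem]]
  calc
    Real.log n * idealCount L n = ∑ I ∈ S, Real.log (absNorm I) := by
      rw [idealCount, Nat.subtype_card S hSmem,
        Finset.sum_congr rfl fun I hI => by rw [(hSmem I).1 hI], Finset.sum_const, nsmul_eq_mul,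
        mul_comm]
    _ = ∑ I ∈ S, ∑ d ∈ n.divisors,
          ∑ q ∈ (finite_primePowersOfNorm L d).toFinset with q.1 ^ (q.2 + 1) ∣ I,
            Real.log (absNorm q.1) := by
      refine Finset.sum_congr rfl fun I hI => ?_
      have hI₀ : I ≠ ⊥ := fun h => hn (by rw [← (hSmem I).1 hI, h, absNorm_bot])
      rw [log_absNorm_eq_sum_divisors hI₀, (hSmem I).1 hI]
    _ = ∑ d ∈ n.divisors, ∑ q ∈ (finite_primePowersOfNorm L d).toFinset,
          Real.log (absNorm q.1) * #{I ∈ S | q.1 ^ (q.2 + 1) ∣ I} := by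
      rw [Finset.sum_comm]
      simp_rw [Finset.sum_filter]
      refine Finset.sum_congr rfl fun d _ => ?_
      rw [Finset.sum_comm]
      refine Finset.sum_congr rfl fun q _ => ?_
      rw [← Finset.sum_filter, Finset.sum_const, nsmul_eq_mul, mul_comm]
    _ = ∑ p ∈ n.divisorsAntidiagonal, idealVonMangoldt L p.1 * idealCount L p.2 := by
      rw [Nat.sum_divisorsAntidiagonal fun d e => idealVonMangoldt L d * (idealCount L e : ℝ)]
      refine Finset.sum_congr rfl fun d hd => ?_
      rw [idealVonMangoldt, Finset.sum_mul]
      exact Finset.sum_congr rfl fun q hq => by rw [hmultiples hd hq]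

lemma prod_dvd_span_natCast {p : ℕ} {T : Finset (Ideal (𝓞 L))}
    (hT : ∀ P ∈ T, P.IsPrime ∧ P ≠ ⊥ ∧ (p : 𝓞 L) ∈ P) : ∏ P ∈ T, P ∣ span {(p : 𝓞 L)} :=
  Finset.prod_primes_dvd _ (fun P hP => Ideal.prime_of_isPrime (hT P hP).2.1 (hT P hP).1)
    fun P hP => Ideal.dvd_span_singleton.2 (hT P hP).2.2

lemma sum_log_absNorm_le {p : ℕ} (hp : p ≠ 0) {T : Finset (Ideal (𝓞 L))}
    (hT : ∀ P ∈ T, P.IsPrime ∧ P ≠ ⊥ ∧ (p : 𝓞 L) ∈ P) :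
    ∑ P ∈ T, Real.log (absNorm P) ≤ Module.finrank ℚ L * Real.log p := by
  have hnorm : absNorm (span {(p : 𝓞 L)}) = p ^ Module.finrank ℚ L := by
    rw [absNorm_span_natCast, RingOfIntegers.rank]
  have hdvd := map_dvd absNorm (prod_dvd_span_natCast hT)
  rw [hnorm, map_prod] at hdvd
  rw [← Real.log_prod fun P hP => natCast_absNorm_ne_zero (hT P hP).2.1, ← Real.log_pow]
  refine Real.log_le_log ?_ (by exact_mod_cast Nat.le_of_dvd (by positivity) hdvd)
  exact Finset.prod_pos fun P hP => Nat.cast_pos.2 <|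
    Nat.pos_of_ne_zero (absNorm_eq_zero_iff.not.2 (hT P hP).2.1)

lemma exists_prime_mem_and_absNorm_eq_pow {P : Ideal (𝓞 L)} (hP : P.IsPrime) (hP₀ : P ≠ ⊥) :
    ∃ p f : ℕ, p.Prime ∧ (p : 𝓞 L) ∈ P ∧ f ≠ 0 ∧ absNorm P = p ^ f := by
  have : NeZero P := ⟨hP₀⟩
  have hlies : P.LiesOver (span {((absNorm (under ℤ P) : ℕ) : ℤ)}) :=
    ⟨by rw [Int.ideal_span_absNorm_eq_self]⟩
  have hnorm := absNorm_eq_pow_inertiaDeg' P (Nat.absNorm_under_prime P)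
  refine ⟨_, _, Nat.absNorm_under_prime P, by exact_mod_cast Int.absNorm_under_mem P,
    fun h => ?_, hnorm⟩
  have := two_le_absNorm hP hP₀
  rw [hnorm, h, pow_zero] at this
  lia

lemma idealVonMangoldt_le (n : ℕ) :
    idealVonMangoldt L n ≤ Module.finrank ℚ L * ArithmeticFunction.vonMangoldt n := by
  classical
  rcases (finite_primePowersOfNorm L n).toFinset.eq_empty_or_nonempty with hempty | ⟨q₀, hq₀⟩
  · rw [idealVonMangoldt, hempty, Finset.sum_empty]
    exact mul_nonneg (Nat.cast_nonneg _) ArithmeticFunction.vonMangoldt_nonneg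
  obtain ⟨hP₀, hP₀', hn⟩ := (Finite.mem_toFinset _).1 hq₀
  obtain ⟨p, f, hp, -, hf, hpf⟩ := exists_prime_mem_and_absNorm_eq_pow hP₀ hP₀'
  rw [hpf, ← pow_mul] at hn
  have hΛ : ArithmeticFunction.vonMangoldt n = Real.log p := by
    rw [← hn, ArithmeticFunction.vonMangoldt_apply_pow (mul_ne_zero hf q₀.2.succ_ne_zero),
      ArithmeticFunction.vonMangoldt_apply_prime hp]
  have hinj : InjOn Prod.fst ((finite_primePowersOfNorm L n).toFinset : Set (Ideal (𝓞 L) × ℕ)) := by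
    rintro ⟨P, k⟩ hk ⟨_, k'⟩ hk' rfl
    obtain ⟨hP, hP', hk⟩ := (Finite.mem_toFinset _).1 hk
    have hpow := Nat.pow_right_injective (two_le_absNorm hP hP')
      (hk.trans ((Finite.mem_toFinset _).1 hk').2.2.symm)
    exact Prod.ext rfl (Nat.succ_injective hpow)
  rw [hΛ, idealVonMangoldt,
    ← Finset.sum_image (f := fun P : Ideal (𝓞 L) => Real.log (absNorm P)) hinj]
  refine sum_log_absNorm_le hp.ne_zero fun P hP => ?_
  obtain ⟨⟨P, k⟩, hq, rfl⟩ := Finset.mem_image.1 hP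
  obtain ⟨hP, hP', hk⟩ := (Finite.mem_toFinset _).1 hq
  obtain ⟨p', f', hp', hmem, hf', hpf'⟩ := exists_prime_mem_and_absNorm_eq_pow hP hP'
  refine ⟨hP, hP', ?_⟩
  suffices p' = p from this ▸ hmem
  have hdvd : p' ∣ p ^ (f * (q₀.2 + 1)) := by
    rw [hn, ← hk, hpf', ← pow_mul]
    exact dvd_pow_self _ (mul_ne_zero hf' k.succ_ne_zero)
  exact (Nat.prime_dvd_prime_iff_eq hp' hp).1 (hp'.dvd_of_dvd_pow hdvd)

lemma lseriesSummable_idealVonMangoldt {s : ℂ} (hs : 1 < s.re) :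
    LSeriesSummable (fun n => (idealVonMangoldt L n : ℂ)) s := by
  refine .of_norm_bounded ((ArithmeticFunction.LSeriesSummable_vonMangoldt hs).norm.mul_left
    (Module.finrank ℚ L : ℝ)) fun n => ?_
  rcases eq_or_ne n 0 with rfl | hn
  · simp
  rw [LSeries.term_of_ne_zero hn, LSeries.term_of_ne_zero hn, norm_div, norm_div, ← mul_div_assoc]
  gcongr
  rw [Complex.norm_real, Complex.norm_real, Real.norm_of_nonneg (idealVonMangoldt_nonneg n),
    Real.norm_of_nonneg ArithmeticFunction.vonMangoldt_nonneg]
  exact idealVonMangoldt_le n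

variable (L) in
lemma dedekindZeta_eq_LSeries_idealCount :
    dedekindZeta L = LSeries fun n => (idealCount L n : ℂ) := rfl

/- The class number formula makes `ζ_L` nonzero to the right of `1`, whereas the junk value of a
divergent Dirichlet series is zero. -/
lemma lseriesSummable_idealCount {s : ℂ} (hs : 1 < s.re) :
    LSeriesSummable (fun n => (idealCount L n : ℂ)) s := by
  have hne := (tendsto_sub_one_mul_dedekindZeta_nhdsGT L).eventually_ne
    (Complex.ofReal_ne_zero.2 (dedekindZeta_residue_ne_zero L))
  obtain ⟨σ, hσ, hσs⟩ := (hne.and (Ioo_mem_nhdsGT hs)).exists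
  have hsum : LSeriesSummable (fun n => (idealCount L n : ℂ)) σ := by
    by_contra h
    rw [dedekindZeta_eq_LSeries_idealCount, LSeries, tsum_eq_zero_of_not_summable h] at hσ
    simp at hσ
  exact hsum.of_re_le_re (by simpa using hσs.2.le)

lemma hasDerivAt_dedekindZeta {s : ℂ} (hs : 1 < s.re) :
    HasDerivAt (dedekindZeta L)
      (-(LSeries (fun n => (idealVonMangoldt L n : ℂ)) s * dedekindZeta L s)) s := by
  have habs : LSeries.abscissaOfAbsConv (fun n => (idealCount L n : ℂ)) ≤ 1 :=
    LSeries.abscissaOfAbsConv_le_of_forall_lt_LSeriesSummable' fun y hy =>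
      lseriesSummable_idealCount (by simpa using (by exact_mod_cast hy : (1 : ℝ) < y))
  rw [dedekindZeta_eq_LSeries_idealCount, ← LSeries_convolution'
    (lseriesSummable_idealVonMangoldt hs) (lseriesSummable_idealCount hs)]
  convert LSeries_hasDerivAt (lt_of_le_of_lt habs (by exact_mod_cast hs : ((1 : ℝ) : EReal) < s.re))
    using 2
  refine LSeries_congr (fun {n} hn => ?_) s
  have hconv := log_mul_idealCount (L := L) hn
  rw [LSeries.convolution_def, LSeries.logMul, ← Complex.natCast_log]
  beta_reduce
  exact_mod_cast hconv.symm

end IdealVonMangoldt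

section LatticeSum

open Module
open scoped Pointwise

variable {E ι : Type*} [NormedAddCommGroup E] [NormedSpace ℝ E] [FiniteDimensional ℝ E]

section

variable [MeasurableSpace E] [BorelSpace E] [Finite ι] (b : Basis ι ℝ E) (μ : Measure E)
  [μ.IsAddHaarMeasure] {f g : E → ℝ}

lemma hasSum_setIntegral_fundamentalDomain (hf : Integrable f μ) :
    HasSum (fun l : Submodule.span ℤ (range b) =>
      ∫ x in ZSpan.fundamentalDomain b, f (l + x) ∂μ) (∫ x, f x ∂μ) := by
  have : VAddInvariantMeasure (Submodule.span ℤ (range b)) E μ :=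
    inferInstanceAs <| VAddInvariantMeasure (Submodule.span ℤ (range b)).toAddSubgroup E μ
  have : MeasurableVAdd (Submodule.span ℤ (range b)) E :=
    inferInstanceAs <| MeasurableVAdd (Submodule.span ℤ (range b)).toAddSubgroup E
  have htranslates : HasSum (fun l : Submodule.span ℤ (range b) =>
      ∫ x in l +ᵥ ZSpan.fundamentalDomain b, f x ∂μ) (∫ x, f x ∂μ) := by
    have hrestrict := (ZSpan.isAddFundamentalDomain b μ).sum_restrict
    simpa only [hrestrict] using hasSum_integral_measure (f := f)
      (μ := fun l : Submodule.span ℤ (range b) => μ.restrict (l +ᵥ ZSpan.fundamentalDomain b))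
      (by rwa [hrestrict])
  convert htranslates using 2 with l
  exact ((measurePreserving_vadd l μ).setIntegral_image_emb
    (measurableEmbedding_const_vadd _) _ _).symm

lemma abs_measure_mul_sub_setIntegral_fundamentalDomain_le (hf : Integrable f μ)
    (hg : Integrable g μ) {l : E}
    (hfg : ∀ x ∈ ZSpan.fundamentalDomain b, |f l - f (l + x)| ≤ g (l + x)) :
    |μ.real (ZSpan.fundamentalDomain b) * f l - ∫ x in ZSpan.fundamentalDomain b, f (l + x) ∂μ|
      ≤ ∫ x in ZSpan.fundamentalDomain b, g (l + x) ∂μ := by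
  have hconst : IntegrableOn (fun _ => f l) (ZSpan.fundamentalDomain b) μ :=
    integrableOn_const (ZSpan.fundamentalDomain_isBounded b).measure_lt_top.ne
  rw [← smul_eq_mul, ← setIntegral_const, ← integral_sub hconst
    (hf.comp_add_left l).integrableOn, ← Real.norm_eq_abs]
  refine norm_integral_le_of_norm_le (hg.comp_add_left l).integrableOn ?_
  filter_upwards [ae_restrict_mem (ZSpan.fundamentalDomain_measurableSet b)] with x hx
  exact hfg x hx

lemma summable_and_abs_measure_mul_tsum_sub_integral_le (hf : Integrable f μ) (hg : Integrable g μ)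
    (hfg : ∀ l, ∀ x ∈ ZSpan.fundamentalDomain b, |f l - f (l + x)| ≤ g (l + x)) :
    (Summable fun l : Submodule.span ℤ (range b) => f l) ∧
      |μ.real (ZSpan.fundamentalDomain b) * ∑' l : Submodule.span ℤ (range b), f l -
        ∫ x, f x ∂μ| ≤ ∫ x, g x ∂μ := by
  have hcell := fun l : Submodule.span ℤ (range b) =>
    abs_measure_mul_sub_setIntegral_fundamentalDomain_le b μ hf hg (hfg l)
  have hsum_f := hasSum_setIntegral_fundamentalDomain b μ hf
  have hsum_g := hasSum_setIntegral_fundamentalDomain b μ hg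
  have hpos : μ.real (ZSpan.fundamentalDomain b) ≠ 0 :=
    (ENNReal.toReal_pos (ZSpan.measure_fundamentalDomain_ne_zero b)
      (ZSpan.fundamentalDomain_isBounded b).measure_lt_top.ne).ne'
  have hsum : Summable fun l : Submodule.span ℤ (range b) =>
      μ.real (ZSpan.fundamentalDomain b) * f l :=
    ((Summable.of_norm_bounded hsum_g.summable hcell).add hsum_f.summable).congr
      fun l => sub_add_cancel _ _
  refine ⟨(summable_mul_left_iff hpos).1 hsum, ?_⟩
  rw [← tsum_mul_left, ← hsum_f.tsum_eq, ← hsum.tsum_sub hsum_f.summable, ← Real.norm_eq_abs]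
  exact tsum_of_norm_bounded hsum_g hcell

end

lemma exists_abs_sub_le_mul_indicator_closedBall {f : E → ℝ} (hf : LocallyLipschitz f)
    (hsupp : HasCompactSupport f) (B : ℝ) :
    ∃ K r : ℝ, 0 ≤ K ∧ ∀ x y, ‖x - y‖ ≤ B →
      |f x - f y| ≤ K * ‖x - y‖ * (Metric.closedBall 0 r).indicator 1 y := by
  obtain ⟨r, hr⟩ := hsupp.isCompact.isBounded.subset_closedBall 0
  obtain ⟨K, hK⟩ := (hf.locallyLipschitzOn (s := Metric.closedBall 0 (r + 2 * B))
    ).exists_lipschitzOnWith_of_compact (isCompact_closedBall _ _)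
  have hzero : ∀ x, r < ‖x‖ → f x = 0 := fun x hx => image_eq_zero_of_notMem_tsupport fun h =>
    hx.not_ge (mem_closedBall_zero_iff.1 (hr h))
  refine ⟨K, r + B, K.2, fun x y hxy => ?_⟩
  have hB : 0 ≤ B := (norm_nonneg _).trans hxy
  have htri := norm_sub_norm_le x y
  have htri' := norm_sub_norm_le y x
  rw [norm_sub_rev] at htri'
  by_cases hy : y ∈ Metric.closedBall 0 (r + B)
  · rw [indicator_of_mem hy, Pi.one_apply, mul_one, ← Real.dist_eq, ← dist_eq_norm]
    rw [mem_closedBall_zero_iff] at hy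
    exact hK.dist_le_mul _ (mem_closedBall_zero_iff.2 (by linarith)) _
      (mem_closedBall_zero_iff.2 (by linarith))
  · rw [indicator_of_notMem hy, mul_zero]
    rw [mem_closedBall_zero_iff, not_le] at hy
    rw [hzero x (by linarith), hzero y (by linarith), sub_zero, abs_zero]

lemma exists_abs_pow_finrank_mul_tsum_sub_le [Finite ι] (b : Basis ι ℝ E) {f : E → ℝ}
    (hf : LocallyLipschitz f) (hsupp : HasCompactSupport f) :
    ∃ c C : ℝ, 0 ≤ C ∧ ∀ t ∈ Ioc (0 : ℝ) 1,
      (Summable fun l : Submodule.span ℤ (range b) => f (t • l)) ∧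
      |t ^ finrank ℝ E * ∑' l : Submodule.span ℤ (range b), f (t • l) - c| ≤ C * t := by
  borelize E
  let μ : Measure E := Measure.addHaar
  set D := ZSpan.fundamentalDomain b
  obtain ⟨B, hB⟩ := (ZSpan.fundamentalDomain_isBounded b).exists_norm_le
  have hB₀ : 0 ≤ B := (norm_nonneg _).trans (hB 0 (by simp))
  obtain ⟨K, r, hK₀, hK⟩ := exists_abs_sub_le_mul_indicator_closedBall hf hsupp B
  have hV : 0 < μ.real D := ENNReal.toReal_pos (ZSpan.measure_fundamentalDomain_ne_zero b)
    (ZSpan.fundamentalDomain_isBounded b).measure_lt_top.ne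
  have hf_int : Integrable f μ := hf.continuous.integrable_of_hasCompactSupport hsupp
  set χ : E → ℝ := (Metric.closedBall 0 r).indicator 1
  have hχ_int : Integrable χ μ :=
    (integrable_indicator_iff Metric.isClosed_closedBall.measurableSet).2
      (integrableOn_const (isCompact_closedBall _ _).measure_lt_top.ne)
  have hχ₀ : 0 ≤ ∫ x, χ x ∂μ := integral_nonneg fun x => indicator_nonneg (by simp) x
  refine ⟨(∫ x, f x ∂μ) / μ.real D, K * B * (∫ x, χ x ∂μ) / μ.real D, by positivity,
    fun t ⟨ht₀, ht₁⟩ => ?_⟩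
  have hvar : ∀ l, ∀ x ∈ D, |f (t • l) - f (t • (l + x))| ≤ K * B * t * χ (t • (l + x)) := by
    intro l x hx
    have hdist : ‖t • l - t • (l + x)‖ ≤ B * t := by
      rw [← smul_sub, norm_smul, Real.norm_of_nonneg ht₀.le, sub_add_cancel_left, norm_neg,
        mul_comm]
      gcongr
      exact hB x hx
    refine (hK _ _ (hdist.trans (mul_le_of_le_one_right hB₀ ht₁))).trans ?_
    rw [mul_assoc K B]
    gcongr
    exact indicator_nonneg (by simp) _
  obtain ⟨hsum, hle⟩ := summable_and_abs_measure_mul_tsum_sub_integral_le b μ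
    (hf_int.comp_smul ht₀.ne') ((hχ_int.comp_smul ht₀.ne').const_mul (K * B * t)) hvar
  refine ⟨hsum, ?_⟩
  rw [integral_const_mul, Measure.integral_comp_smul, Measure.integral_comp_smul,
    abs_of_pos (by positivity : 0 < (t ^ finrank ℝ E)⁻¹), smul_eq_mul, smul_eq_mul] at hle
  calc _ = t ^ finrank ℝ E / μ.real D * |μ.real D * ∑' l : Submodule.span ℤ (range b), f (t • l)
        - (t ^ finrank ℝ E)⁻¹ * ∫ x, f x ∂μ| := by
        rw [← abs_of_pos (show 0 < t ^ finrank ℝ E / μ.real D by positivity), ← abs_mul]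
        congr 1
        field_simp
    _ ≤ t ^ finrank ℝ E / μ.real D *
        (K * B * t * ((t ^ finrank ℝ E)⁻¹ * ∫ x, χ x ∂μ)) := by gcongr
    _ = _ := by field_simp

end LatticeSum

section MellinContinuation

lemma hasMellin_comp_mul_left {f : ℝ → ℂ} {s : ℂ} {a : ℝ} (hf : MellinConvergent f s)
    (ha : 0 < a) : HasMellin (fun t => f (a * t)) s ((a : ℂ) ^ (-s) * mellin f s) :=
  ⟨(MellinConvergent.comp_mul_left ha).2 hf, by rw [mellin_comp_mul_left f s ha, smul_eq_mul]⟩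

lemma hasMellin_max_zero_one_sub {s : ℂ} (hs : 0 < s.re) :
    HasMellin (fun t : ℝ => ((max 0 (1 - t) : ℝ) : ℂ)) s (1 / s - 1 / (s + 1)) := by
  obtain ⟨hconv₀, hval₀⟩ := hasMellin_one_Ioc hs
  obtain ⟨hconv₁, hval₁⟩ := hasMellin_cpow_Ioc 1 (s := s)
    (hs.trans (by simp only [Complex.one_re, lt_add_iff_pos_right, zero_lt_one]))
  have hsub := hasMellin_sub hconv₀ hconv₁
  rw [hval₀, hval₁] at hsub
  have heq : ∀ t ∈ Ioi (0 : ℝ), (t : ℂ) ^ (s - 1) • (indicator (Ioc 0 1) (fun _ => (1 : ℂ)) t -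
      indicator (Ioc 0 1) (fun t : ℝ => (t : ℂ) ^ (1 : ℂ)) t) =
      (t : ℂ) ^ (s - 1) • ((max 0 (1 - t) : ℝ) : ℂ) := by
    intro t (ht : 0 < t)
    congr 1
    by_cases h : t ≤ 1
    · have hmem : t ∈ Ioc (0 : ℝ) 1 := ⟨ht, h⟩
      rw [indicator_of_mem hmem, indicator_of_mem hmem, max_eq_right (by linarith),
        Complex.cpow_one, Complex.ofReal_sub, Complex.ofReal_one]
    · rw [indicator_of_notMem fun h' => h h'.2, indicator_of_notMem fun h' => h h'.2,
        max_eq_left (by linarith), sub_zero, Complex.ofReal_zero]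
  exact ⟨(integrableOn_congr_fun heq measurableSet_Ioi).1 hsub.1,
    (setIntegral_congr_fun measurableSet_Ioi heq).symm.trans hsub.2⟩

/-- The triangular bump on `[1/4, 1]` with apex at `1/2`. It is the weight used to smooth sums over
ideals: it vanishes near `0`, and its Mellin transform has no zeros in the right half-plane. -/
noncomputable def triangleBump (t : ℝ) : ℝ := max 0 (min (2 * t - 1 / 2) (1 - t))

lemma triangleBump_nonneg (t : ℝ) : 0 ≤ triangleBump t := le_max_left _ _

lemma triangleBump_eq_zero_of_le {t : ℝ} (ht : t ≤ 1 / 4) : triangleBump t = 0 :=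
  max_eq_left ((min_le_left _ _).trans (by linarith))

lemma triangleBump_eq_zero_of_ge {t : ℝ} (ht : 1 ≤ t) : triangleBump t = 0 :=
  max_eq_left ((min_le_right _ _).trans (by linarith))

lemma locallyLipschitz_triangleBump : LocallyLipschitz triangleBump := by
  have hleft : ContDiff ℝ 1 fun t : ℝ => 2 * t - 1 / 2 := by fun_prop
  have hright : ContDiff ℝ 1 fun t : ℝ => 1 - t := by fun_prop
  exact (LocallyLipschitz.const 0).max (hleft.locallyLipschitz.min hright.locallyLipschitz)

lemma triangleBump_eq (t : ℝ) : triangleBump t =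
    max 0 (1 - t) - 3 / 2 * max 0 (1 - 2 * t) + 1 / 2 * max 0 (1 - 4 * t) := by
  unfold triangleBump
  grind

lemma hasMellin_triangleBump {s : ℂ} (hs : 0 < s.re) :
    HasMellin (fun t => (triangleBump t : ℂ)) s
      ((1 - 2 ^ (-s)) * (1 - 2 ^ (-s) / 2) / (s * (s + 1))) := by
  have hramp := hasMellin_max_zero_one_sub hs
  have hramp₂ := hasMellin_comp_mul_left hramp.1 (a := 2) (by norm_num)
  have hramp₄ := hasMellin_comp_mul_left hramp.1 (a := 4) (by norm_num)
  have h := hasMellin_add (hasMellin_sub hramp.1 (hramp₂.1.const_smul (3 / 2 : ℂ))).1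
    (hramp₄.1.const_smul (1 / 2 : ℂ))
  rw [(hasMellin_sub hramp.1 (hramp₂.1.const_smul (3 / 2 : ℂ))).2, mellin_const_smul,
    mellin_const_smul, hramp₂.2, hramp₄.2, hramp.2] at h
  convert h using 1
  · ext t
    rw [triangleBump_eq]
    push_cast [smul_eq_mul]
    rfl
  · have hs₀ : s ≠ 0 := fun h => hs.ne' (by rw [h, Complex.zero_re])
    have hs₁ : s + 1 ≠ 0 := fun h => by
      have := congrArg Complex.re h
      rw [Complex.add_re, Complex.one_re, Complex.zero_re] at this
      linarith
    have hpow : ((4 : ℝ) : ℂ) ^ (-s) = (2 : ℂ) ^ (-s) * (2 : ℂ) ^ (-s) := by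
      rw [show (4 : ℝ) = 2 * 2 by norm_num, Complex.ofReal_mul,
        Complex.mul_cpow_ofReal_nonneg (by norm_num) (by norm_num), Complex.ofReal_ofNat]
    rw [hpow, Complex.ofReal_ofNat, smul_eq_mul, smul_eq_mul]
    field_simp
    ring

lemma mellin_triangleBump_ne_zero {s : ℂ} (hs : 0 < s.re) :
    mellin (fun t => (triangleBump t : ℂ)) s ≠ 0 := by
  have hpow : ‖(2 : ℂ) ^ (-s)‖ < 1 := by
    rw [← Nat.cast_ofNat, Complex.norm_natCast_cpow_of_pos two_pos, Complex.neg_re]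
    exact rpow_lt_one_of_one_lt_of_neg (by norm_num) (by linarith)
  rw [(hasMellin_triangleBump hs).2]
  refine div_ne_zero (mul_ne_zero (sub_ne_zero.2 fun h => ?_) (sub_ne_zero.2 fun h => ?_))
    (mul_ne_zero (fun h => ?_) fun h => ?_)
  · rw [← h, norm_one] at hpow
    exact hpow.false
  · have := congrArg norm h
    rw [norm_one, norm_div, Complex.norm_ofNat] at this
    linarith
  · rw [h, Complex.zero_re] at hs
    exact hs.false
  · rw [eq_neg_of_add_eq_zero_left h, Complex.neg_re, Complex.one_re] at hs
    linarith

section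

variable {φ : ℝ → ℂ} (hφ : Continuous φ) (hφ₀ : φ 0 = 0) (hφ₁ : ∀ t, 1 ≤ t → φ t = 0)
include hφ hφ₁

lemma mellinConvergent_and_differentiableAt_mellin {s : ℂ} (hs : 0 < s.re) :
    MellinConvergent φ s ∧ DifferentiableAt ℂ (mellin φ) s := by
  have hloc : LocallyIntegrableOn φ (Ioi 0) := hφ.locallyIntegrable.locallyIntegrableOn _
  have htop : φ =O[atTop] fun t : ℝ => t ^ (-(s.re + 1)) := by
    have : φ =ᶠ[atTop] fun _ => (0 : ℂ) := (eventually_ge_atTop 1).mono hφ₁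
    exact this.trans_isBigO (isBigO_zero _ _)
  have hbot : φ =O[𝓝[>] 0] fun t : ℝ => t ^ (-0 : ℝ) := by
    simp only [neg_zero, rpow_zero]
    exact (hφ.continuousAt.isBigO_one ℝ).mono nhdsWithin_le_nhds
  exact ⟨mellinConvergent_of_isBigO_rpow hloc htop (by linarith) hbot hs,
    mellin_differentiableAt_of_isBigO_rpow hloc htop (by linarith) hbot hs⟩

omit hφ in
lemma tsum_mul_comp_natCast_mul_eq_sum (a : ℕ → ℂ) {t : ℝ} {N : ℕ} (ht : 0 ≤ t)
    (hN : 1 ≤ N * t) : ∑' n, a n * φ (n * t) = ∑ n ∈ Finset.range N, a n * φ (n * t) := by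
  refine tsum_eq_sum fun n hn => ?_
  rw [Finset.mem_range, not_lt] at hn
  rw [hφ₁ _ (hN.trans (by gcongr)), mul_zero]

lemma continuousOn_tsum_mul_comp_natCast_mul (a : ℕ → ℂ) :
    ContinuousOn (fun t : ℝ => ∑' n, a n * φ (n * t)) (Ioi 0) := by
  intro t₀ (ht₀ : 0 < t₀)
  have heq : (fun t : ℝ => ∑' n, a n * φ (n * t)) =ᶠ[𝓝 t₀]
      fun t => ∑ n ∈ Finset.range ⌈2 / t₀⌉₊, a n * φ (n * t) := by
    filter_upwards [lt_mem_nhds (half_lt_self ht₀)] with t ht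
    refine tsum_mul_comp_natCast_mul_eq_sum hφ₁ a (by linarith) ?_
    calc (1 : ℝ) = 2 / t₀ * (t₀ / 2) := by field_simp
      _ ≤ ⌈2 / t₀⌉₊ * t := by
        gcongr
        exact Nat.le_ceil _
  refine (ContinuousAt.congr ?_ heq.symm).continuousWithinAt
  exact (continuous_finsetSum _ fun n _ => by fun_prop).continuousAt

omit hφ hφ₁ in
lemma setIntegral_norm_cpow_smul_comp_mul_left {s : ℂ} {a : ℝ} (ha : 0 < a) :
    ∫ t in Ioi (0 : ℝ), ‖(t : ℂ) ^ (s - 1) • φ (a * t)‖ =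
      a ^ (-s.re) * ∫ t in Ioi (0 : ℝ), ‖(t : ℂ) ^ (s - 1) • φ t‖ := by
  have hscale : ∀ t ∈ Ioi (0 : ℝ), ‖(t : ℂ) ^ (s - 1) • φ (a * t)‖ =
      a ^ (1 - s.re) * ‖((a * t : ℝ) : ℂ) ^ (s - 1) • φ (a * t)‖ := by
    intro t (ht : 0 < t)
    rw [norm_smul, norm_smul, Complex.norm_cpow_eq_rpow_re_of_pos ht,
      Complex.norm_cpow_eq_rpow_re_of_pos (mul_pos ha ht), mul_rpow ha.le ht.le, ← mul_assoc,
      ← mul_assoc, ← rpow_add ha, Complex.sub_re, Complex.one_re, sub_add_sub_cancel, sub_self,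
      rpow_zero, one_mul]
  rw [setIntegral_congr_fun measurableSet_Ioi hscale, integral_const_mul,
    integral_comp_mul_left_Ioi (fun t : ℝ => ‖(t : ℂ) ^ (s - 1) • φ t‖) 0 ha, mul_zero,
    smul_eq_mul, ← mul_assoc, sub_eq_add_neg, rpow_add ha, rpow_one, mul_right_comm a,
    mul_inv_cancel₀ ha.ne', one_mul]

include hφ₀ in
lemma mellin_tsum_mul_comp_natCast_mul {a : ℕ → ℂ} {s : ℂ} (hs : 0 < s.re)
    (ha : LSeriesSummable a s) :
    mellin (fun t => ∑' n, a n * φ (n * t)) s = mellin φ s * LSeries a s := by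
  have hconv := (mellinConvergent_and_differentiableAt_mellin hφ hφ₁ hs).1
  have hterm : ∀ n : ℕ, HasMellin (fun t => a n * φ (n * t)) s
      (mellin φ s * LSeries.term a s n) := by
    intro n
    rcases n.eq_zero_or_pos with rfl | hn
    · simp only [Nat.cast_zero, zero_mul, hφ₀, mul_zero, LSeries.term_zero]
      exact ⟨by simp [MellinConvergent], by simp [mellin]⟩
    · obtain ⟨hconv_n, hval_n⟩ := hasMellin_comp_mul_left hconv (Nat.cast_pos.2 hn)
      refine ⟨hconv_n.const_smul (a n), ?_⟩
      calc mellin (fun t => a n • φ (n * t)) s = a n • ((n : ℝ) : ℂ) ^ (-s) * mellin φ s := by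
            rw [mellin_const_smul, hval_n, smul_mul_assoc]
        _ = mellin φ s * LSeries.term a s n := by
            rw [LSeries.term_of_ne_zero hn.ne', Complex.ofReal_natCast, Complex.cpow_neg,
              smul_eq_mul, div_eq_mul_inv, mul_comm]
  have hnorm : Summable fun n : ℕ =>
      ∫ t in Ioi (0 : ℝ), ‖(t : ℂ) ^ (s - 1) • (a n * φ (n * t))‖ := by
    refine (ha.norm.mul_right (∫ t in Ioi (0 : ℝ), ‖(t : ℂ) ^ (s - 1) • φ t‖)).congr fun n => ?_
    rcases n.eq_zero_or_pos with rfl | hn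
    · simp [hφ₀]
    · simp only [← smul_eq_mul (a n), smul_comm _ (a n), norm_smul (a n)]
      rw [integral_const_mul, setIntegral_norm_cpow_smul_comp_mul_left (Nat.cast_pos.2 hn),
        LSeries.term_of_ne_zero hn.ne', norm_div, Complex.norm_natCast_cpow_of_pos hn,
        rpow_neg (Nat.cast_nonneg n)]
      ring
  have hsum := hasSum_integral_of_summable_integral_norm (fun n => (hterm n).1) hnorm
  calc mellin (fun t => ∑' n, a n * φ (n * t)) s
      = ∫ t in Ioi (0 : ℝ), ∑' n : ℕ, (t : ℂ) ^ (s - 1) • (a n * φ (n * t)) := by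
        simp only [mellin, smul_eq_mul, tsum_mul_left]
    _ = ∑' n, mellin φ s * LSeries.term a s n := by
        rw [← hsum.tsum_eq]
        exact tsum_congr fun n => (hterm n).2
    _ = mellin φ s * LSeries a s := tsum_mul_left

/-- The difference between a smoothed sum and the polar part `c / t` it has near `0`. -/
noncomputable def smoothedRemainder (a : ℕ → ℂ) (φ : ℝ → ℂ) (c : ℂ) (t : ℝ) : ℂ :=
  ∑' n, a n * φ (n * t) - c • (Ioc (0 : ℝ) 1).indicator (fun t : ℝ => (t : ℂ) ^ (-1 : ℂ)) t

include hφ₀ in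
lemma mellinConvergent_and_differentiableAt_mellin_smoothedRemainder {a : ℕ → ℂ} {c : ℂ}
    {C δ : ℝ} (hbound : ∀ t ∈ Ioc (0 : ℝ) 1, ‖∑' n, a n * φ (n * t) - c / t‖ ≤ C * t ^ (δ - 1))
    {s : ℂ} (hs : 1 - δ < s.re) :
    MellinConvergent (smoothedRemainder a φ c) s ∧
      DifferentiableAt ℂ (mellin (smoothedRemainder a φ c)) s := by
  have hpole : LocallyIntegrableOn (fun t : ℝ => (t : ℂ) ^ (-1 : ℂ)) (Ioi 0) := by
    refine ContinuousOn.locallyIntegrableOn (fun t (ht : 0 < t) => ?_) measurableSet_Ioi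
    exact (Complex.continuousAt_ofReal_cpow_const _ _ (.inr ht.ne')).continuousWithinAt
  have hloc : LocallyIntegrableOn (smoothedRemainder a φ c) (Ioi 0) := by
    refine ((continuousOn_tsum_mul_comp_natCast_mul hφ hφ₁ a).locallyIntegrableOn
      measurableSet_Ioi).sub (LocallyIntegrableOn.smul (fun t ht => ?_) c)
    obtain ⟨u, hu, hint⟩ := hpole t ht
    exact ⟨u, hu, hint.indicator measurableSet_Ioc⟩
  have htop : smoothedRemainder a φ c =O[atTop] fun t : ℝ => t ^ (-(s.re + 1)) := by
    have : smoothedRemainder a φ c =ᶠ[atTop] fun _ => (0 : ℂ) := by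
      filter_upwards [eventually_gt_atTop 1] with t ht
      rw [smoothedRemainder, indicator_of_notMem fun h => ht.not_ge h.2,
        tsum_mul_comp_natCast_mul_eq_sum hφ₁ a (N := 1) (by linarith) (by simpa using ht.le)]
      simp [hφ₀]
    exact this.trans_isBigO (isBigO_zero _ _)
  have hbot : smoothedRemainder a φ c =O[𝓝[>] 0] fun t : ℝ => t ^ (-(1 - δ)) := by
    refine IsBigO.of_bound C ?_
    filter_upwards [Ioc_mem_nhdsGT (zero_lt_one' ℝ)] with t ht
    rw [smoothedRemainder, indicator_of_mem ht, smul_eq_mul, Complex.cpow_neg_one,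
      ← div_eq_mul_inv, neg_sub, Real.norm_of_nonneg (rpow_nonneg ht.1.le _)]
    exact hbound t ht
  exact ⟨mellinConvergent_of_isBigO_rpow hloc htop (by linarith) hbot hs,
    mellin_differentiableAt_of_isBigO_rpow hloc htop (by linarith) hbot hs⟩

include hφ₀ in
lemma mellin_smoothedRemainder {a : ℕ → ℂ} {c : ℂ} {s : ℂ} (hs : 1 < s.re)
    (ha : LSeriesSummable a s) (hconv : MellinConvergent (smoothedRemainder a φ c) s) :
    mellin (smoothedRemainder a φ c) s = mellin φ s * LSeries a s - c / (s - 1) := by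
  obtain ⟨hpole, hval⟩ := hasMellin_cpow_Ioc (-1) (s := s)
    (by rw [Complex.neg_re, Complex.one_re]; linarith)
  have h := (hasMellin_add hconv (hpole.const_smul c)).2
  simp only [smoothedRemainder, sub_add_cancel] at h
  rw [mellin_tsum_mul_comp_natCast_mul hφ hφ₀ hφ₁ (by linarith) ha, mellin_const_smul, hval] at h
  rw [h, smul_eq_mul, mul_one_div, ← sub_eq_add_neg, add_sub_cancel_right]

include hφ₀ in
lemma exists_differentiableOn_eq_sub_one_mul_LSeries (hmellin : ∀ s : ℂ, 0 < s.re → mellin φ s ≠ 0)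
    {a : ℕ → ℂ} (ha : ∀ s : ℂ, 1 < s.re → LSeriesSummable a s) {c : ℂ} {C δ : ℝ} (hδ₀ : 0 < δ)
    (hδ₁ : δ ≤ 1)
    (hbound : ∀ t ∈ Ioc (0 : ℝ) 1, ‖∑' n, a n * φ (n * t) - c / t‖ ≤ C * t ^ (δ - 1)) :
    ∃ F : ℂ → ℂ, DifferentiableOn ℂ F {s | 1 - δ < s.re} ∧
      ∀ s : ℂ, 1 < s.re → F s = (s - 1) * LSeries a s := by
  have hrem {s : ℂ} (hs : 1 - δ < s.re) :=
    mellinConvergent_and_differentiableAt_mellin_smoothedRemainder hφ hφ₀ hφ₁ hbound hs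
  refine ⟨fun s => ((s - 1) * mellin (smoothedRemainder a φ c) s + c) / mellin φ s,
    fun s (hs : 1 - δ < s.re) => ?_, fun s hs => ?_⟩
  · have hpos : 0 < s.re := by linarith
    exact ((((differentiableAt_id.sub_const 1).mul (hrem hs).2).add_const c).div
      (mellinConvergent_and_differentiableAt_mellin hφ hφ₁ hpos).2
      (hmellin s hpos)).differentiableWithinAt
  · have hs₁ : s - 1 ≠ 0 := sub_ne_zero.2 fun h => hs.ne' (by rw [h, Complex.one_re])
    have hφs := hmellin s (by linarith)
    dsimp only
    rw [mellin_smoothedRemainder hφ hφ₀ hφ₁ hs (ha s hs) (hrem (by linarith)).1]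
    field_simp
    ring

end

end MellinContinuation

section LocallyLipschitz

variable {α ι : Type*} [PseudoEMetricSpace α]

lemma locallyLipschitz_mul {f g : α → ℝ} (hf : LocallyLipschitz f) (hg : LocallyLipschitz g) :
    LocallyLipschitz fun x => f x * g x :=
  (contDiff_mul (𝕜 := ℝ) (n := 1)).locallyLipschitz.comp (hf.prodMk hg)

lemma locallyLipschitz_finset_prod {f : ι → α → ℝ} (s : Finset ι)
    (hf : ∀ i, LocallyLipschitz (f i)) : LocallyLipschitz fun x => ∏ i ∈ s, f i x := by
  classical
  induction s using Finset.induction_on with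
  | empty => exact LocallyLipschitz.const 1
  | insert i s hi ih =>
    simp only [Finset.prod_insert hi]
    exact locallyLipschitz_mul (hf i) ih

end LocallyLipschitz

section Tent

/-- The tent function supported on `[-1, 1]`. Its integer translates form a Lipschitz partition of
unity on the real line. -/
def tent (y : ℝ) : ℝ := max 0 (1 - |y|)

lemma tent_nonneg (y : ℝ) : 0 ≤ tent y := le_max_left _ _

lemma locallyLipschitz_tent : LocallyLipschitz tent := by
  have hsub : ContDiff ℝ 1 fun y : ℝ => 1 - y := by fun_prop
  exact (LocallyLipschitz.const 0).max
    (hsub.locallyLipschitz.comp (lipschitzWith_one_norm (E := ℝ)).locallyLipschitz)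

lemma abs_lt_one_of_tent_ne_zero {y : ℝ} (h : tent y ≠ 0) : |y| < 1 := by
  contrapose! h
  exact max_eq_left (by linarith)

lemma sum_pair_tent_intCast_add (y : ℝ) :
    ∑ k ∈ ({-⌊y⌋ - 1, -⌊y⌋} : Finset ℤ), tent (k + y) = 1 := by
  have hle := Int.floor_le y
  have hlt := Int.lt_floor_add_one y
  rw [Finset.sum_pair (by lia)]
  unfold tent
  push_cast
  rw [abs_of_nonpos (by linarith : -(⌊y⌋ : ℝ) - 1 + y ≤ 0),
    abs_of_nonneg (by linarith : 0 ≤ -(⌊y⌋ : ℝ) + y), max_eq_right (by linarith),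
    max_eq_right (by linarith)]
  ring

lemma mem_pair_of_tent_intCast_add_ne_zero {y : ℝ} {k : ℤ} (h : tent (k + y) ≠ 0) :
    k ∈ ({-⌊y⌋ - 1, -⌊y⌋} : Finset ℤ) := by
  obtain ⟨hlower, hupper⟩ := abs_lt.1 (abs_lt_one_of_tent_ne_zero h)
  have hlt : -⌊y⌋ - 2 < k := by
    rify
    linarith [Int.lt_floor_add_one y]
  have hgt : k < -⌊y⌋ + 1 := by
    rify
    linarith [Int.floor_le y]
  simp only [Finset.mem_insert, Finset.mem_singleton]
  lia

lemma tsum_ofReal_prod_tent {ι : Type*} [Fintype ι] (y : ι → ℝ) :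
    ∑' k : ι → ℤ, ENNReal.ofReal (∏ i, tent (k i + y i)) = 1 := by
  classical
  let S : ι → Finset ℤ := fun i => {-⌊y i⌋ - 1, -⌊y i⌋}
  have hsupp : ∀ k ∉ Fintype.piFinset S, ENNReal.ofReal (∏ i, tent (k i + y i)) = 0 := by
    intro k hk
    simp only [Fintype.mem_piFinset, not_forall] at hk
    obtain ⟨i, hi⟩ := hk
    rw [Finset.prod_eq_zero (Finset.mem_univ i)
      (not_not.1 (mt mem_pair_of_tent_intCast_add_ne_zero hi)), ENNReal.ofReal_zero]
  rw [tsum_eq_sum hsupp,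
    ← ENNReal.ofReal_sum_of_nonneg fun _ _ => Finset.prod_nonneg fun _ _ => tent_nonneg _,
    ← Finset.prod_univ_sum S fun i k => tent (k + y i)]
  simp only [S, sum_pair_tent_intCast_add, Finset.prod_const_one, ENNReal.ofReal_one]

end Tent

section UnitWeight

open NumberField NumberField.Units NumberField.Units.dirichletUnitTheorem
  NumberField.mixedEmbedding Module

variable (L : Type*) [Field L] [NumberField L]

open Classical in
/-- The logarithms of a system of fundamental units, as a basis of the logarithmic space. -/
noncomputable def logFundSystem : Basis (Fin (rank L)) ℝ (logSpace L) :=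
  (basisUnitLattice L).ofZLatticeBasis ℝ _

/-- A weight on the logarithmic space whose translates by the unit lattice form a partition of
unity, so that summing it over all generators of a principal ideal counts that ideal. -/
noncomputable def unitWeight (y : logSpace L) : ℝ := ∏ i, tent ((logFundSystem L).repr y i)

lemma unitWeight_nonneg (y : logSpace L) : 0 ≤ unitWeight L y :=
  Finset.prod_nonneg fun _ _ => tent_nonneg _

open Classical in
lemma locallyLipschitz_unitWeight : LocallyLipschitz (unitWeight L) := by
  refine locallyLipschitz_finset_prod _ fun i => locallyLipschitz_tent.comp ?_
  exact ((logFundSystem L).coord i).toContinuousLinearMap.lipschitz.locallyLipschitz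

open Classical in
lemma norm_le_of_unitWeight_ne_zero {y : logSpace L} (hy : unitWeight L y ≠ 0) :
    ‖y‖ ≤ ∑ i, ‖logFundSystem L i‖ := by
  conv_lhs => rw [← (logFundSystem L).sum_repr y]
  refine (norm_sum_le _ _).trans (Finset.sum_le_sum fun i hi => ?_)
  rw [_root_.norm_smul]
  exact mul_le_of_le_one_left (norm_nonneg _)
    (abs_lt_one_of_tent_ne_zero (Finset.prod_ne_zero_iff.1 hy i hi)).le

lemma unitWeight_logMap_mul_prod_fundSystem_smul {x : mixedSpace L}
    (hx : mixedEmbedding.norm x ≠ 0) (z : torsion L) (k : Fin (rank L) → ℤ) :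
    unitWeight L (logMap (((z : (𝓞 L)ˣ) * ∏ i, fundSystem L i ^ k i) • x)) =
      ∏ i, tent (k i + (logFundSystem L).repr (logMap x) i) := by
  have hlog : logEmbedding L (Additive.ofMul ((z : (𝓞 L)ˣ) * ∏ i, fundSystem L i ^ k i)) =
      ∑ i, (k i : ℝ) • logFundSystem L i := by
    rw [ofMul_mul, map_add, logEmbedding_eq_zero_iff.2 z.2, zero_add, ofMul_prod, map_sum]
    refine Finset.sum_congr rfl fun i _ => ?_
    rw [ofMul_zpow, map_zsmul, logEmbedding_fundSystem, logFundSystem,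
      Basis.ofZLatticeBasis_apply, Int.cast_smul_eq_zsmul]
  refine Finset.prod_congr rfl fun i _ => ?_
  rw [logMap_unit_smul _ hx, hlog, map_add, Finsupp.add_apply, Basis.repr_sum_self]

lemma tsum_unitWeight_logMap_units_smul {x : mixedSpace L} (hx : mixedEmbedding.norm x ≠ 0) :
    ∑' u : (𝓞 L)ˣ, ENNReal.ofReal (unitWeight L (logMap (u • x))) = torsionOrder L := by
  let e : torsion L × (Fin (rank L) → ℤ) → (𝓞 L)ˣ := fun p => p.1 * ∏ i, fundSystem L i ^ p.2 i
  have he : Function.Bijective e := (Function.bijective_iff_existsUnique e).2 fun u => by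
    simpa only [eq_comm] using exist_unique_eq_mul_prod L u
  rw [← (Equiv.ofBijective e he).tsum_eq, ENNReal.tsum_prod']
  simp only [Equiv.ofBijective_apply, e, unitWeight_logMap_mul_prod_fundSystem_smul L hx,
    tsum_ofReal_prod_tent]
  rw [ENNReal.tsum_const, mul_one, ENat.card_eq_coe_natCard]
  simp [torsionOrder]

variable {L}

lemma log_norm_eq_sum_mult_mul_log_normAtPlace {x : mixedSpace L}
    (hx : mixedEmbedding.norm x ≠ 0) :
    log (mixedEmbedding.norm x) =
      ∑ w : InfinitePlace L, (w.mult : ℝ) * log (normAtPlace w x) := by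
  rw [mixedEmbedding.norm_apply,
    log_prod fun w _ => pow_ne_zero _ (mixedEmbedding.norm_ne_zero_iff.1 hx w)]
  simp only [log_pow]

open Classical in
lemma abs_log_normAtPlace_sub_le {x : mixedSpace L} (hx : mixedEmbedding.norm x ≠ 0)
    (w : InfinitePlace L) :
    |log (normAtPlace w x) - log (mixedEmbedding.norm x) * (finrank ℚ L : ℝ)⁻¹| ≤
      Fintype.card (InfinitePlace L) * ‖logMap x‖ := by
  set d : InfinitePlace L → ℝ := fun w =>
    w.mult * (log (normAtPlace w x) - log (mixedEmbedding.norm x) * (finrank ℚ L : ℝ)⁻¹) with hd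
  have hne : ∀ w, w ≠ w₀ → |d w| ≤ ‖logMap x‖ := fun w hw => norm_le_pi_norm (logMap x) ⟨w, hw⟩
  have hsum : ∑ w, d w = 0 := by
    simp only [hd, mul_sub]
    rw [Finset.sum_sub_distrib, ← log_norm_eq_sum_mult_mul_log_normAtPlace hx, ← Finset.sum_mul,
      ← Nat.cast_sum, InfinitePlace.sum_mult_eq, mul_left_comm,
      mul_inv_cancel₀ (Nat.cast_ne_zero.2 finrank_pos.ne'), mul_one, sub_self]
  have hw₀ : |d w₀| ≤ Fintype.card (InfinitePlace L) * ‖logMap x‖ := by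
    rw [← Finset.add_sum_erase _ _ (Finset.mem_univ w₀)] at hsum
    calc |d w₀| ≤ ∑ w ∈ Finset.univ.erase w₀, |d w| := by
          rw [eq_neg_of_add_eq_zero_left hsum, abs_neg]
          exact Finset.abs_sum_le_sum_abs _ _
      _ ≤ (Finset.univ.erase w₀).card • ‖logMap x‖ :=
          Finset.sum_le_card_nsmul _ _ _ fun w hw => hne w (Finset.ne_of_mem_erase hw)
      _ ≤ Fintype.card (InfinitePlace L) * ‖logMap x‖ := by
          rw [nsmul_eq_mul]
          gcongr
          exact Finset.card_le_univ _
  have hmult : |log (normAtPlace w x) - log (mixedEmbedding.norm x) * (finrank ℚ L : ℝ)⁻¹| ≤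
      |d w| := by
    rw [abs_mul, Nat.abs_cast]
    exact le_mul_of_one_le_left (abs_nonneg _) (Nat.one_le_cast.2 w.mult_pos)
  refine hmult.trans ?_
  by_cases hw : w = w₀
  · rwa [hw]
  · exact (hne w hw).trans (le_mul_of_one_le_left (norm_nonneg _)
      (Nat.one_le_cast.2 Fintype.card_pos))

end UnitWeight

section GeneratorWeight

open NumberField NumberField.mixedEmbedding NumberField.Units.dirichletUnitTheorem Module

variable (L : Type*) [Field L] [NumberField L]

/-- The Lipschitz weight on the Minkowski space whose sum over the generators of a principal ideal
is a multiple of the triangular bump at the norm of that ideal. -/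
noncomputable def generatorWeight (x : mixedSpace L) : ℝ :=
  unitWeight L (logMap x) * triangleBump (mixedEmbedding.norm x)

variable {L}

lemma generatorWeight_nonneg (x : mixedSpace L) : 0 ≤ generatorWeight L x :=
  mul_nonneg (unitWeight_nonneg L _) (triangleBump_nonneg _)

lemma generatorWeight_eq_zero_of_norm_le {x : mixedSpace L}
    (hx : mixedEmbedding.norm x ≤ 1 / 4) : generatorWeight L x = 0 := by
  rw [generatorWeight, triangleBump_eq_zero_of_le hx, mul_zero]

open Classical in
lemma normAtPlace_le_norm (w : InfinitePlace L) (x : mixedSpace L) : normAtPlace w x ≤ ‖x‖ := by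
  rw [norm_eq_sup'_normAtPlace]
  exact Finset.le_sup' (normAtPlace · x) (Finset.mem_univ w)

open Classical in
lemma lipschitzWith_normAtPlace :
    LipschitzWith 1 fun (x : mixedSpace L) (w : InfinitePlace L) => normAtPlace w x := by
  refine LipschitzWith.of_dist_le_mul fun x y => ?_
  rw [NNReal.coe_one, one_mul, dist_pi_le_iff dist_nonneg, dist_eq_norm]
  intro w
  rw [Real.dist_eq, abs_sub_le_iff, sub_le_iff_le_add, sub_le_iff_le_add]
  constructor
  · calc normAtPlace w x = normAtPlace w (x - y + y) := by rw [sub_add_cancel]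
      _ ≤ ‖x - y‖ + normAtPlace w y := (normAtPlace_add_le w _ _).trans
          (add_le_add_left (normAtPlace_le_norm w _) _)
  · calc normAtPlace w y = normAtPlace w (y - x + x) := by rw [sub_add_cancel]
      _ ≤ ‖x - y‖ + normAtPlace w x := by
          rw [norm_sub_rev]
          exact (normAtPlace_add_le w _ _).trans (add_le_add_left (normAtPlace_le_norm w _) _)

lemma exists_generatorWeight_eq_comp_log_normAtPlace :
    ∃ h : (InfinitePlace L → ℝ) → ℝ, LocallyLipschitz h ∧ ∀ x, mixedEmbedding.norm x ≠ 0 →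
      generatorWeight L x = h fun w => log (normAtPlace w x) := by
  classical
  let logNorm : (InfinitePlace L → ℝ) → ℝ := fun v => ∑ w, (w.mult : ℝ) * v w
  let toLogSpace : (InfinitePlace L → ℝ) → logSpace L := fun v w =>
    w.1.mult * (v w.1 - logNorm v * (finrank ℚ L : ℝ)⁻¹)
  have hlogNorm : ContDiff ℝ 1 logNorm := by fun_prop
  have hexp : ContDiff ℝ 1 fun v => exp (logNorm v) := by fun_prop
  have htoLogSpace : ContDiff ℝ 1 toLogSpace := by fun_prop
  refine ⟨fun v => unitWeight L (toLogSpace v) * triangleBump (exp (logNorm v)),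
    locallyLipschitz_mul ((locallyLipschitz_unitWeight L).comp htoLogSpace.locallyLipschitz)
      (locallyLipschitz_triangleBump.comp hexp.locallyLipschitz), fun x hx => ?_⟩
  have hlog : logNorm (fun w => log (normAtPlace w x)) = log (mixedEmbedding.norm x) :=
    (log_norm_eq_sum_mult_mul_log_normAtPlace hx).symm
  have hpos : 0 < mixedEmbedding.norm x := (mixedEmbedding.norm_nonneg x).lt_of_ne' hx
  simp only [toLogSpace, hlog, exp_log hpos]
  rfl

open Classical in
lemma locallyLipschitz_generatorWeight : LocallyLipschitz (generatorWeight L) := by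
  intro x₀
  by_cases hx₀ : mixedEmbedding.norm x₀ = 0
  · have hnhds : {x : mixedSpace L | mixedEmbedding.norm x < 1 / 4} ∈ 𝓝 x₀ :=
      (mixedEmbedding.continuous_norm L).continuousAt.eventually_lt_const
        (by rw [hx₀]; norm_num)
    refine ⟨0, _, hnhds, fun x hx y hy => ?_⟩
    rw [generatorWeight_eq_zero_of_norm_le (Set.mem_ofPred.1 hx).le,
      generatorWeight_eq_zero_of_norm_le (Set.mem_ofPred.1 hy).le, edist_self]
    exact zero_le
  · obtain ⟨h, hh, hval⟩ := exists_generatorWeight_eq_comp_log_normAtPlace (L := L)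
    let places : mixedSpace L → InfinitePlace L → ℝ := fun x w => normAtPlace w x
    let logs : (InfinitePlace L → ℝ) → InfinitePlace L → ℝ := fun v w => log (v w)
    have hplaces : LipschitzWith 1 places := lipschitzWith_normAtPlace
    have hlogs : ContDiffAt ℝ 1 logs (places x₀) := contDiffAt_pi.2 fun w =>
      (contDiffAt_apply ℝ ℝ w (places x₀)).log (mixedEmbedding.norm_ne_zero_iff.1 hx₀ w)
    obtain ⟨K, s, hs, hK⟩ := hlogs.exists_lipschitzOnWith
    obtain ⟨K', s', hs', hK'⟩ := hh (logs (places x₀))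
    have hne : ∀ᶠ x in 𝓝 x₀, mixedEmbedding.norm x ≠ 0 :=
      (mixedEmbedding.continuous_norm L).continuousAt.eventually_ne hx₀
    have hlip : LipschitzOnWith (K' * (K * 1)) (h ∘ logs ∘ places) (places ⁻¹' (s ∩ logs ⁻¹' s')) :=
      hK'.comp (hK.comp hplaces.lipschitzOnWith fun _ hx => hx.1) fun _ hx => hx.2
    refine ⟨K' * (K * 1), _, inter_mem hne (hplaces.continuous.continuousAt
      (inter_mem hs (hlogs.continuousAt hs'))), fun x hx y hy => ?_⟩
    rw [hval x hx.1, hval y hy.1]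
    exact hlip hx.2 hy.2

open Classical in
lemma hasCompactSupport_generatorWeight : HasCompactSupport (generatorWeight L) := by
  set B : ℝ := Fintype.card (InfinitePlace L) * ∑ i, ‖logFundSystem L i‖
  refine HasCompactSupport.of_support_subset_isCompact
    (isCompact_closedBall 0 (exp B)) fun x hx => ?_
  obtain ⟨hunit, hbump⟩ := mul_ne_zero_iff.1 hx
  have hnorm_gt : 1 / 4 < mixedEmbedding.norm x := by
    by_contra! h
    exact hbump (triangleBump_eq_zero_of_le h)
  have hnorm_lt : mixedEmbedding.norm x < 1 := by
    by_contra! h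
    exact hbump (triangleBump_eq_zero_of_ge h)
  have hx₀ : mixedEmbedding.norm x ≠ 0 := by linarith
  rw [mem_closedBall_zero_iff, norm_eq_sup'_normAtPlace]
  refine Finset.sup'_le _ _ fun w _ => ?_
  have hpos : 0 < normAtPlace w x :=
    (normAtPlace_nonneg w x).lt_of_ne' (mixedEmbedding.norm_ne_zero_iff.1 hx₀ w)
  rw [← log_le_iff_le_exp hpos]
  have hlog : log (mixedEmbedding.norm x) * (finrank ℚ L : ℝ)⁻¹ ≤ 0 :=
    mul_nonpos_of_nonpos_of_nonneg (log_nonpos (by linarith) hnorm_lt.le) (by positivity)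
  calc log (normAtPlace w x)
      ≤ log (normAtPlace w x) - log (mixedEmbedding.norm x) * (finrank ℚ L : ℝ)⁻¹ := by linarith
    _ ≤ Fintype.card (InfinitePlace L) * ‖logMap x‖ :=
        (le_abs_self _).trans (abs_log_normAtPlace_sub_le hx₀ w)
    _ ≤ B := mul_le_mul_of_nonneg_left (norm_le_of_unitWeight_ne_zero L hunit) (Nat.cast_nonneg _)

end GeneratorWeight

section IdealSum

open NumberField NumberField.Units NumberField.Units.dirichletUnitTheorem NumberField.mixedEmbedding
  Module Ideal
open scoped nonZeroDivisors

lemma tsum_eq_tsum_fiber {α β : Type*} (f : α → ENNReal) (g : α → β) :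
    ∑' a, f a = ∑' b, ∑' a : {a // g a = b}, f a := by
  rw [← (Equiv.sigmaFiberEquiv g).tsum_eq f, ENNReal.tsum_sigma']
  rfl

variable {L : Type*} [Field L] [NumberField L]

lemma mk0_eq_iff_exists_mul_eq_span {C : ClassGroup (𝓞 L)} {J : (Ideal (𝓞 L))⁰}
    (hJ : ClassGroup.mk0 J = C⁻¹) (I : (Ideal (𝓞 L))⁰) :
    ClassGroup.mk0 I = C ↔ ∃ α : 𝓞 L, (J * I : Ideal (𝓞 L)) = span {α} := by
  rw [eq_comm, ← inv_mul_eq_one, ← hJ, ← map_mul]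
  exact (ClassGroup.mk0_eq_one_iff (J * I).2).trans ⟨fun ⟨α, h⟩ => ⟨α, h⟩, fun ⟨α, h⟩ => ⟨α, h⟩⟩

lemma norm_mixedEmbedding_coe (α : 𝓞 L) :
    mixedEmbedding.norm (mixedEmbedding L (α : L)) = absNorm (span {α}) := by
  rw [mixedEmbedding.norm_eq_norm, absNorm_span_singleton, ← Algebra.coe_norm_int,
    Nat.cast_natAbs]
  push_cast
  rfl

lemma mem_span_latticeBasis_mk0 {J : (Ideal (𝓞 L))⁰} {x : mixedSpace L} :
    x ∈ Submodule.span ℤ (range (fractionalIdealLatticeBasis L (FractionalIdeal.mk0 L J))) ↔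
      ∃ α ∈ (J : Ideal (𝓞 L)), mixedEmbedding L (α : L) = x := by
  rw [mem_span_fractionalIdealLatticeBasis, FractionalIdeal.coe_mk0]
  constructor
  · rintro ⟨a, ha, rfl⟩
    obtain ⟨α, hα, rfl⟩ := (FractionalIdeal.mem_coeIdeal _).1 ha
    exact ⟨α, hα, rfl⟩
  · rintro ⟨α, hα, rfl⟩
    exact ⟨_, (FractionalIdeal.mem_coeIdeal _).2 ⟨α, hα, rfl⟩, rfl⟩

section Generators

variable {C : ClassGroup (𝓞 L)} {J : (Ideal (𝓞 L))⁰}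
  {A : {I : (Ideal (𝓞 L))⁰ // ClassGroup.mk0 I = C} → 𝓞 L}
  (hA : ∀ I, (J * I.1 : Ideal (𝓞 L)) = span {A I})

include hA

lemma generator_ne_zero (I) : A I ≠ 0 := fun h => by
  refine mul_ne_zero (nonZeroDivisors.coe_ne_zero J) (nonZeroDivisors.coe_ne_zero I.1) ?_
  rw [hA, h, span_singleton_zero, zero_eq_bot]

lemma span_unit_mul_generator (I) (u : (𝓞 L)ˣ) :
    span {(u : 𝓞 L) * A I} = (J * I.1 : Ideal (𝓞 L)) := by
  rw [hA, span_singleton_mul_left_unit u.isUnit]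

lemma unit_mul_generator_mem (I) (u : (𝓞 L)ˣ) : (u : 𝓞 L) * A I ∈ (J : Ideal (𝓞 L)) := by
  rw [← span_singleton_le_iff_mem, span_unit_mul_generator hA]
  exact Ideal.mul_le_left

lemma unit_mul_generator_injective :
    Function.Injective fun p : {I // ClassGroup.mk0 I = C} × (𝓞 L)ˣ =>
      (p.2 : 𝓞 L) * A p.1 := by
  rintro ⟨I, u⟩ ⟨I', u'⟩ (h : (u : 𝓞 L) * A I = u' * A I')
  have hideal : (J * I.1 : Ideal (𝓞 L)) = J * I'.1 := by
    rw [← span_unit_mul_generator hA I u, ← span_unit_mul_generator hA I' u', h]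
  obtain rfl : I = I' :=
    Subtype.ext (Subtype.ext (mul_left_cancel₀ (nonZeroDivisors.coe_ne_zero J) hideal))
  rw [Units.ext (mul_right_cancel₀ (generator_ne_zero hA I) h)]

lemma exists_unit_mul_generator_eq (hJ : ClassGroup.mk0 J = C⁻¹) {α : 𝓞 L}
    (hα : α ∈ (J : Ideal (𝓞 L))) (hα₀ : α ≠ 0) : ∃ I, ∃ u : (𝓞 L)ˣ, (u : 𝓞 L) * A I = α := by
  obtain ⟨I, hI⟩ := dvd_iff_le.2 ((span_singleton_le_iff_mem _).2 hα)
  have hI₀ : I ∈ (Ideal (𝓞 L))⁰ := by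
    rw [mem_nonZeroDivisors_iff_ne_zero]
    rintro rfl
    rw [mul_zero] at hI
    exact hα₀ (span_singleton_eq_bot.1 hI)
  let I' : {I : (Ideal (𝓞 L))⁰ // ClassGroup.mk0 I = C} :=
    ⟨⟨I, hI₀⟩, (mk0_eq_iff_exists_mul_eq_span hJ _).2 ⟨α, hI.symm⟩⟩
  have hspan : span {A I'} = span {α} := by rw [← hA I', hI]
  obtain ⟨u, hu⟩ := span_singleton_eq_span_singleton.1 hspan
  exact ⟨I', u, by rw [mul_comm, hu]⟩

lemma tsum_idealLattice_eq_tsum_unit_smul (hJ : ClassGroup.mk0 J = C⁻¹)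
    {f : mixedSpace L → ENNReal} (hf : f 0 = 0) :
    ∑' l : Submodule.span ℤ (range (fractionalIdealLatticeBasis L (FractionalIdeal.mk0 L J))),
      f l = ∑' I, ∑' u : (𝓞 L)ˣ, f (u • mixedEmbedding L (A I : L)) := by
  let e (p : {I // ClassGroup.mk0 I = C} × (𝓞 L)ˣ) :
      Submodule.span ℤ (range (fractionalIdealLatticeBasis L (FractionalIdeal.mk0 L J))) :=
    ⟨mixedEmbedding L ((p.2 * A p.1 : 𝓞 L) : L), mem_span_latticeBasis_mk0.2
      ⟨_, unit_mul_generator_mem hA p.1 p.2, rfl⟩⟩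
  have he : Function.Injective e := fun p q hpq => unit_mul_generator_injective hA
    (RingOfIntegers.ext (mixedEmbedding_injective L (congrArg Subtype.val hpq)))
  have hsupp : Function.support (fun l : Submodule.span ℤ (range
      (fractionalIdealLatticeBasis L (FractionalIdeal.mk0 L J))) => f l) ⊆ range e := by
    rintro ⟨l, hl⟩ hne
    obtain ⟨α, hα, rfl⟩ := mem_span_latticeBasis_mk0.1 hl
    have hα₀ : α ≠ 0 := by
      rintro rfl
      exact hne (by simpa using hf)
    obtain ⟨I, u, rfl⟩ := exists_unit_mul_generator_eq hA hJ hα hα₀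
    exact ⟨(I, u), rfl⟩
  rw [← he.tsum_eq hsupp, ENNReal.tsum_prod']
  refine tsum_congr fun I => tsum_congr fun u => ?_
  rw [unitSMul_smul, ← map_mul]
  rfl

end Generators

lemma generatorWeight_smul_unit_smul {α : 𝓞 L} (hα : α ≠ 0) {r : ℝ} (hr : 0 < r) (u : (𝓞 L)ˣ) :
    generatorWeight L (r • u • mixedEmbedding L (α : L)) =
      unitWeight L (logMap (u • mixedEmbedding L (α : L))) *
        triangleBump (r ^ finrank ℚ L * absNorm (span {α})) := by
  have hnorm : mixedEmbedding.norm (u • mixedEmbedding L (α : L)) = absNorm (span {α}) := by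
    rw [norm_unit_smul, norm_mixedEmbedding_coe]
  have hne : mixedEmbedding.norm (u • mixedEmbedding L (α : L)) ≠ 0 := by
    rw [hnorm]
    exact natCast_absNorm_ne_zero (span_singleton_eq_bot.not.2 hα)
  rw [generatorWeight, logMap_real_smul hne hr.ne', mixedEmbedding.norm_smul, hnorm,
    abs_of_pos hr]

lemma tsum_generatorWeight_idealLattice {C : ClassGroup (𝓞 L)} {J : (Ideal (𝓞 L))⁰}
    (hJ : ClassGroup.mk0 J = C⁻¹) {r : ℝ} (hr : 0 < r) :
    ∑' l : Submodule.span ℤ (range (fractionalIdealLatticeBasis L (FractionalIdeal.mk0 L J))),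
      ENNReal.ofReal (generatorWeight L (r • (l : mixedSpace L))) =
    torsionOrder L * ∑' I : {I : (Ideal (𝓞 L))⁰ // ClassGroup.mk0 I = C},
      ENNReal.ofReal (triangleBump
        (r ^ finrank ℚ L * absNorm (J : Ideal (𝓞 L)) * absNorm (I.1 : Ideal (𝓞 L)))) := by
  choose A hA using fun I : {I // ClassGroup.mk0 I = C} =>
    (mk0_eq_iff_exists_mul_eq_span hJ I.1).1 I.2
  have hzero : ENNReal.ofReal (generatorWeight L (r • (0 : mixedSpace L))) = 0 := by
    rw [smul_zero, generatorWeight_eq_zero_of_norm_le (by rw [map_zero]; norm_num),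
      ENNReal.ofReal_zero]
  rw [tsum_idealLattice_eq_tsum_unit_smul hA hJ
    (f := fun x => ENNReal.ofReal (generatorWeight L (r • x))) hzero, ← ENNReal.tsum_mul_left]
  refine tsum_congr fun I => ?_
  have hαI : mixedEmbedding.norm (mixedEmbedding L (A I : L)) ≠ 0 := by
    rw [norm_mixedEmbedding_coe]
    exact natCast_absNorm_ne_zero (span_singleton_eq_bot.not.2 (generator_ne_zero hA I))
  simp only [generatorWeight_smul_unit_smul (generator_ne_zero hA I) hr,
    ENNReal.ofReal_mul (unitWeight_nonneg L _), ENNReal.tsum_mul_right,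
    tsum_unitWeight_logMap_units_smul L hαI, ← hA I, map_mul, Nat.cast_mul, mul_assoc]

lemma tsum_idealCount_eq_sum_classGroup (t : ℝ) :
    ∑' n : ℕ, ENNReal.ofReal (idealCount L n * triangleBump (t * n)) =
      ∑ C : ClassGroup (𝓞 L), ∑' I : {I : (Ideal (𝓞 L))⁰ // ClassGroup.mk0 I = C},
        ENNReal.ofReal (triangleBump (t * absNorm (I.1 : Ideal (𝓞 L)))) := by
  let f (I : Ideal (𝓞 L)) : ENNReal := ENNReal.ofReal (triangleBump (t * absNorm I))
  have hbot : f ⊥ = 0 := by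
    simp only [f, absNorm_bot, Nat.cast_zero, mul_zero]
    rw [triangleBump_eq_zero_of_le (by norm_num), ENNReal.ofReal_zero]
  have hsupp : Function.support f ⊆ range ((↑) : (Ideal (𝓞 L))⁰ → Ideal (𝓞 L)) := fun I hI =>
    ⟨⟨I, mem_nonZeroDivisors_iff_ne_zero.2 fun h => hI (h ▸ hbot)⟩, rfl⟩
  have hfiber (n : ℕ) : ∑' I : {I : Ideal (𝓞 L) // absNorm I = n}, f I =
      ENNReal.ofReal (idealCount L n * triangleBump (t * n)) := by
    have : Finite {I : Ideal (𝓞 L) // absNorm I = n} := finite_setOfPred_absNorm_eq n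
    simp only [f, fun I : {I : Ideal (𝓞 L) // absNorm I = n} => I.2]
    rw [ENNReal.tsum_const, ENat.card_eq_coe_natCard, ENNReal.ofReal_mul (Nat.cast_nonneg _),
      ENNReal.ofReal_natCast]
    rfl
  simp only [← hfiber]
  rw [← tsum_eq_tsum_fiber f absNorm, ← Subtype.val_injective.tsum_eq hsupp,
    tsum_eq_tsum_fiber _ ClassGroup.mk0, tsum_fintype]

open Classical in
lemma exists_abs_tsum_generatorWeight_idealLattice_sub_le (J : (Ideal (𝓞 L))⁰) {N : ℝ}
    (hN : 1 ≤ N) : ∃ c B : ℝ, ∀ t ∈ Ioc (0 : ℝ) 1,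
      (Summable fun l : Submodule.span ℤ
        (range (fractionalIdealLatticeBasis L (FractionalIdeal.mk0 L J))) =>
          generatorWeight L ((t / N) ^ (finrank ℚ L : ℝ)⁻¹ • (l : mixedSpace L))) ∧
      |∑' l : Submodule.span ℤ
        (range (fractionalIdealLatticeBasis L (FractionalIdeal.mk0 L J))),
          generatorWeight L ((t / N) ^ (finrank ℚ L : ℝ)⁻¹ • (l : mixedSpace L)) - c / t| ≤
        B * t ^ ((finrank ℚ L : ℝ)⁻¹ - 1) := by
  obtain ⟨c, B, hB, hbound⟩ := exists_abs_pow_finrank_mul_tsum_sub_le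
    (fractionalIdealLatticeBasis L (FractionalIdeal.mk0 L J)) locallyLipschitz_generatorWeight
    hasCompactSupport_generatorWeight
  refine ⟨c * N, B * N, fun t ⟨ht₀, ht₁⟩ => ?_⟩
  set n := finrank ℚ L
  set r : ℝ := (t / N) ^ (n : ℝ)⁻¹
  have hr₀ : 0 < r := by positivity
  have hrt : r ≤ t ^ (n : ℝ)⁻¹ :=
    rpow_le_rpow (by positivity) (div_le_self ht₀.le hN) (by positivity)
  have hr₁ : r ≤ 1 := hrt.trans (rpow_le_one ht₀.le ht₁ (by positivity))
  have hrn : r ^ n = t / N := rpow_inv_natCast_pow (by positivity) finrank_pos.ne'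
  obtain ⟨hsummable, hle⟩ := hbound r ⟨hr₀, hr₁⟩
  refine ⟨hsummable, ?_⟩
  set S : ℝ := ∑' l : Submodule.span ℤ
    (range (fractionalIdealLatticeBasis L (FractionalIdeal.mk0 L J))), generatorWeight L (r • l)
  rw [mixedEmbedding.finrank, hrn] at hle
  calc |S - c * N / t| = N / t * |t / N * S - c| := by
        rw [← abs_of_pos (show 0 < N / t by positivity), ← abs_mul]
        congr 1
        field_simp
    _ ≤ N / t * (B * t ^ (n : ℝ)⁻¹) := by
        gcongr
        exact hle.trans (mul_le_mul_of_nonneg_left hrt hB)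
    _ = B * N * t ^ ((n : ℝ)⁻¹ - 1) := by
        rw [rpow_sub_one ht₀.ne']
        field_simp

lemma exists_abs_tsum_class_sub_le (C : ClassGroup (𝓞 L)) :
    ∃ c B : ℝ, ∀ t ∈ Ioc (0 : ℝ) 1,
      ∑' I : {I : (Ideal (𝓞 L))⁰ // ClassGroup.mk0 I = C},
        ENNReal.ofReal (triangleBump (t * absNorm (I.1 : Ideal (𝓞 L)))) ≠ ⊤ ∧
      |(∑' I : {I : (Ideal (𝓞 L))⁰ // ClassGroup.mk0 I = C},
        ENNReal.ofReal (triangleBump (t * absNorm (I.1 : Ideal (𝓞 L))))).toReal - c / t| ≤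
          B * t ^ ((finrank ℚ L : ℝ)⁻¹ - 1) := by
  obtain ⟨J, hJ⟩ := ClassGroup.mk0_surjective C⁻¹
  set N : ℝ := (absNorm (J : Ideal (𝓞 L)) : ℝ)
  set T : ℝ := (torsionOrder L : ℝ)
  have hN : 1 ≤ N := Nat.one_le_cast.2
    (Nat.one_le_iff_ne_zero.2 (absNorm_ne_zero_of_nonZeroDivisors J))
  have hT : 0 < T := Nat.cast_pos.2 (torsionOrder_pos L)
  obtain ⟨c, B, hbound⟩ := exists_abs_tsum_generatorWeight_idealLattice_sub_le J hN
  refine ⟨c / T, B / T, fun t ht => ?_⟩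
  obtain ⟨hsummable, hle⟩ := hbound t ht
  obtain ⟨ht₀, -⟩ := ht
  set r : ℝ := (t / N) ^ (finrank ℚ L : ℝ)⁻¹
  have hr : 0 < r := by positivity
  have hrN : r ^ finrank ℚ L * N = t := by
    rw [rpow_inv_natCast_pow (by positivity) finrank_pos.ne', div_mul_cancel₀ _ (by positivity)]
  set S : ℝ := ∑' l : Submodule.span ℤ
    (range (fractionalIdealLatticeBasis L (FractionalIdeal.mk0 L J))), generatorWeight L (r • l)
  have hsum : ∑' I : {I : (Ideal (𝓞 L))⁰ // ClassGroup.mk0 I = C},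
      ENNReal.ofReal (triangleBump (t * absNorm (I.1 : Ideal (𝓞 L)))) = ENNReal.ofReal (S / T) := by
    rw [ENNReal.ofReal_div_of_pos hT, ENNReal.ofReal_natCast, ENNReal.eq_div_iff
      (Nat.cast_ne_zero.2 (torsionOrder_ne_zero L)) (ENNReal.natCast_ne_top _),
      ENNReal.ofReal_tsum_of_nonneg (fun _ => generatorWeight_nonneg _) hsummable,
      tsum_generatorWeight_idealLattice hJ hr, hrN]
  refine ⟨hsum ▸ ENNReal.ofReal_ne_top, ?_⟩
  rw [hsum, ENNReal.toReal_ofReal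
    (div_nonneg (tsum_nonneg fun _ => generatorWeight_nonneg _) hT.le), div_right_comm,
    ← sub_div, abs_div, abs_of_pos hT, div_mul_eq_mul_div]
  gcongr

lemma exists_abs_tsum_idealCount_mul_triangleBump_sub_le :
    ∃ c B : ℝ, ∀ t ∈ Ioc (0 : ℝ) 1,
      |∑' n : ℕ, idealCount L n * triangleBump (n * t) - c / t| ≤
        B * t ^ ((finrank ℚ L : ℝ)⁻¹ - 1) := by
  choose c B h using exists_abs_tsum_class_sub_le (L := L)
  refine ⟨∑ C, c C, ∑ C, B C, fun t ht => ?_⟩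
  have hsum : ∑' n : ℕ, idealCount L n * triangleBump (n * t) =
      ∑ C : ClassGroup (𝓞 L), (∑' I : {I : (Ideal (𝓞 L))⁰ // ClassGroup.mk0 I = C},
        ENNReal.ofReal (triangleBump (t * absNorm (I.1 : Ideal (𝓞 L))))).toReal := by
    rw [← ENNReal.toReal_sum fun C _ => (h C t ht).1, ← tsum_idealCount_eq_sum_classGroup,
      ENNReal.tsum_toReal_eq fun _ => ENNReal.ofReal_ne_top]
    refine tsum_congr fun n => ?_
    rw [ENNReal.toReal_ofReal (mul_nonneg (Nat.cast_nonneg _) (triangleBump_nonneg _)), mul_comm t]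
  rw [hsum, Finset.sum_div, ← Finset.sum_sub_distrib, Finset.sum_mul]
  exact (Finset.abs_sum_le_sum_abs _ _).trans (Finset.sum_le_sum fun C _ => (h C t ht).2)

variable (L) in
lemma exists_differentiableOn_eq_sub_one_mul_dedekindZeta :
    ∃ η : ℝ, 0 < η ∧ ∃ F : ℂ → ℂ, DifferentiableOn ℂ F {s | 1 - η < s.re} ∧
      ∀ s, 1 < s.re → F s = (s - 1) * dedekindZeta L s := by
  obtain ⟨c, B, hbound⟩ := exists_abs_tsum_idealCount_mul_triangleBump_sub_le (L := L)
  have hn : (1 : ℝ) ≤ finrank ℚ L := Nat.one_le_cast.2 finrank_pos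
  refine ⟨(finrank ℚ L : ℝ)⁻¹, by positivity, ?_⟩
  rw [dedekindZeta_eq_LSeries_idealCount]
  refine exists_differentiableOn_eq_sub_one_mul_LSeries (φ := fun t => (triangleBump t : ℂ))
    (c := c) (C := B) (Complex.continuous_ofReal.comp locallyLipschitz_triangleBump.continuous)
    (by rw [triangleBump_eq_zero_of_le (by norm_num), Complex.ofReal_zero])
    (fun t ht => by rw [triangleBump_eq_zero_of_ge ht, Complex.ofReal_zero])
    (fun s hs => mellin_triangleBump_ne_zero hs) (fun s hs => lseriesSummable_idealCount hs)
    (by positivity) (inv_le_one_of_one_le₀ hn) fun t ht => ?_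
  refine le_of_eq_of_le ?_ (hbound t ht)
  rw [← norm_eq_abs, ← Complex.norm_real]
  push_cast
  rfl

end IdealSum

section PrimeIdeals

open NumberField Ideal

variable {L : Type*} [Field L] [NumberField L]

lemma ne_zero_of_eq_sub_one_mul_dedekindZeta {F : ℂ → ℂ} (hF : ContinuousAt F 1)
    (hζ : ∀ s, 1 < s.re → F s = (s - 1) * dedekindZeta L s) : F 1 ≠ 0 := by
  have hcast : Tendsto (fun s : ℝ => (s : ℂ)) (𝓝[>] 1) (𝓝 1) :=
    (Complex.continuous_ofReal.tendsto' 1 1 Complex.ofReal_one).mono_left nhdsWithin_le_nhds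
  have hres : Tendsto (fun s : ℝ => F s) (𝓝[>] 1) (𝓝 (dedekindZeta_residue L : ℂ)) :=
    (tendsto_sub_one_mul_dedekindZeta_nhdsGT L).congr' <| by
      filter_upwards [self_mem_nhdsWithin] with s hs
      rw [hζ s (by simpa using hs)]
  rw [tendsto_nhds_unique (hF.tendsto.comp hcast) hres]
  exact Complex.ofReal_ne_zero.2 (dedekindZeta_residue_ne_zero L)

lemma deriv_eq_of_eq_sub_one_mul_dedekindZeta {F : ℂ → ℂ}
    (hζ : ∀ s, 1 < s.re → F s = (s - 1) * dedekindZeta L s) {s : ℂ} (hs : 1 < s.re) :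
    deriv F s = F s * (1 / (s - 1) - LSeries (fun n => (idealVonMangoldt L n : ℂ)) s) := by
  have hs₁ : s - 1 ≠ 0 := sub_ne_zero.2 fun h => by simp [h] at hs
  have heq : F =ᶠ[𝓝 s] fun z => (z - 1) * dedekindZeta L z :=
    eventually_of_mem ((isOpen_lt continuous_const Complex.continuous_re).mem_nhds hs) hζ
  have hderiv := ((hasDerivAt_id' s).sub_const 1).fun_mul (hasDerivAt_dedekindZeta (L := L) hs)
  rw [heq.deriv_eq, hderiv.deriv, hζ s hs]
  field_simp
  ring

variable (L) in
lemma exists_isZetaRegularization_idealVonMangoldt :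
    ∃ F, IsZetaRegularization (idealVonMangoldt L) F := by
  obtain ⟨η, hη, F, hF, hζ⟩ := exists_differentiableOn_eq_sub_one_mul_dedekindZeta L
  have han := hF.analyticOnNhd (isOpen_lt continuous_const Complex.continuous_re)
  have hsub : {s : ℂ | 1 ≤ s.re} ⊆ {s | 1 - η < s.re} := fun s (hs : 1 ≤ s.re) =>
    (sub_lt_self 1 hη).trans_le hs
  exact ⟨F, {
    nonneg := idealVonMangoldt_nonneg
    lseriesSummable := fun s hs => lseriesSummable_idealVonMangoldt hs
    analyticOnNhd := han.mono hsub
    one_ne_zero := ne_zero_of_eq_sub_one_mul_dedekindZeta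
      (han 1 (hsub Complex.one_re.ge)).continuousAt hζ
    deriv_eq := fun s hs => deriv_eq_of_eq_sub_one_mul_dedekindZeta hζ hs }⟩

lemma exists_forall_sum_vonMangoldt_div_lt {c : ℝ} (hc : 0 < c) :
    ∃ N : ℕ, ∀ s : Finset ℕ, (∀ n ∈ s, N ≤ n ∧ ¬ n.Prime) →
      ∑ n ∈ s, ArithmeticFunction.vonMangoldt n / n < c := by
  obtain ⟨S, hS⟩ := summable_iff_vanishing_norm.1
    (ArithmeticFunction.vonMangoldt.summable_residueClass_non_primes_div (q := 1) 0) c hc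
  refine ⟨S.sup id + 1, fun s hs => ?_⟩
  have hdisj : Disjoint s S := Finset.disjoint_left.2 fun n hn hnS =>
    (Nat.lt_of_succ_le (hs n hn).1).not_ge (Finset.le_sup (f := id) hnS)
  have hmem (n : ℕ) : n ∈ {n : ℕ | (n : ZMod 1) = 0} := Subsingleton.elim (α := ZMod 1) _ _
  refine lt_of_eq_of_lt (Finset.sum_congr rfl fun n hn => ?_)
    ((le_abs_self _).trans_lt (hS s hdisj))
  rw [if_neg (hs n hn).2, ArithmeticFunction.vonMangoldt.residueClass, indicator_of_mem (hmem n)]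

variable (L) in
lemma eventually_exists_prime_idealVonMangoldt_ne_zero {ε : ℝ} (hε : 0 < ε) :
    ∀ᶠ X : ℝ in atTop, ∃ p ∈ Finset.Icc ⌈X⌉₊ ⌊(1 + ε) * X⌋₊,
      p.Prime ∧ idealVonMangoldt L p ≠ 0 := by
  obtain ⟨F, hF⟩ := exists_isZetaRegularization_idealVonMangoldt L
  obtain ⟨c, hc, hsum⟩ := hF.isWienerIkehara.exists_eventually_le_sum_Icc hε
  set d : ℝ := (Module.finrank ℚ L : ℝ)
  have hd : 0 < d := Nat.cast_pos.2 Module.finrank_pos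
  obtain ⟨N, hN⟩ := exists_forall_sum_vonMangoldt_div_lt (div_pos hc hd)
  filter_upwards [hsum, eventually_ge_atTop (N : ℝ)] with X hX hNX
  by_contra! hzero
  set s := Finset.Icc ⌈X⌉₊ ⌊(1 + ε) * X⌋₊
  have hle : ∑ n ∈ s, idealVonMangoldt L n / n ≤
      d * ∑ n ∈ s with ¬ n.Prime, ArithmeticFunction.vonMangoldt n / n := by
    rw [Finset.sum_filter, Finset.mul_sum]
    refine Finset.sum_le_sum fun n hn => ?_
    split_ifs with hp
    · rw [hzero n hn hp, zero_div, mul_zero]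
    · rw [mul_div_assoc']
      gcongr
      exact idealVonMangoldt_le n
  have hsmall : ∑ n ∈ s with ¬ n.Prime, ArithmeticFunction.vonMangoldt n / n < c / d :=
    hN _ fun n hn => by
      rw [Finset.mem_filter, Finset.mem_Icc, Nat.ceil_le] at hn
      exact ⟨Nat.cast_le.1 (hNX.trans hn.1.1), hn.2⟩
  rw [lt_div_iff₀' hd] at hsmall
  exact (hX.trans hle).not_gt hsmall

lemma exists_absNorm_eq_of_idealVonMangoldt_ne_zero {p : ℕ} (hp : p.Prime)
    (h : idealVonMangoldt L p ≠ 0) : ∃ Q : Ideal (𝓞 L), Q.IsPrime ∧ Q ≠ ⊥ ∧ absNorm Q = p := by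
  obtain ⟨⟨Q, k⟩, hQk, -⟩ := Finset.exists_ne_zero_of_sum_ne_zero h
  obtain ⟨hQ, hQ₀, hpow⟩ := (Set.Finite.mem_toFinset _).1 hQk
  have hdvd : absNorm Q ∣ p := hpow ▸ dvd_pow_self _ k.succ_ne_zero
  exact ⟨Q, hQ, hQ₀, ((Nat.dvd_prime hp).1 hdvd).resolve_left (absNorm_eq_one_iff.not.2 hQ.ne_top)⟩

lemma absNorm_under_eq_of_prime (K : Type*) [Field K] [NumberField K] [Algebra K L]
    {Q : Ideal (𝓞 L)} (hQ : Q.IsPrime) (hQ₀ : Q ≠ ⊥) (hp : (absNorm Q).Prime) :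
    absNorm (Q.under (𝓞 K)) = absNorm Q := by
  have hpow := absNorm_eq_pow_inertiaDeg'_of_liesOver Q (Q.under (𝓞 K)) inferInstance
    (under_ne_bot _ hQ₀)
  have hdeg : inertiaDeg' (Q.under (𝓞 K)) Q ≠ 0 := fun h =>
    absNorm_eq_one_iff.not.2 hQ.ne_top (by rw [hpow, h, pow_zero])
  exact ((Nat.dvd_prime hp).1 (hpow ▸ dvd_pow_self _ hdeg)).resolve_left
    (absNorm_eq_one_iff.not.2 (IsPrime.ne_top inferInstance))

lemma natCast_absNorm_eq_one_of_isPrimitiveRoot {m : ℕ} [NeZero m] {ζ : L}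
    (hζ : IsPrimitiveRoot ζ m) {Q : Ideal (𝓞 L)} (hQ : Q.IsPrime) (hQ₀ : Q ≠ ⊥)
    (hcop : (absNorm Q).Coprime (Units.torsionOrder L)) : (absNorm Q : ZMod m) = 1 := by
  have hdvd : m ∣ absNorm Q - 1 := (Units.dvd_torsionOrder_of_isPrimitiveRoot hζ).trans
    (torsionOrder_dvd_absNorm_sub_one hQ₀ hQ hcop)
  have hcast := (ZMod.natCast_eq_zero_iff _ _).2 hdvd
  rwa [Nat.cast_sub (one_le_two.trans (two_le_absNorm hQ hQ₀)), Nat.cast_one,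
    sub_eq_zero] at hcast

end PrimeIdeals

/- The witness is the prime below a degree-one prime of `K(ζ_m)`: its norm is congruent to `1`
modulo `m`, so a single prime ideal serves all characters of modulus `m`. -/
theorem stmt6_general (K : Type*) [Field K] [NumberField K] (m : ℕ) (hm : 0 < m) :
    ∀ ε : ℝ, 0 < ε → ∃ X₀ : ℝ, ∀ X : ℝ, X₀ ≤ X →
      ∃ P : Ideal (𝓞 K), P.IsPrime ∧ P ≠ ⊥ ∧ (Ideal.absNorm P).Prime ∧
        (Ideal.absNorm P : ZMod m) = 1 ∧
        X ≤ (Ideal.absNorm P : ℝ) ∧ (Ideal.absNorm P : ℝ) ≤ (1 + ε) * X := by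
  intro ε hε
  have : NeZero m := ⟨hm.ne'⟩
  let L := CyclotomicField m K
  refine eventually_atTop.1 ?_
  filter_upwards [eventually_exists_prime_idealVonMangoldt_ne_zero L hε,
    eventually_gt_atTop (Units.torsionOrder L : ℝ)] with X ⟨p, hpX, hp, hne⟩ hX
  have hX₀ : 0 ≤ X := (Nat.cast_nonneg _).trans hX.le
  rw [Finset.mem_Icc, Nat.ceil_le, Nat.le_floor_iff (by positivity)] at hpX
  obtain ⟨Q, hQ, hQ₀, rfl⟩ := exists_absNorm_eq_of_idealVonMangoldt_ne_zero hp hne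
  have hcop : (Ideal.absNorm Q).Coprime (Units.torsionOrder L) := hp.coprime_iff_not_dvd.2 fun h =>
    (Nat.le_of_dvd (Units.torsionOrder_pos L) h).not_gt (Nat.cast_lt.1 (hX.trans_le hpX.1))
  have hmod : (Ideal.absNorm Q : ZMod m) = 1 := natCast_absNorm_eq_one_of_isPrimitiveRoot
    (IsCyclotomicExtension.zeta_spec m K L) hQ hQ₀ hcop
  have hP := absNorm_under_eq_of_prime K hQ hQ₀ hp
  refine ⟨Q.under (𝓞 K), inferInstance, Ideal.under_ne_bot _ hQ₀, ?_⟩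
  rw [hP]
  exact ⟨hp, hmod, hpX⟩

/-- The norms of the prime ideals `𝔭` of `𝓞_K` with `χ(N(𝔭)) = 1`, listed in non-decreasing
order, have consecutive ratios tending to `1`: for every `ε > 0` there is `X₀` such that every
real `X ≥ X₀` admits a prime ideal `𝔭` with `χ(N(𝔭)) = 1` and `X ≤ N(𝔭) ≤ (1+ε)X`. -/
theorem stmt6 (K : Type*) [Field K] [NumberField K] (m : ℕ) (hm : 0 < m)
    (χ : DirichletCharacter ℂ m) :
    ∀ ε : ℝ, 0 < ε → ∃ X₀ : ℝ, ∀ X : ℝ, X₀ ≤ X →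
      ∃ P : Ideal (𝓞 K), P.IsPrime ∧ P ≠ ⊥ ∧
        χ ((Ideal.absNorm P : ℕ) : ZMod m) = 1 ∧
        X ≤ (Ideal.absNorm P : ℝ) ∧ (Ideal.absNorm P : ℝ) ≤ (1 + ε) * X :=
  fun ε hε => (stmt6_general K m hm ε hε).imp fun _ h X hX => (h X hX).imp
    fun _ ⟨hP, hP₀, _, hmod, hX⟩ => ⟨hP, hP₀, by rw [hmod, map_one], hX⟩
end

section
/- Fix a real number r > 1. With p_j the j-th prime, ζ_i(r) = ∏_{k>i} (1 − p_k^{-r})^{-1}, j₁ the least positive integer j₀ such that ζ_j(r) ≥ 1 + p_j^{-r} for all integers j > j₀, ℓ = max(2, j₁), i₀ = j₁ if j₁ ≥ 2 and otherwise i₀ = the least positive integer i with ζ_i(r) < 1 + 3^{-r}, and m_i = (∏_{p ≤ p_i} p)/p_ℓ with χ_{m_i} the principal Dirichlet character modulo m_i: for every integer i ≥ i₀, the closure of σ_{r,ℚ,χ_{m_i}}(ℕ) has exactly ⌈ log((ζ_i(r) − 1)/(ζ_i(r) − p_ℓ^{-r})) / log(p_ℓ^{-r}) ⌉ connected components; moreover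 the sequence (C_{r,ℚ,χ_{m_i}})_{i ≥ i₀} is non-decreasing and tends to infinity. -/
/-- The twisted divisor function `σ_{r,ℚ,χ}(n) = ∑_{d ∣ n} χ(d) d^{-r}` on positive integers,
for a real-valued Dirichlet character. -/
noncomputable def sigmaQ {m : ℕ} (χ : DirichletCharacter ℝ m) (r : ℝ) (n : ℕ) : ℝ :=
  ∑ d ∈ n.divisors, χ ((d : ℕ) : ZMod m) * (d : ℝ) ^ (-r)

/-- `p_j`, the `j`-th rational prime (`1`-indexed: `pr 1 = 2`, `pr 2 = 3`, …). -/
noncomputable def pr (j : ℕ) : ℕ := Nat.nth Nat.Prime (j - 1)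

/-- `ζ_i(r) = ∏_{k > i} (1 − p_k^{-r})⁻¹`. -/
noncomputable def zetaTail (r : ℝ) (i : ℕ) : ℝ :=
  ∏' k : {k : ℕ // i < k}, (1 - (pr (k : ℕ) : ℝ) ^ (-r))⁻¹

/-- `C_{r,ℚ,χ_m}` for the principal character `χ_m` modulo `m`: the number of connected
components of the closure of the image of `σ_{r,ℚ,χ_m}` on positive integers. -/
noncomputable def Cprin (r : ℝ) (m : ℕ) : ℕ :=
  Nat.card (ConnectedComponents
    ↥(closure (sigmaQ (1 : DirichletCharacter ℝ m) r '' {k : ℕ | 0 < k})))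

/-!
Write `q = p_ℓ^{-r}` and `Z = ζ_i(r)`. Splitting off the power `p_ℓ^a` from `n = p_ℓ^a n'`, the
value `σ(n)` is `s_a = 1 + q + ⋯ + q^a` times `σ(n')`, to which only the primes beyond `p_i`
contribute, so that `1 ≤ σ(n') ≤ Z`. Conversely, since `1 + p_j^{-r} ≤ ζ_j(r)` for `j > i`, every
point of `[s_a, s_a Z]` is approximated greedily by choosing the exponents of
`p_{i+1}, p_{i+2}, …` in turn. So the closure of the image is that of `⋃ a, [s_a, s_a Z]`.
Consecutive intervals overlap exactly when `q^{a+1} ≤ (Z - 1)/(Z - q)`, which fails for small `a`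
and persists once true; the intervals after the last gap merge into one, and counting the gaps
gives the logarithmic formula. As `i` grows, `Z` decreases to `1` and `(Z - 1)/(Z - q)` to `0`,
so the number of gaps increases to infinity.
-/

open Filter Topology

section Topology

theorem card_connectedComponents_iUnion {X ι : Type*} [TopologicalSpace X] [Finite ι]
    {U : ι → Set X} (hclosed : ∀ i, IsClosed (U i)) (hconn : ∀ i, IsConnected (U i))
    (hdisj : Pairwise (Function.onFun Disjoint U)) :
    Nat.card (ConnectedComponents (⋃ i, U i : Set X)) = Nat.card ι := by
  let V (i : ι) : Set (⋃ i, U i : Set X) := Subtype.val ⁻¹' U i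
  have hV_disj : Pairwise (Function.onFun Disjoint V) := fun i j hij => (hdisj hij).preimage _
  have hV_cover : ⋃ i, V i = Set.univ := by
    rw [← Set.preimage_iUnion, Subtype.coe_preimage_self]
  have hV_closed (i : ι) : IsClosed (V i) := (hclosed i).preimage continuous_subtype_val
  have hV_compl (i : ι) : (V i)ᶜ = ⋃ j ∈ ({i}ᶜ : Set ι), V j := by
    ext x
    obtain ⟨k, hk⟩ := Set.iUnion_eq_univ_iff.1 hV_cover x
    simp only [Set.mem_compl_iff, Set.mem_iUnion, Set.mem_singleton_iff, exists_prop]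
    exact ⟨fun hx => ⟨k, fun h => hx (h ▸ hk), hk⟩,
      fun ⟨j, hji, hj⟩ hi => (hV_disj hji).ne_of_mem hj hi rfl⟩
  have hV_clopen (i : ι) : IsClopen (V i) := by
    refine ⟨hV_closed i, isClosed_compl_iff.1 ?_⟩
    rw [hV_compl]
    exact (Set.toFinite _).isClosed_biUnion fun j _ => hV_closed j
  have hV_conn (i : ι) : IsConnected (V i) := by
    have himage : Subtype.val '' V i = U i := by
      rw [Subtype.image_preimage_coe, Set.inter_eq_right.2 (Set.subset_iUnion U i)]
    refine ⟨Set.image_nonempty.1 (himage ▸ (hconn i).nonempty), ?_⟩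
    exact IsInducing.subtypeVal.isPreconnected_image.1 (himage ▸ (hconn i).isPreconnected)
  exact Nat.card_congr
    (ConnectedComponents.equivOfIsClopenOfIsConnected hV_clopen hV_disj hV_cover hV_conn)

variable {α : Type*} [LinearOrder α] {u v : ℕ → α} {A : ℕ}

theorem exists_mem_Ico_of_succ_le {B : ℕ} (hAB : A ≤ B) (huv : ∀ a, A ≤ a → u (a + 1) ≤ v a)
    {y : α} (hy : u A ≤ y) (hyB : y < v B) : ∃ a, y ∈ Set.Ico (u a) (v a) := by
  induction B, hAB using Nat.le_induction with
  | base => exact ⟨A, hy, hyB⟩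
  | succ B hB ih =>
    rcases le_or_gt (u (B + 1)) y with hle | hlt
    · exact ⟨B + 1, hle, hyB⟩
    · exact ih (hlt.trans_le (huv B hB))

variable [TopologicalSpace α] [OrderTopology α] [DenselyOrdered α] {L : α}

theorem closure_iUnion_Icc_of_succ_le (hu : Monotone u) (hv : StrictMono v)
    (huv : ∀ a, u a ≤ v a) (hlim : Tendsto v atTop (𝓝 L))
    (hoverlap : ∀ a, A ≤ a → u (a + 1) ≤ v a) :
    closure (⋃ a, Set.Icc (u a) (v a)) =
      ⋃ a : Fin (A + 1), Set.Icc (u a) (Function.update v A L a) := by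
  have hvL (a : ℕ) : v a ≤ L := hv.monotone.ge_of_tendsto hlim a
  have huL : u A < L := (huv A).trans_lt ((hv A.lt_succ_self).trans_le (hvL _))
  apply Set.Subset.antisymm
  · refine closure_minimal (Set.iUnion_subset fun a => ?_)
      (isClosed_iUnion_of_finite fun _ => isClosed_Icc)
    rcases lt_or_ge a A with ha | ha
    · refine Set.subset_iUnion_of_subset ⟨a, by omega⟩ ?_
      rw [Function.update_of_ne ha.ne]
    · refine Set.subset_iUnion_of_subset (Fin.last A) ?_
      rw [Fin.val_last, Function.update_self]
      exact Set.Icc_subset_Icc (hu ha) (hvL a)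
  · refine Set.iUnion_subset fun a => ?_
    rcases (Nat.lt_succ_iff.1 a.2).lt_or_eq with ha | ha
    · rw [Function.update_of_ne ha.ne]
      exact (Set.subset_iUnion (fun a => Set.Icc (u a) (v a)) a).trans subset_closure
    · rw [ha, Function.update_self, ← closure_Ico huL.ne]
      refine closure_mono fun y hy => ?_
      obtain ⟨B, hyB, hAB⟩ :=
        ((hlim.eventually_const_lt hy.2).and (eventually_ge_atTop A)).exists
      obtain ⟨b, hb⟩ := exists_mem_Ico_of_succ_le hAB hoverlap hy.1 hyB
      exact Set.mem_iUnion.2 ⟨b, Set.Ico_subset_Icc_self hb⟩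

end Topology

theorem card_connectedComponents_closure_iUnion_Icc {α : Type*}
    [ConditionallyCompleteLinearOrder α] [TopologicalSpace α] [OrderTopology α] [DenselyOrdered α]
    {u v : ℕ → α} {A : ℕ} {L : α} (hu : Monotone u) (hv : StrictMono v) (huv : ∀ a, u a ≤ v a)
    (hlim : Tendsto v atTop (𝓝 L)) (hoverlap : ∀ a, A ≤ a → u (a + 1) ≤ v a)
    (hgap : ∀ a, a < A → v a < u (a + 1)) :
    Nat.card (ConnectedComponents (closure (⋃ a, Set.Icc (u a) (v a)))) = A + 1 := by
  have hle (a : Fin (A + 1)) : u a ≤ Function.update v A L a := by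
    rcases eq_or_ne (a : ℕ) A with ha | ha
    · rw [ha, Function.update_self]
      exact (huv A).trans (hv.monotone.ge_of_tendsto hlim A)
    · rw [Function.update_of_ne ha]
      exact huv a
  rw [closure_iUnion_Icc_of_succ_le hu hv huv hlim hoverlap,
    card_connectedComponents_iUnion (fun _ => isClosed_Icc) (fun a => isConnected_Icc (hle a)),
    Nat.card_fin]
  refine (pairwise_disjoint_on _).2 fun a b hab => Set.disjoint_left.2 fun y hya hyb => ?_
  have haA : (a : ℕ) < A := by omega
  rw [Function.update_of_ne haA.ne] at hya
  exact ((hgap a haA).trans_le (hu (Nat.succ_le_of_lt hab))).not_ge (hyb.1.trans hya.2)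

/-- The partial sum `1 + q + ⋯ + q ^ a` of the geometric series, through which the values of
divisor functions at prime powers are expressed; the last exponent is `a`, so there are `a + 1`
terms. -/
def geomSum (q : ℝ) (a : ℕ) : ℝ := ∑ k ∈ Finset.range (a + 1), q ^ k

section GeomSum

variable {q Z : ℝ}

theorem geomSum_zero (q : ℝ) : geomSum q 0 = 1 := by simp [geomSum]

theorem geomSum_one (q : ℝ) : geomSum q 1 = 1 + q := by simp [geomSum, Finset.sum_range_succ]

theorem geomSum_eq_div (hq : q ≠ 1) (a : ℕ) : geomSum q a = (1 - q ^ (a + 1)) / (1 - q) := by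
  rw [eq_div_iff (sub_ne_zero.2 hq.symm), geomSum, geom_sum_mul_neg]

theorem strictMono_geomSum (hq : 0 < q) : StrictMono (geomSum q) :=
  strictMono_nat_of_lt_succ fun a => by
    rw [geomSum, geomSum, Finset.sum_range_succ _ (a + 1)]
    exact lt_add_of_pos_right _ (pow_pos hq _)

theorem one_le_geomSum (hq : 0 < q) (a : ℕ) : 1 ≤ geomSum q a :=
  geomSum_zero q ▸ (strictMono_geomSum hq).monotone a.zero_le

theorem geomSum_pos (hq : 0 < q) (a : ℕ) : 0 < geomSum q a :=
  one_pos.trans_le (one_le_geomSum hq a)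

theorem tendsto_geomSum (hq₀ : 0 < q) (hq₁ : q < 1) : Tendsto (geomSum q) atTop (𝓝 (1 - q)⁻¹) :=
  (hasSum_geometric_of_lt_one hq₀.le hq₁).tendsto_sum_nat.comp (tendsto_add_atTop_nat 1)

theorem geomSum_le_inv_one_sub (hq₀ : 0 < q) (hq₁ : q < 1) (a : ℕ) : geomSum q a ≤ (1 - q)⁻¹ :=
  (strictMono_geomSum hq₀).monotone.ge_of_tendsto (tendsto_geomSum hq₀ hq₁) a

theorem geomSum_succ_le_mul_iff (hq : q < 1) (hZ : 1 < Z) (a : ℕ) :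
    geomSum q (a + 1) ≤ geomSum q a * Z ↔ q ^ (a + 1) ≤ (Z - 1) / (Z - q) := by
  have hq' : 0 < 1 - q := sub_pos.2 hq
  rw [geomSum_eq_div hq.ne, geomSum_eq_div hq.ne, le_div_iff₀ (by linarith), div_mul_eq_mul_div,
    div_le_div_iff_of_pos_right hq', pow_succ q (a + 1)]
  constructor <;> intro h <;> linarith

theorem exists_mem_Ico_geomSum (hq₀ : 0 < q) (hq₁ : q < 1) (hZ : 1 + q ≤ Z) {y : ℝ}
    (hy : 1 ≤ y) (hy' : y < (1 - q)⁻¹ * Z) :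
    ∃ a, y ∈ Set.Ico (geomSum q a) (geomSum q a * Z) := by
  have hZ₁ : 1 < Z := by linarith
  have hq_le : q ≤ (Z - 1) / (Z - q) := by
    simpa [geomSum_zero, geomSum_one, hZ] using geomSum_succ_le_mul_iff hq₁ hZ₁ 0
  have hoverlap (a : ℕ) : geomSum q (a + 1) ≤ geomSum q a * Z :=
    (geomSum_succ_le_mul_iff hq₁ hZ₁ a).2
      ((pow_le_of_le_one hq₀.le hq₁.le a.succ_ne_zero).trans hq_le)
  obtain ⟨B, hB⟩ := (((tendsto_geomSum hq₀ hq₁).mul_const Z).eventually_const_lt hy').exists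
  exact exists_mem_Ico_of_succ_le B.zero_le (fun a _ => hoverlap a) (by rwa [geomSum_zero]) hB

theorem natCeil_log_div_log_le_iff {R : ℝ} (hq₀ : 0 < q) (hq₁ : q < 1) (hR : 0 < R) {n : ℕ} :
    ⌈Real.log R / Real.log q⌉₊ ≤ n ↔ q ^ n ≤ R := by
  rw [Nat.ceil_le, Real.log_div_log, Real.logb_le_iff_le_rpow_of_base_lt_one hq₀ hq₁ hR,
    Real.rpow_natCast]

theorem sub_one_div_sub_pos (hq : q < 1) (hZ : 1 < Z) : 0 < (Z - 1) / (Z - q) :=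
  div_pos (by linarith) (by linarith)

theorem sub_one_div_sub_lt_one (hq : q < 1) (hZ : 1 < Z) : (Z - 1) / (Z - q) < 1 :=
  (div_lt_one (by linarith)).2 (by linarith)

theorem sub_one_div_sub_le_sub_one_div_sub (hq : q < 1) {Z' : ℝ} (hZ : 1 < Z) (h : Z ≤ Z') :
    (Z - 1) / (Z - q) ≤ (Z' - 1) / (Z' - q) := by
  rw [div_le_div_iff₀ (by linarith) (by linarith)]
  nlinarith

theorem card_connectedComponents_closure_iUnion_Icc_geomSum (hq₀ : 0 < q) (hq₁ : q < 1)
    (hZ : 1 < Z) :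
    Nat.card (ConnectedComponents
        (closure (⋃ a, Set.Icc (geomSum q a) (geomSum q a * Z)))) =
      ⌈Real.log ((Z - 1) / (Z - q)) / Real.log q⌉₊ := by
  have hceil_le (n : ℕ) := natCeil_log_div_log_le_iff (n := n) hq₀ hq₁ (sub_one_div_sub_pos hq₁ hZ)
  have hceil_ne : ⌈Real.log ((Z - 1) / (Z - q)) / Real.log q⌉₊ ≠ 0 := fun h =>
    (sub_one_div_sub_lt_one hq₁ hZ).not_ge (by simpa using (hceil_le 0).1 h.le)
  obtain ⟨A, hA⟩ := Nat.exists_eq_succ_of_ne_zero hceil_ne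
  rw [hA] at hceil_le ⊢
  have hmono := strictMono_geomSum hq₀
  refine card_connectedComponents_closure_iUnion_Icc hmono.monotone
    (hmono.mul_const (one_pos.trans hZ)) (fun a => ?_)
    ((tendsto_geomSum hq₀ hq₁).mul_const Z) (fun a ha => ?_) (fun a ha => ?_)
  · exact le_mul_of_one_le_right (geomSum_pos hq₀ a).le hZ.le
  · exact (geomSum_succ_le_mul_iff hq₁ hZ a).2 ((hceil_le (a + 1)).1 (by omega))
  · exact lt_of_not_ge fun h =>
      absurd ((hceil_le (a + 1)).2 ((geomSum_succ_le_mul_iff hq₁ hZ a).1 h)) (by omega)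

end GeomSum

section Primes

theorem prime_pr (j : ℕ) : (pr j).Prime := Nat.prime_nth_prime _

theorem injOn_pr : Set.InjOn pr (Set.Ici 1) := fun a ha b hb h => by
  have := Nat.nth_injective Nat.infinite_setOfPred_prime h
  simp only [Set.mem_Ici] at ha hb
  omega

theorem lt_pr (j : ℕ) : j < pr j := by
  have := Nat.add_two_le_nth_prime (j - 1)
  rw [pr]
  omega

theorem exists_pr_eq {p : ℕ} (hp : p.Prime) : ∃ k, 1 ≤ k ∧ pr k = p :=
  ⟨Nat.count Nat.Prime p + 1, by omega, by simp [pr, Nat.nth_count hp]⟩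

theorem coprime_pr_pr {a b : ℕ} (ha : 1 ≤ a) (hb : 1 ≤ b) (hab : a ≠ b) :
    (pr a).Coprime (pr b) :=
  (Nat.coprime_primes (prime_pr a) (prime_pr b)).2 (injOn_pr.ne ha hb hab)

theorem pr_dvd_prod_pr_iff {s : Finset ℕ} (hs : ∀ j ∈ s, 1 ≤ j) {k : ℕ} (hk : 1 ≤ k) :
    pr k ∣ ∏ j ∈ s, pr j ↔ k ∈ s := by
  refine ⟨fun h => ?_, Finset.dvd_prod_of_mem pr⟩
  obtain ⟨j, hj, hkj⟩ := ((prime_pr k).prime.dvd_finsetProd_iff pr).1 h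
  rwa [injOn_pr hk (hs j hj) ((Nat.prime_dvd_prime_iff_eq (prime_pr k) (prime_pr j)).1 hkj)]

theorem pr_dvd_prod_erase_pr_iff (ℓ i : ℕ) {k : ℕ} (hk : 1 ≤ k) :
    pr k ∣ ∏ j ∈ (Finset.Icc 1 i).erase ℓ, pr j ↔ k ≤ i ∧ k ≠ ℓ := by
  rw [pr_dvd_prod_pr_iff (fun j hj => (Finset.mem_Icc.1 (Finset.mem_of_mem_erase hj)).1) hk,
    Finset.mem_erase, Finset.mem_Icc]
  tauto

variable {r : ℝ}

theorem rpow_neg_pr_pos (r : ℝ) (j : ℕ) : 0 < (pr j : ℝ) ^ (-r) :=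
  Real.rpow_pos_of_pos (Nat.cast_pos.2 (prime_pr j).pos) _

theorem rpow_neg_pr_le_half (hr : 1 ≤ r) (j : ℕ) : (pr j : ℝ) ^ (-r) ≤ 1 / 2 := by
  have htwo : (2 : ℝ) ≤ pr j := mod_cast (prime_pr j).two_le
  calc (pr j : ℝ) ^ (-r) ≤ (pr j : ℝ) ^ (-1 : ℝ) :=
        Real.rpow_le_rpow_of_exponent_le (by linarith) (by linarith)
    _ = 1 / (pr j : ℝ) := by rw [Real.rpow_neg_one, one_div]
    _ ≤ 1 / 2 := one_div_le_one_div_of_le two_pos htwo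

theorem rpow_neg_pr_lt_one (hr : 1 < r) (j : ℕ) : (pr j : ℝ) ^ (-r) < 1 :=
  (rpow_neg_pr_le_half hr.le j).trans_lt one_half_lt_one

theorem summable_rpow_neg_pr (hr : 1 < r) (i : ℕ) :
    Summable fun k => (pr (k + (i + 1)) : ℝ) ^ (-r) := by
  have hinj : Function.Injective fun k => pr (k + (i + 1)) := fun a b h =>
    Nat.add_right_cancel (injOn_pr (Set.mem_Ici.2 (by omega)) (Set.mem_Ici.2 (by omega)) h)
  exact (Real.summable_nat_rpow.2 (by linarith)).comp_injective hinj

end Primes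

/-- The Euler factor `(1 - p_k^{-r})⁻¹` of the zeta function at the `k`-th prime. -/
noncomputable def eulerFactor (r : ℝ) (k : ℕ) : ℝ := (1 - (pr k : ℝ) ^ (-r))⁻¹

section ZetaTail

variable {r : ℝ}

theorem one_lt_eulerFactor (hr : 1 < r) (k : ℕ) : 1 < eulerFactor r k :=
  (one_lt_inv₀ (sub_pos.2 (rpow_neg_pr_lt_one hr k))).2 (sub_lt_self _ (rpow_neg_pr_pos r k))

theorem multipliable_eulerFactor (hr : 1 < r) (i : ℕ) :
    Multipliable fun k => eulerFactor r (k + (i + 1)) := by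
  have hle (j : ℕ) : eulerFactor r j - 1 ≤ 2 * (pr j : ℝ) ^ (-r) := by
    have hpos := rpow_neg_pr_pos r j
    have hhalf := rpow_neg_pr_le_half hr.le j
    rw [eulerFactor, sub_le_iff_le_add, inv_le_iff_one_le_mul₀ (by linarith)]
    nlinarith
  have hsummable : Summable fun k => eulerFactor r (k + (i + 1)) - 1 :=
    ((summable_rpow_neg_pr hr i).mul_left 2).of_nonneg_of_le
      (fun k => sub_nonneg.2 (one_lt_eulerFactor hr _).le) (fun k => hle _)
  simpa only [add_sub_cancel] using Real.multipliable_one_add_of_summable hsummable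

theorem zetaTail_eq_tprod_nat (r : ℝ) (i : ℕ) :
    zetaTail r i = ∏' k, eulerFactor r (k + (i + 1)) := by
  let e : ℕ ≃ {k : ℕ // i < k} :=
    { toFun := fun k => ⟨k + (i + 1), by omega⟩
      invFun := fun k => k.1 - (i + 1)
      left_inv := fun k => Nat.add_sub_cancel k (i + 1)
      right_inv := fun k => Subtype.ext (Nat.sub_add_cancel k.2) }
  exact (e.tprod_eq fun k => eulerFactor r k).symm

theorem prod_eulerFactor_ne_zero (hr : 1 < r) (i : ℕ) :
    ∏ k ∈ Finset.range i, eulerFactor r (k + 1) ≠ 0 :=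
  Finset.prod_ne_zero_iff.2 fun _ _ => (one_pos.trans (one_lt_eulerFactor hr _)).ne'

theorem prod_eulerFactor_mul_zetaTail (hr : 1 < r) (i : ℕ) :
    (∏ k ∈ Finset.range i, eulerFactor r (k + 1)) * zetaTail r i = zetaTail r 0 := by
  rw [zetaTail_eq_tprod_nat, zetaTail_eq_tprod_nat]
  exact Multipliable.prod_mul_tprod_nat_mul' (f := fun k => eulerFactor r (k + 1))
    (by simpa only [add_assoc] using multipliable_eulerFactor hr i)

theorem zetaTail_eq_mul_succ (hr : 1 < r) (i : ℕ) :
    zetaTail r i = eulerFactor r (i + 1) * zetaTail r (i + 1) := by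
  apply mul_left_cancel₀ (prod_eulerFactor_ne_zero hr i)
  rw [prod_eulerFactor_mul_zetaTail hr, ← mul_assoc, ← Finset.prod_range_succ,
    prod_eulerFactor_mul_zetaTail hr]

theorem one_le_zetaTail (hr : 1 < r) (i : ℕ) : 1 ≤ zetaTail r i := by
  rw [zetaTail_eq_tprod_nat]
  refine ge_of_tendsto' (multipliable_eulerFactor hr i).hasProd fun s => ?_
  exact Finset.one_le_prod fun k _ => (one_lt_eulerFactor hr _).le

theorem zetaTail_succ_lt (hr : 1 < r) (i : ℕ) : zetaTail r (i + 1) < zetaTail r i := by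
  rw [zetaTail_eq_mul_succ hr i]
  exact lt_mul_of_one_lt_left (one_pos.trans_le (one_le_zetaTail hr _)) (one_lt_eulerFactor hr _)

theorem one_lt_zetaTail (hr : 1 < r) (i : ℕ) : 1 < zetaTail r i :=
  (one_le_zetaTail hr (i + 1)).trans_lt (zetaTail_succ_lt hr i)

theorem zetaTail_antitone (hr : 1 < r) : Antitone (zetaTail r) :=
  antitone_nat_of_succ_le fun i => (zetaTail_succ_lt hr i).le

theorem tendsto_zetaTail (hr : 1 < r) : Tendsto (zetaTail r) atTop (𝓝 1) := by
  have hzeta : zetaTail r 0 ≠ 0 := (one_pos.trans (one_lt_zetaTail hr 0)).ne'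
  have hprod : Tendsto (fun i => ∏ k ∈ Finset.range i, eulerFactor r (k + 1)) atTop
      (𝓝 (zetaTail r 0)) := by
    rw [zetaTail_eq_tprod_nat]
    exact (multipliable_eulerFactor hr 0).tendsto_prod_tprod_nat
  have hdiv : Tendsto (fun i => zetaTail r 0 / ∏ k ∈ Finset.range i, eulerFactor r (k + 1))
      atTop (𝓝 1) :=
    div_self hzeta ▸ tendsto_const_nhds.div hprod hzeta
  refine hdiv.congr fun i => ?_
  rw [← prod_eulerFactor_mul_zetaTail hr i,
    mul_div_cancel_left₀ _ (prod_eulerFactor_ne_zero hr i)]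

theorem tendsto_zetaTail_sub_one_div_sub (hr : 1 < r) {q : ℝ} (hq : q < 1) :
    Tendsto (fun i => (zetaTail r i - 1) / (zetaTail r i - q)) atTop (𝓝 0) := by
  have hlim : Tendsto (fun i => (zetaTail r i - 1) / (zetaTail r i - q)) atTop
      (𝓝 ((1 - 1) / (1 - q))) :=
    ((tendsto_zetaTail hr).sub_const 1).div ((tendsto_zetaTail hr).sub_const q) (sub_pos.2 hq).ne'
  rwa [sub_self, zero_div] at hlim

theorem two_lt_of_zetaTail_lt (hr : 1 < r) (htwo : 1 + (pr 2 : ℝ) ^ (-r) ≤ zetaTail r 2) {i : ℕ}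
    (hi : zetaTail r i < 1 + (3 : ℝ) ^ (-r)) : 2 < i := by
  have hpr : pr 2 = 3 := Nat.nth_prime_one_eq_three
  rw [hpr] at htwo
  exact (zetaTail_antitone hr).reflect_lt (hi.trans_le htwo)

end ZetaTail

section DivisorFunction

variable {m : ℕ} {r : ℝ}

theorem sigmaQ_mul_of_coprime (χ : DirichletCharacter ℝ m) (r : ℝ) {a b : ℕ} (hab : a.Coprime b) :
    sigmaQ χ r (a * b) = sigmaQ χ r a * sigmaQ χ r b := by
  rw [sigmaQ, Nat.divisors_mul, Finset.mul_def, Finset.sum_image hab.mul_injOn_divisors,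
    sigmaQ, sigmaQ, Finset.sum_mul_sum, ← Finset.sum_product']
  refine Finset.sum_congr rfl fun d _ => ?_
  rw [Nat.cast_mul, Nat.cast_mul, map_mul, Real.mul_rpow (by positivity) (by positivity)]
  ring

theorem sigmaQ_prime_pow (χ : DirichletCharacter ℝ m) (r : ℝ) {p : ℕ} (hp : p.Prime) (a : ℕ) :
    sigmaQ χ r (p ^ a) = geomSum (χ p * (p : ℝ) ^ (-r)) a := by
  rw [sigmaQ, Nat.sum_divisors_prime_pow hp, geomSum]
  refine Finset.sum_congr rfl fun k _ => ?_
  rw [Nat.cast_pow, Nat.cast_pow, map_pow, mul_pow, Real.rpow_pow_comm p.cast_nonneg]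

theorem principal_apply_of_coprime {d : ℕ} (hd : d.Coprime m) :
    (1 : DirichletCharacter ℝ m) (d : ZMod m) = 1 :=
  MulChar.one_apply ((ZMod.isUnit_iff_coprime d m).2 hd)

theorem principal_apply_of_not_coprime {d : ℕ} (hd : ¬ d.Coprime m) :
    (1 : DirichletCharacter ℝ m) (d : ZMod m) = 0 :=
  MulChar.map_nonunit _ (mt (ZMod.isUnit_iff_coprime d m).1 hd)

theorem sigmaQ_principal_prime_pow (r : ℝ) {p : ℕ} (hp : p.Prime) (hpm : ¬ p ∣ m) (a : ℕ) :
    sigmaQ (1 : DirichletCharacter ℝ m) r (p ^ a) = geomSum ((p : ℝ) ^ (-r)) a := by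
  rw [sigmaQ_prime_pow _ r hp, principal_apply_of_coprime (hp.coprime_iff_not_dvd.2 hpm), one_mul]

theorem sigmaQ_principal_eq_one (r : ℝ) {n : ℕ} (hn : n ≠ 0)
    (hnm : ∀ p, p.Prime → p ∣ n → p ∣ m) : sigmaQ (1 : DirichletCharacter ℝ m) r n = 1 := by
  rw [sigmaQ, Finset.sum_eq_single_of_mem 1 (Nat.one_mem_divisors.2 hn)]
  · simp
  · intro d hd hd₁
    obtain ⟨p, hp, hpd⟩ := Nat.exists_prime_and_dvd hd₁
    have hpm : p ∣ m := hnm p hp (hpd.trans (Nat.dvd_of_mem_divisors hd))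
    rw [principal_apply_of_not_coprime (Nat.not_coprime_of_dvd_of_dvd hp.one_lt hpd hpm), zero_mul]

theorem one_le_sigmaQ_principal (m : ℕ) (r : ℝ) {n : ℕ} (hn : n ≠ 0) :
    1 ≤ sigmaQ (1 : DirichletCharacter ℝ m) r n := by
  have hnonneg (d : ℕ) : 0 ≤ (1 : DirichletCharacter ℝ m) d * (d : ℝ) ^ (-r) := by
    by_cases hd : d.Coprime m
    · rw [principal_apply_of_coprime hd, one_mul]
      positivity
    · rw [principal_apply_of_not_coprime hd, zero_mul]
  simpa [sigmaQ] using Finset.single_le_sum (fun d _ => hnonneg d) (Nat.one_mem_divisors.2 hn)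

theorem sigmaQ_principal_pr_pow_le_eulerFactor (m : ℕ) (hr : 1 < r) (k a : ℕ) :
    sigmaQ (1 : DirichletCharacter ℝ m) r (pr k ^ a) ≤ eulerFactor r k := by
  by_cases hk : pr k ∣ m
  · rw [sigmaQ_principal_eq_one r (pow_ne_zero a (prime_pr k).ne_zero)]
    · exact (one_lt_eulerFactor hr k).le
    · intro p hp hpk
      rwa [(Nat.prime_dvd_prime_iff_eq hp (prime_pr k)).1 (hp.dvd_of_dvd_pow hpk)]
  · rw [sigmaQ_principal_prime_pow r (prime_pr k) hk]
    exact geomSum_le_inv_one_sub (rpow_neg_pr_pos r k) (rpow_neg_pr_lt_one hr k) a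

theorem exists_eq_pow_mul_coprime {n p : ℕ} (hn : n ≠ 0) (hp : p.Prime) :
    ∃ a n', n' ≠ 0 ∧ ¬ p ∣ n' ∧ (p ^ a).Coprime n' ∧ n = p ^ a * n' := by
  obtain ⟨a, n', hpn', rfl⟩ := Nat.exists_eq_pow_mul_and_not_dvd hn p hp.ne_one
  exact ⟨a, n', right_ne_zero_of_mul hn, hpn', (hp.coprime_iff_not_dvd.2 hpn').pow_left a, rfl⟩

theorem sigmaQ_principal_le_zetaTail (hr : 1 < r) {n i : ℕ} (hn : n ≠ 0)
    (hnm : ∀ k, 1 ≤ k → k ≤ i → pr k ∣ n → pr k ∣ m) :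
    sigmaQ (1 : DirichletCharacter ℝ m) r n ≤ zetaTail r i := by
  obtain ⟨d, hd⟩ : ∃ d, n ≤ i + d := ⟨n, by omega⟩
  induction d generalizing n i with
  | zero =>
    refine (sigmaQ_principal_eq_one r hn fun p hp hpn => ?_).trans_le (one_le_zetaTail hr i)
    obtain ⟨k, hk, rfl⟩ := exists_pr_eq hp
    have hkn : k < n := (lt_pr k).trans_le (Nat.le_of_dvd (Nat.pos_of_ne_zero hn) hpn)
    exact hnm k hk (hkn.le.trans hd) hpn
  | succ d ih =>
    obtain ⟨a, n', hn', hpn', hcop, rfl⟩ := exists_eq_pow_mul_coprime hn (prime_pr (i + 1))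
    have hle : n' ≤ pr (i + 1) ^ a * n' :=
      Nat.le_mul_of_pos_left n' (pow_pos (prime_pr _).pos a)
    have htail : sigmaQ (1 : DirichletCharacter ℝ m) r n' ≤ zetaTail r (i + 1) := by
      refine ih hn' (fun k hk hki hkn => ?_) (by omega)
      rcases hki.lt_or_eq with hlt | rfl
      · exact hnm k hk (Nat.lt_succ_iff.1 hlt) (hkn.mul_left _)
      · exact absurd hkn hpn'
    rw [sigmaQ_mul_of_coprime _ r hcop, zetaTail_eq_mul_succ hr i]
    exact mul_le_mul (sigmaQ_principal_pr_pow_le_eulerFactor m hr _ a) htail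
      (zero_le_one.trans (one_le_sigmaQ_principal m r hn'))
      (zero_le_one.trans (one_lt_eulerFactor hr _).le)

end DivisorFunction

section Closure

variable {r : ℝ} {m i : ℕ}

-- One step of the greedy expansion: after dividing out `σ(n)`, the exponent `b` of `p_{N+1}` is the
-- index of an interval `[s_b, s_b ζ_{N+1}(r))` containing the quotient.
theorem exists_sigmaQ_principal_mul_pr_pow (hr : 1 < r) {N n : ℕ} {y : ℝ} (hn : n ≠ 0)
    (hm : ¬ pr (N + 1) ∣ m) (hcop : n.Coprime (pr (N + 1)))
    (htail : 1 + (pr (N + 1) : ℝ) ^ (-r) ≤ zetaTail r (N + 1))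
    (hy : y ∈ Set.Ico (sigmaQ (1 : DirichletCharacter ℝ m) r n)
      (sigmaQ (1 : DirichletCharacter ℝ m) r n * zetaTail r N)) :
    ∃ b, y ∈ Set.Ico (sigmaQ (1 : DirichletCharacter ℝ m) r (n * pr (N + 1) ^ b))
      (sigmaQ (1 : DirichletCharacter ℝ m) r (n * pr (N + 1) ^ b) * zetaTail r (N + 1)) := by
  have hσ : 0 < sigmaQ (1 : DirichletCharacter ℝ m) r n :=
    one_pos.trans_le (one_le_sigmaQ_principal m r hn)
  rw [zetaTail_eq_mul_succ hr N] at hy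
  obtain ⟨b, hb, hb'⟩ := exists_mem_Ico_geomSum (rpow_neg_pr_pos r (N + 1))
    (rpow_neg_pr_lt_one hr (N + 1)) htail ((one_le_div hσ).2 hy.1) ((div_lt_iff₀' hσ).2 hy.2)
  refine ⟨b, ?_⟩
  rw [sigmaQ_mul_of_coprime _ r (hcop.pow_right b),
    sigmaQ_principal_prime_pow r (prime_pr (N + 1)) hm, mul_assoc]
  exact ⟨(le_div_iff₀' hσ).1 hb, (div_lt_iff₀' hσ).1 hb'⟩

theorem exists_mem_Ico_sigmaQ_principal (hr : 1 < r) (hm : ∀ k, i < k → ¬ pr k ∣ m)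
    (htail : ∀ j, i < j → 1 + (pr j : ℝ) ^ (-r) ≤ zetaTail r j) {n₀ : ℕ} (hn₀ : n₀ ≠ 0)
    (hcop₀ : ∀ k, i < k → n₀.Coprime (pr k)) {y : ℝ}
    (hy : y ∈ Set.Ico (sigmaQ (1 : DirichletCharacter ℝ m) r n₀)
      (sigmaQ (1 : DirichletCharacter ℝ m) r n₀ * zetaTail r i)) {N : ℕ} (hN : i ≤ N) :
    ∃ n, n ≠ 0 ∧ (∀ k, N < k → n.Coprime (pr k)) ∧
      y ∈ Set.Ico (sigmaQ (1 : DirichletCharacter ℝ m) r n)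
        (sigmaQ (1 : DirichletCharacter ℝ m) r n * zetaTail r N) := by
  induction N, hN using Nat.le_induction with
  | base => exact ⟨n₀, hn₀, hcop₀, hy⟩
  | succ N hN ih =>
    obtain ⟨n, hn, hcop, hyn⟩ := ih
    have hiN : i < N + 1 := Nat.lt_succ_of_le hN
    obtain ⟨b, hb⟩ := exists_sigmaQ_principal_mul_pr_pow hr hn (hm _ hiN)
      (hcop _ N.lt_succ_self) (htail _ hiN) hyn
    refine ⟨n * pr (N + 1) ^ b, mul_ne_zero hn (pow_ne_zero b (prime_pr _).ne_zero),
      fun k hk => ?_, hb⟩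
    exact (hcop k (by omega)).mul_left
      ((coprime_pr_pr (by omega) (by omega) (by omega)).pow_left b)

theorem Icc_sigmaQ_principal_subset_closure (hr : 1 < r) (hm : ∀ k, i < k → ¬ pr k ∣ m)
    (htail : ∀ j, i < j → 1 + (pr j : ℝ) ^ (-r) ≤ zetaTail r j) {n₀ : ℕ} (hn₀ : n₀ ≠ 0)
    (hcop₀ : ∀ k, i < k → n₀.Coprime (pr k)) :
    Set.Icc (sigmaQ (1 : DirichletCharacter ℝ m) r n₀)
        (sigmaQ (1 : DirichletCharacter ℝ m) r n₀ * zetaTail r i) ⊆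
      closure (sigmaQ (1 : DirichletCharacter ℝ m) r '' {k : ℕ | 0 < k}) := by
  have hσ₀ : 0 < sigmaQ (1 : DirichletCharacter ℝ m) r n₀ :=
    one_pos.trans_le (one_le_sigmaQ_principal m r hn₀)
  rw [← closure_Ico (lt_mul_of_one_lt_right hσ₀ (one_lt_zetaTail hr i)).ne]
  refine closure_minimal (fun y hy => ?_) isClosed_closure
  have hgreedy (N : ℕ) (hN : i ≤ N) : ∃ n, n ≠ 0 ∧
      sigmaQ (1 : DirichletCharacter ℝ m) r n ∈ Set.Icc (y / zetaTail r N) y := by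
    obtain ⟨n, hn, -, hle, hlt⟩ := exists_mem_Ico_sigmaQ_principal hr hm htail hn₀ hcop₀ hy hN
    exact ⟨n, hn, (div_le_iff₀ (one_pos.trans (one_lt_zetaTail hr N))).2 hlt.le, hle⟩
  choose! n hn hmem using hgreedy
  have hlim : Tendsto (fun N => y / zetaTail r N) atTop (𝓝 y) := by
    have hdiv : Tendsto (fun N => y / zetaTail r N) atTop (𝓝 (y / 1)) :=
      tendsto_const_nhds.div (tendsto_zetaTail hr) one_ne_zero
    rwa [div_one] at hdiv
  refine mem_closure_of_tendsto (f := fun N => sigmaQ (1 : DirichletCharacter ℝ m) r (n N))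
    (tendsto_of_tendsto_of_tendsto_of_le_of_le' hlim tendsto_const_nhds
      ((eventually_ge_atTop i).mono fun N hN => (hmem N hN).1)
      ((eventually_ge_atTop i).mono fun N hN => (hmem N hN).2))
    ((eventually_ge_atTop i).mono fun N hN => ⟨n N, Nat.pos_of_ne_zero (hn N hN), rfl⟩)

variable {ℓ : ℕ}

theorem closure_image_sigmaQ_principal (hr : 1 < r) (hℓ : 1 ≤ ℓ) (hℓi : ℓ ≤ i)
    (hm : ∀ k, 1 ≤ k → (pr k ∣ m ↔ k ≤ i ∧ k ≠ ℓ))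
    (htail : ∀ j, i < j → 1 + (pr j : ℝ) ^ (-r) ≤ zetaTail r j) :
    closure (sigmaQ (1 : DirichletCharacter ℝ m) r '' {k : ℕ | 0 < k}) =
      closure (⋃ a, Set.Icc (geomSum ((pr ℓ : ℝ) ^ (-r)) a)
        (geomSum ((pr ℓ : ℝ) ^ (-r)) a * zetaTail r i)) := by
  have hσ (a : ℕ) := sigmaQ_principal_prime_pow r (prime_pr ℓ) (fun h => ((hm ℓ hℓ).1 h).2 rfl) a
  apply Set.Subset.antisymm
  · refine closure_mono ?_
    rintro _ ⟨n, hn, rfl⟩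
    obtain ⟨a, n', hn', hpn', hcop, rfl⟩ :=
      exists_eq_pow_mul_coprime (Nat.pos_iff_ne_zero.1 hn) (prime_pr ℓ)
    have hle : sigmaQ (1 : DirichletCharacter ℝ m) r n' ≤ zetaTail r i :=
      sigmaQ_principal_le_zetaTail hr hn' fun k hk hki hkn =>
        (hm k hk).2 ⟨hki, fun h => hpn' (h ▸ hkn)⟩
    have hpos := (geomSum_pos (rpow_neg_pr_pos r ℓ) a).le
    rw [sigmaQ_mul_of_coprime _ r hcop, hσ]
    exact Set.mem_iUnion.2 ⟨a, le_mul_of_one_le_right hpos (one_le_sigmaQ_principal m r hn'),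
      mul_le_mul_of_nonneg_left hle hpos⟩
  · refine closure_minimal (Set.iUnion_subset fun a => ?_) isClosed_closure
    rw [← hσ]
    refine Icc_sigmaQ_principal_subset_closure hr (fun k hk h => ?_) htail
      (pow_ne_zero a (prime_pr ℓ).ne_zero)
      fun k hk => (coprime_pr_pr hℓ (by omega) (by omega)).pow_left a
    exact hk.not_ge ((hm k (by omega)).1 h).1

theorem Cprin_eq_natCeil (hr : 1 < r) (hℓ : 1 ≤ ℓ) (hℓi : ℓ ≤ i)
    (hm : ∀ k, 1 ≤ k → (pr k ∣ m ↔ k ≤ i ∧ k ≠ ℓ))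
    (htail : ∀ j, i < j → 1 + (pr j : ℝ) ^ (-r) ≤ zetaTail r j) :
    Cprin r m = ⌈Real.log ((zetaTail r i - 1) / (zetaTail r i - (pr ℓ : ℝ) ^ (-r))) /
      Real.log ((pr ℓ : ℝ) ^ (-r))⌉₊ := by
  rw [Cprin, closure_image_sigmaQ_principal hr hℓ hℓi hm htail,
    card_connectedComponents_closure_iUnion_Icc_geomSum (rpow_neg_pr_pos r ℓ)
      (rpow_neg_pr_lt_one hr ℓ) (one_lt_zetaTail hr i)]

end Closure

theorem stmt9_general {r : ℝ} (hr : 1 < r) {ℓ i₀ : ℕ} (hℓ : 1 ≤ ℓ) (hℓi₀ : ℓ ≤ i₀)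
    (htail : ∀ j, i₀ < j → 1 + (pr j : ℝ) ^ (-r) ≤ zetaTail r j) {mseq : ℕ → ℕ}
    (hm : ∀ i, i₀ ≤ i → ∀ k, 1 ≤ k → (pr k ∣ mseq i ↔ k ≤ i ∧ k ≠ ℓ)) :
    (∀ i : ℕ, i₀ ≤ i →
      (Cprin r (mseq i) : ℤ) =
        ⌈Real.log ((zetaTail r i - 1) / (zetaTail r i - (pr ℓ : ℝ) ^ (-r))) /
          Real.log ((pr ℓ : ℝ) ^ (-r))⌉) ∧
    (∀ i i' : ℕ, i₀ ≤ i → i ≤ i' → Cprin r (mseq i) ≤ Cprin r (mseq i')) ∧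
    (∀ B : ℕ, ∃ i : ℕ, i₀ ≤ i ∧ B ≤ Cprin r (mseq i)) := by
  have hq₀ := rpow_neg_pr_pos r ℓ
  have hq₁ := rpow_neg_pr_lt_one hr ℓ
  have hR (i : ℕ) := sub_one_div_sub_pos hq₁ (one_lt_zetaTail hr i)
  have hC (i : ℕ) (hi : i₀ ≤ i) := Cprin_eq_natCeil hr hℓ (hℓi₀.trans hi) (hm i hi)
    fun j hj => htail j (hi.trans_lt hj)
  have hC_le (i : ℕ) (hi : i₀ ≤ i) (n : ℕ) : Cprin r (mseq i) ≤ n ↔ ((pr ℓ : ℝ) ^ (-r)) ^ n ≤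
      (zetaTail r i - 1) / (zetaTail r i - (pr ℓ : ℝ) ^ (-r)) := by
    rw [hC i hi, natCeil_log_div_log_le_iff hq₀ hq₁ (hR i)]
  refine ⟨fun i hi => ?_, fun i i' hi hii' => ?_, fun B => ?_⟩
  · have hR₁ := sub_one_div_sub_lt_one hq₁ (one_lt_zetaTail hr i)
    rw [hC i hi, Int.natCast_ceil_eq_ceil]
    exact div_nonneg_of_nonpos (Real.log_nonpos (hR i).le hR₁.le) (Real.log_nonpos hq₀.le hq₁.le)
  · refine (hC_le i hi _).2 (((hC_le i' (hi.trans hii') _).1 le_rfl).trans ?_)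
    exact sub_one_div_sub_le_sub_one_div_sub hq₁ (one_lt_zetaTail hr i')
      (zetaTail_antitone hr hii')
  · obtain ⟨i, hlt, hi⟩ := (((tendsto_zetaTail_sub_one_div_sub hr hq₁).eventually_lt_const
      (pow_pos hq₀ B)).and (eventually_ge_atTop i₀)).exists
    exact ⟨i, hi, (lt_of_not_ge fun h => hlt.not_ge ((hC_le i hi B).1 h)).le⟩

/-- With `j₁` the least positive integer `j₀` such that `ζ_j(r) ≥ 1 + p_j^{-r}` for all
`j > j₀`, `ℓ = max 2 j₁`, `i₀ = j₁` if `j₁ ≥ 2` and otherwise the least positive integer `i`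
with `ζ_i(r) < 1 + 3^{-r}`, and `m_i = (∏_{p ≤ p_i} p) / p_ℓ`: for every `i ≥ i₀` the number
of connected components of the closure of `σ_{r,ℚ,χ_{m_i}}(ℕ)` equals
`⌈log((ζ_i(r) − 1)/(ζ_i(r) − p_ℓ^{-r})) / log(p_ℓ^{-r})⌉`; moreover `i ↦ C_{r,ℚ,χ_{m_i}}` is
non-decreasing on `[i₀, ∞)` and tends to infinity. -/
theorem stmt9 (r : ℝ) (hr : 1 < r)
    (j₁ : ℕ)
    (hj₁ : IsLeast {j₀ : ℕ | 0 < j₀ ∧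
      ∀ j : ℕ, j₀ < j → 1 + (pr j : ℝ) ^ (-r) ≤ zetaTail r j} j₁)
    (ℓ : ℕ) (hℓ : ℓ = max 2 j₁)
    (i₀ : ℕ)
    (hi₀ : if 2 ≤ j₁ then i₀ = j₁
      else IsLeast {i : ℕ | 0 < i ∧ zetaTail r i < 1 + (3 : ℝ) ^ (-r)} i₀)
    (mseq : ℕ → ℕ)
    (hm : ∀ i : ℕ, i₀ ≤ i → mseq i = ∏ k ∈ (Finset.Icc 1 i).erase ℓ, pr k) :
    (∀ i : ℕ, i₀ ≤ i →
      (Cprin r (mseq i) : ℤ) =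
        ⌈Real.log ((zetaTail r i - 1) / (zetaTail r i - (pr ℓ : ℝ) ^ (-r))) /
          Real.log ((pr ℓ : ℝ) ^ (-r))⌉) ∧
    (∀ i i' : ℕ, i₀ ≤ i → i ≤ i' → Cprin r (mseq i) ≤ Cprin r (mseq i')) ∧
    (∀ B : ℕ, ∃ i : ℕ, i₀ ≤ i ∧ B ≤ Cprin r (mseq i)) := by
  obtain ⟨hℓi₀, hj₁i₀⟩ : ℓ ≤ i₀ ∧ j₁ ≤ i₀ := by
    split_ifs at hi₀ with hj
    · omega
    · have := two_lt_of_zetaTail_lt hr (hj₁.1.2 2 (by omega)) hi₀.1.2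
      omega
  exact stmt9_general hr (by omega) hℓi₀ (fun j hj => hj₁.1.2 j (hj₁i₀.trans_lt hj))
    fun i hi k hk => hm i hi ▸ pr_dvd_prod_erase_pr_iff ℓ i hk
end
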